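/- arXiv:2511.02273 — 3 statements merged into one kernel-verified Lean document; each statement's English description precedes it below -/
import Mathlib

section
/- Assume 0 ≤ γ ≤ 2, (H1), and (H2). Let f be a conservative mild solution of the Boltzmann–Fermi–Dirac equation with initial datum f₀, and assume S(f₀) > 0. Then for each t > 0 there exist constants C₁(t) > 0 and C₂(t) < ∞ such that, for almost every v ∈ ℝ³, C₁(t) e^{−C₂(t)|v|²} ≤ f(t,v) ≤ 1 − C₁(t) e^{−C₂(t)|v|^{p}} with p = 2·(ln 3)/(ln 2); moreover, for every 1 ≤ T < ∞, inf_{T^{−1} ≤ t ≤ T} C₁(t) > 0 and sup_{T^{−1} ≤ t ≤ T} C₂(t) < ∞. -/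
noncomputable section

open MeasureTheory Real Set
open scoped RealInnerProductSpace

/-- `ℝ³` as a Euclidean space. -/
abbrev R3 : Type := EuclideanSpace ℝ (Fin 3)

/-- The unit sphere `𝕊²` in `ℝ³`. -/
abbrev S2 : Type := Metric.sphere (0 : R3) 1

/-- The surface measure on the unit sphere in `ℝ³` (total mass `4π`). -/
def sphMeasure : Measure S2 := Measure.toSphere (volume : Measure R3)

/-- Post-collision velocity `v' = (v+v_*)/2 + (|v-v_*|/2)σ`. -/
def vOut (v w : R3) (σ : S2) : R3 := (2⁻¹ : ℝ) • (v + w) + (‖v - w‖ / 2) • (σ : R3)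

/-- Post-collision velocity `v'_* = (v+v_*)/2 - (|v-v_*|/2)σ`. -/
def vOutStar (v w : R3) (σ : S2) : R3 := (2⁻¹ : ℝ) • (v + w) - (‖v - w‖ / 2) • (σ : R3)

/-- `cos θ = ((v - v_*)/|v - v_*|) · σ`. -/
def cosAngle (v w : R3) (σ : S2) : ℝ := ⟪‖v - w‖⁻¹ • (v - w), (σ : R3)⟫

/-- The collision kernel `B(v - v_*, σ) = |v - v_*|^γ b(cos θ)`. -/
def Bker (γ : ℝ) (b : ℝ → ℝ) (v w : R3) (σ : S2) : ℝ := ‖v - w‖ ^ γ * b (cosAngle v w σ)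

/-- Grad's angular cutoff assumption (H1), with the standing assumptions on `b`:
`b` is measurable, nonnegative, symmetric (`b(cos(π-θ)) = b(cos θ)`), and
`0 < C_b = 2π∫₀^π b(cos θ) sin θ dθ < ∞`. -/
structure GradCutoff (b : ℝ → ℝ) : Prop where
  measurable : Measurable b
  nonneg : ∀ x : ℝ, 0 ≤ b x
  symm : ∀ θ : ℝ, b (Real.cos (π - θ)) = b (Real.cos θ)
  integrable : IntervalIntegrable (fun θ : ℝ => b (Real.cos θ) * Real.sin θ) volume 0 π
  pos : 0 < ∫ θ in (0:ℝ)..π, b (Real.cos θ) * Real.sin θ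

/-- `C_b = 2π ∫₀^π b(cos θ) sin θ dθ`. -/
def Cb (b : ℝ → ℝ) : ℝ := 2 * π * ∫ θ in (0:ℝ)..π, b (Real.cos θ) * Real.sin θ

/-- `C_{b,2} = 2π ∫₀^π b(cos θ) sin³ θ dθ`. -/
def Cb2 (b : ℝ → ℝ) : ℝ := 2 * π * ∫ θ in (0:ℝ)..π, b (Real.cos θ) * Real.sin θ ^ 3

/-- `φ(ε) = ∫_{𝕊²} b(cos θ)(1_{0<θ<ε} + 1_{π-ε<θ<π}) dσ`,
written via the polar-angle parametrization of the sphere. -/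
def phiAng (b : ℝ → ℝ) (ε : ℝ) : ℝ :=
  2 * π * ((∫ θ in (0:ℝ)..ε, b (Real.cos θ) * Real.sin θ)
    + ∫ θ in (π - ε)..π, b (Real.cos θ) * Real.sin θ)

/-- Weighted `L¹` norm `‖f‖_{1,s} = ∫ |f(v)| (1+|v|²)^{s/2} dv`. -/
def wnorm (s : ℝ) (f : R3 → ℝ) : ℝ := ∫ v : R3, |f v| * (1 + ‖v‖ ^ 2) ^ (s / 2)

/-- Membership in the weighted space `L¹_s`. -/
def MemL1s (s : ℝ) (f : R3 → ℝ) : Prop :=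
  Integrable (fun v : R3 => |f v| * (1 + ‖v‖ ^ 2) ^ (s / 2))

/-- The Boltzmann–Fermi–Dirac collision operator `Q_FD(f,f)`. -/
def QFD (γ : ℝ) (b : ℝ → ℝ) (f : R3 → ℝ) (v : R3) : ℝ :=
  ∫ w : R3, ∫ σ : S2, Bker γ b v w σ *
      (f (vOut v w σ) * f (vOutStar v w σ) * (1 - f v) * (1 - f w)
        - f v * f w * (1 - f (vOut v w σ)) * (1 - f (vOutStar v w σ))) ∂sphMeasure

/-- `Q₁(f₁,f₂,f₃)(v) = ∫∫ B f₁(v') f₂(v'_*) f₃(v_*) dσ dv_*`. -/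
def Q1 (γ : ℝ) (b : ℝ → ℝ) (f₁ f₂ f₃ : R3 → ℝ) (v : R3) : ℝ :=
  ∫ w : R3, ∫ σ : S2, Bker γ b v w σ *
      (f₁ (vOut v w σ) * f₂ (vOutStar v w σ) * f₃ w) ∂sphMeasure

/-- `L_FD(f, 1-f, 1-f)(v) = ∫∫ B f(v_*)(1-f(v'))(1-f(v'_*)) dσ dv_*`. -/
def LFD (γ : ℝ) (b : ℝ → ℝ) (f : R3 → ℝ) (v : R3) : ℝ :=
  ∫ w : R3, ∫ σ : S2, Bker γ b v w σ *
      (f w * (1 - f (vOut v w σ)) * (1 - f (vOutStar v w σ))) ∂sphMeasure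

/-- The Fermi–Dirac entropy `S(f)` (with `0·ln 0 = 0`, as `Real.log 0 = 0`). -/
def entropy (f : R3 → ℝ) : ℝ :=
  -∫ v : R3, (f v * Real.log (f v) + (1 - f v) * Real.log (1 - f v))

/-- A conservative mild solution of the Boltzmann–Fermi–Dirac equation with
initial datum `f₀`. -/
structure IsFDSolution (γ : ℝ) (b : ℝ → ℝ) (f₀ : R3 → ℝ) (f : ℝ → R3 → ℝ) : Prop where
  measurable : ∀ t : ℝ, Measurable (f t)
  nonneg : ∀ t : ℝ, 0 ≤ t → ∀ v : R3, 0 ≤ f t v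
  le_one : ∀ t : ℝ, 0 ≤ t → ∀ v : R3, f t v ≤ 1
  memL12 : ∀ t : ℝ, 0 ≤ t → MemL1s 2 (f t)
  contL12 : ∀ t : ℝ, 0 ≤ t → ∀ ε : ℝ, 0 < ε → ∃ δ > 0, ∀ s : ℝ, 0 ≤ s →
      |s - t| < δ → wnorm 2 (fun v => f s v - f t v) < ε
  mild : ∃ Z : Set R3, volume Z = 0 ∧ ∀ t : ℝ, 0 ≤ t → ∀ v : R3, v ∉ Z →
      f t v = f₀ v + ∫ τ in (0:ℝ)..t, QFD γ b (f τ) v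
  mass : ∀ t : ℝ, 0 ≤ t → ∫ v : R3, f t v = ∫ v : R3, f₀ v
  momentum : ∀ t : ℝ, 0 ≤ t → ∫ v : R3, f t v • v = ∫ v : R3, f₀ v • v
  energy : ∀ t : ℝ, 0 ≤ t → ∫ v : R3, f t v * ‖v‖ ^ 2 = ∫ v : R3, f₀ v * ‖v‖ ^ 2

/-!
Both populations `f` and `1 - f` satisfy `∂ₜ y ≥ -2 L y + Q⁺`, where the frequency `L` grows at most
quadratically in `v` and `Q⁺` is the gain of the population, with the other population blocking.
Since `S(f₀) > 0`, some set `{ε ≤ f₀ ≤ 1 - ε}` has a density point, and collisions inside a small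
ball around it bound both populations below on a ball at any positive time.

If both populations are at least `c` on a ball, nearly orthogonal collisions bring them above a
multiple of `c ^ 3` on a ball whose radius is larger by almost the factor `√2`. Iterating on
time intervals of geometrically decreasing length gives `x ^ 3 ^ n` at distance `√2 ^ n`, which is
the exponent `2 ln 3 / ln 2`. For `f` itself the blocking factor is free once the ball is large: by
conservation of mass, `1 - f ≥ 1 / 2` on half of it. Hence `c` is only squared in each step, and
`x ^ 2 ^ n` at distance `√2 ^ n` is a Gaussian.
-/

open Module InnerProductGeometry
open scoped ENNReal

@[fun_prop]
lemma measurable_angle_comp {α E : Type*} [MeasurableSpace α] [NormedAddCommGroup E]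
    [InnerProductSpace ℝ E] [SecondCountableTopology E] [MeasurableSpace E] [BorelSpace E]
    {f g : α → E} (hf : Measurable f) (hg : Measurable g) :
    Measurable fun a => angle (f a) (g a) := by
  unfold angle
  fun_prop

section PolarCoordinates

lemma lintegral_eq_lintegral_sphere_prod_Ioi {E : Type*} [NormedAddCommGroup E]
    [NormedSpace ℝ E] [FiniteDimensional ℝ E] [Nontrivial E] [MeasurableSpace E] [BorelSpace E]
    (μ : Measure E) [μ.IsAddHaarMeasure] {f : E → ℝ≥0∞} (hf : Measurable f) :
    ∫⁻ x, f x ∂μ = ∫⁻ σ : Metric.sphere (0 : E) 1, (∫⁻ r in Ioi (0 : ℝ),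
      ENNReal.ofReal (r ^ (finrank ℝ E - 1)) * f (r • (σ : E))) ∂μ.toSphere := by
  have hfp : Measurable fun p : Metric.sphere (0 : E) 1 × Ioi (0 : ℝ) =>
      f ((p.2 : ℝ) • (p.1 : E)) := by
    fun_prop
  calc ∫⁻ x, f x ∂μ = ∫⁻ x : ({0}ᶜ : Set E), f x ∂μ.comap (↑) := by
        rw [lintegral_subtype_comap (measurableSet_singleton _).compl, restrict_compl_singleton]
    _ = ∫⁻ p : Metric.sphere (0 : E) 1 × Ioi (0 : ℝ), f ((p.2 : ℝ) • (p.1 : E))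
          ∂μ.toSphere.prod (Measure.volumeIoiPow (finrank ℝ E - 1)) := by
        rw [← μ.measurePreserving_homeomorphUnitSphereProd.lintegral_comp hfp]
        refine lintegral_congr fun x => ?_
        have hx : ‖(x : E)‖ ≠ 0 := norm_ne_zero_iff.mpr x.2
        simp [smul_smul, hx]
    _ = _ := by
        rw [lintegral_prod _ hfp.aemeasurable]
        refine lintegral_congr fun σ => ?_
        rw [Measure.volumeIoiPow, lintegral_withDensity_eq_lintegral_mul _ (by fun_prop)
            (by fun_prop),
          ← lintegral_subtype_comap measurableSet_Ioi]
        rfl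

variable {g : ℝ → ℝ → ℝ≥0∞}

lemma lintegral_R3_eq_lintegral_cylinder (hg : Measurable (Function.uncurry g)) :
    ∫⁻ x : R3, g (x 0) ‖x‖ = ∫⁻ a : ℝ, ∫⁻ q : ℝ × ℝ, g a √(a ^ 2 + (q.1 ^ 2 + q.2 ^ 2)) := by
  have hsplit := ((MeasurePreserving.id volume).prod (volume_preserving_finTwoArrow ℝ)).comp
    ((volume_preserving_piFinSuccAbove (fun _ : Fin 3 => ℝ) 0).comp
      (EuclideanSpace.volume_preserving_symm_measurableEquiv_toLp (Fin 3)))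
  have hm : Measurable fun p : ℝ × (ℝ × ℝ) => g p.1 √(p.1 ^ 2 + (p.2.1 ^ 2 + p.2.2 ^ 2)) :=
    hg.comp (f := fun p : ℝ × (ℝ × ℝ) => (p.1, √(p.1 ^ 2 + (p.2.1 ^ 2 + p.2.2 ^ 2))))
      (by fun_prop)
  have h := hsplit.lintegral_comp hm
  rw [← Measure.volume_eq_prod, Measure.volume_eq_prod, lintegral_prod _ hm.aemeasurable] at h
  rw [← h]
  refine lintegral_congr fun x => ?_
  have hnorm : ‖x‖ = √(x 0 ^ 2 + (x 1 ^ 2 + x 2 ^ 2)) := by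
    simp only [EuclideanSpace.norm_eq, Fin.sum_univ_three, Real.norm_eq_abs, sq_abs, add_assoc]
  rw [hnorm]
  rfl

lemma lintegral_plane_radial {g : ℝ → ℝ≥0∞} (hg : Measurable g) :
    ∫⁻ q : ℝ × ℝ, g (q.1 ^ 2 + q.2 ^ 2) =
      ENNReal.ofReal (2 * π) * ∫⁻ r in Ioi (0 : ℝ), ENNReal.ofReal r * g (r ^ 2) := by
  have hpolar (p : ℝ × ℝ) : ENNReal.ofReal p.1 •
      g ((polarCoord.symm p).1 ^ 2 + (polarCoord.symm p).2 ^ 2) =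
        ENNReal.ofReal p.1 * g (p.1 ^ 2) * 1 := by
    rw [polarCoord_symm_apply, smul_eq_mul, mul_one, mul_pow, mul_pow, ← mul_add,
      cos_sq_add_sin_sq, mul_one]
  simp_rw [← lintegral_comp_polarCoord_symm, hpolar]
  rw [polarCoord_target, Measure.volume_eq_prod, ← Measure.prod_restrict,
    lintegral_prod_mul (f := fun r => ENNReal.ofReal r * g (r ^ 2)) (g := fun _ => 1)
      (by fun_prop) (by fun_prop), setLIntegral_one, Real.volume_Ioo, mul_comm]
  ring_nf

lemma lintegral_halfPlane_polar {g : ℝ × ℝ → ℝ≥0∞} (hg : Measurable g) :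
    ∫⁻ a : ℝ, ∫⁻ r in Ioi (0 : ℝ), g (a, r) = ∫⁻ p in Ioi (0 : ℝ) ×ˢ Ioo 0 π,
      ENNReal.ofReal p.1 * g (p.1 * cos p.2, p.1 * sin p.2) := by
  have hupper : MeasurableSet (univ ×ˢ Ioi (0 : ℝ) : Set (ℝ × ℝ)) :=
    MeasurableSet.univ.prod measurableSet_Ioi
  calc ∫⁻ a : ℝ, ∫⁻ r in Ioi (0 : ℝ), g (a, r)
      = ∫⁻ p : ℝ × ℝ, (univ ×ˢ Ioi (0 : ℝ)).indicator g p := by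
        rw [lintegral_indicator hupper, Measure.volume_eq_prod, ← Measure.prod_restrict,
          lintegral_prod _ hg.aemeasurable, Measure.restrict_univ]
    _ = ∫⁻ p in Ioi (0 : ℝ) ×ˢ Ioo (-π) π,
          (Ioi (0 : ℝ) ×ˢ Ioo 0 π).indicator
            (fun p => ENNReal.ofReal p.1 * g (p.1 * cos p.2, p.1 * sin p.2)) p := by
        rw [← lintegral_comp_polarCoord_symm, polarCoord_target]
        refine setLIntegral_congr_fun (measurableSet_Ioi.prod measurableSet_Ioo) fun p hp => ?_
        obtain ⟨hr : 0 < p.1, hθ⟩ := hp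
        have hiff : polarCoord.symm p ∈ univ ×ˢ Ioi (0 : ℝ) ↔ p ∈ Ioi (0 : ℝ) ×ˢ Ioo 0 π := by
          simp only [polarCoord_symm_apply, mem_prod, mem_univ, true_and, mem_Ioi, mem_Ioo, hr,
            hθ.2, and_true, mul_pos_iff_of_pos_left]
          exact ⟨fun h => not_le.mp fun h₀ =>
              h.not_ge (sin_nonpos_of_nonpos_of_neg_pi_le h₀ hθ.1.le),
            fun h => sin_pos_of_pos_of_lt_pi h hθ.2⟩
        by_cases hmem : p ∈ Ioi (0 : ℝ) ×ˢ Ioo 0 π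
        · rw [indicator_of_mem hmem, indicator_of_mem (hiff.mpr hmem), smul_eq_mul,
            polarCoord_symm_apply]
        · rw [indicator_of_notMem hmem, indicator_of_notMem (mt hiff.mp hmem), smul_zero]
    _ = _ := by
        rw [setLIntegral_indicator (measurableSet_Ioi.prod measurableSet_Ioo),
          inter_eq_left.mpr (prod_mono_right (Ioo_subset_Ioo_left (by linarith [pi_pos])))]

lemma lintegral_R3_eq_lintegral_axis (hg : Measurable (Function.uncurry g)) :
    ∫⁻ x : R3, g (x 0) ‖x‖ = ENNReal.ofReal (2 * π) * ∫⁻ p in Ioi (0 : ℝ) ×ˢ Ioo 0 π,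
      ENNReal.ofReal (p.1 ^ 2 * sin p.2) * g (p.1 * cos p.2) p.1 := by
  have hg_comp {f₁ f₂ : ℝ × ℝ → ℝ} (h₁ : Measurable f₁) (h₂ : Measurable f₂) :
      Measurable fun p => g (f₁ p) (f₂ p) := hg.comp (h₁.prodMk h₂)
  have hradial (a : ℝ) : ∫⁻ q : ℝ × ℝ, g a √(a ^ 2 + (q.1 ^ 2 + q.2 ^ 2)) =
      ENNReal.ofReal (2 * π) * ∫⁻ r in Ioi (0 : ℝ), ENNReal.ofReal r * g a √(a ^ 2 + r ^ 2) :=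
    lintegral_plane_radial (g := fun s => g a √(a ^ 2 + s))
      (hg.comp (f := fun s => (a, √(a ^ 2 + s))) (by fun_prop))
  simp_rw [lintegral_R3_eq_lintegral_cylinder hg, hradial]
  rw [lintegral_const_mul' _ _ ENNReal.ofReal_ne_top,
    lintegral_halfPlane_polar (g := fun p => ENNReal.ofReal p.2 * g p.1 √(p.1 ^ 2 + p.2 ^ 2))
      ((by fun_prop : Measurable fun p : ℝ × ℝ => ENNReal.ofReal p.2).mul
        (hg_comp (by fun_prop) (by fun_prop)))]
  congr 1
  refine setLIntegral_congr_fun (measurableSet_Ioi.prod measurableSet_Ioo) fun p hp => ?_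
  have hr : (0 : ℝ) ≤ p.1 := (mem_Ioi.mp hp.1).le
  have hnorm : √((p.1 * cos p.2) ^ 2 + (p.1 * sin p.2) ^ 2) = p.1 := by
    rw [mul_pow, mul_pow, ← mul_add, cos_sq_add_sin_sq, mul_one, sqrt_sq hr]
  simp only [hnorm]
  rw [← mul_assoc, ← ENNReal.ofReal_mul hr, ← mul_assoc, ← sq]

lemma lintegral_R3_inner_norm {k : R3} (hk : ‖k‖ = 1) (hg : Measurable (Function.uncurry g)) :
    ∫⁻ x : R3, g ⟪k, x⟫ ‖x‖ = ENNReal.ofReal (2 * π) * ∫⁻ p in Ioi (0 : ℝ) ×ˢ Ioo 0 π,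
      ENNReal.ofReal (p.1 ^ 2 * sin p.2) * g (p.1 * cos p.2) p.1 := by
  have horth : Orthonormal ℝ (({0} : Set (Fin 3)).domRestrict fun _ => k) :=
    ⟨fun _ => hk, fun i j hij => absurd (Subsingleton.elim i j) hij⟩
  obtain ⟨B, hB⟩ := horth.exists_orthonormalBasis_extension_of_card_eq (by simp)
  have hmeas : Measurable fun x : R3 => g (x 0) ‖x‖ :=
    hg.comp (f := fun x : R3 => (x 0, ‖x‖)) (by fun_prop)
  rw [← lintegral_R3_eq_lintegral_axis hg, ← B.measurePreserving_repr.lintegral_comp hmeas]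
  simp only [B.repr_apply_apply, hB 0 rfl, LinearIsometryEquiv.norm_map]

end PolarCoordinates

section SphereMeasure

variable {k : R3}

lemma lintegral_mul_angle_eq_mul_lintegral_sphere {E : Type*} [NormedAddCommGroup E]
    [InnerProductSpace ℝ E] [FiniteDimensional ℝ E] [Nontrivial E] [MeasurableSpace E]
    [BorelSpace E] (μ : Measure E) [μ.IsAddHaarMeasure] (k : E) {χ F : ℝ → ℝ≥0∞}
    (hχ : Measurable χ) (hF : Measurable F) :
    ∫⁻ x, χ ‖x‖ * F (angle k x) ∂μ =
      (∫⁻ r in Ioi (0 : ℝ), ENNReal.ofReal (r ^ (finrank ℝ E - 1)) * χ r) *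
        ∫⁻ σ : Metric.sphere (0 : E) 1, F (angle k (σ : E)) ∂μ.toSphere := by
  rw [lintegral_eq_lintegral_sphere_prod_Ioi μ (f := fun x => χ ‖x‖ * F (angle k x))
    ((hχ.comp measurable_norm).mul (hF.comp (by fun_prop))),
    ← lintegral_const_mul _ (f := fun σ : Metric.sphere (0 : E) 1 => F (angle k σ))
      (hF.comp (by fun_prop))]
  refine lintegral_congr fun σ => ?_
  rw [← lintegral_mul_const _ (by fun_prop)]
  refine setLIntegral_congr_fun measurableSet_Ioi fun r (hr : 0 < r) => ?_
  simp only [norm_smul, norm_eq_of_mem_sphere, mul_one, Real.norm_of_nonneg hr.le,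
    angle_smul_right_of_pos _ _ hr]
  ring

lemma lintegral_R3_mul_angle (hk : k ≠ 0) {χ F : ℝ → ℝ≥0∞} (hχ : Measurable χ)
    (hF : Measurable F) :
    ∫⁻ x : R3, χ ‖x‖ * F (angle k x) =
      (∫⁻ r in Ioi (0 : ℝ), ENNReal.ofReal (r ^ 2) * χ r) *
        (ENNReal.ofReal (2 * π) * ∫⁻ θ in Ioo 0 π, ENNReal.ofReal (sin θ) * F θ) := by
  have hk₀ : 0 < ‖k‖ := norm_pos_iff.mpr hk
  have hunit : ‖‖k‖⁻¹ • k‖ = 1 := norm_smul_inv_norm hk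
  have hangle (x : R3) : F (angle k x) = F (arccos (⟪‖k‖⁻¹ • k, x⟫ / ‖x‖)) := by
    rw [← angle_smul_left_of_pos k x (inv_pos.mpr hk₀), angle, hunit, one_mul]
  simp_rw [hangle]
  rw [lintegral_R3_inner_norm (g := fun a n => χ n * F (arccos (a / n))) hunit
    (by unfold Function.uncurry; fun_prop), mul_left_comm, Measure.volume_eq_prod,
    ← Measure.prod_restrict, ← lintegral_prod_mul (by fun_prop) (by fun_prop),
    Measure.prod_restrict]
  congr 1
  refine setLIntegral_congr_fun (measurableSet_Ioi.prod measurableSet_Ioo) fun p hp => ?_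
  obtain ⟨hr : 0 < p.1, hθ⟩ := hp
  simp only [mul_div_cancel_left₀ _ hr.ne', arccos_cos hθ.1.le hθ.2.le]
  rw [ENNReal.ofReal_mul (by positivity)]
  ring

-- Both sides, multiplied by the radial integral of the unit ball, are the integral of `F ∘ angle k`
-- over the unit ball.
lemma lintegral_sphere_angle (hk : k ≠ 0) {F : ℝ → ℝ≥0∞} (hF : Measurable F) :
    ∫⁻ σ : S2, F (angle k (σ : R3)) ∂sphMeasure =
      ENNReal.ofReal (2 * π) * ∫⁻ θ in Ioo 0 π, ENNReal.ofReal (sin θ) * F θ := by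
  set χ : ℝ → ℝ≥0∞ := (Iio 1).indicator fun _ => 1 with hχ_def
  have hχ : Measurable χ := measurable_const.indicator measurableSet_Iio
  have hradial : ∫⁻ r in Ioi (0 : ℝ), ENNReal.ofReal (r ^ 2) * χ r = ENNReal.ofReal (1 / 3) := by
    calc ∫⁻ r in Ioi (0 : ℝ), ENNReal.ofReal (r ^ 2) * χ r
        = ∫⁻ r in Ioc (0 : ℝ) 1, ENNReal.ofReal (r ^ 2) := by
          rw [← setLIntegral_congr Ioo_ae_eq_Ioc, ← Ioi_inter_Iio, inter_comm,
            ← setLIntegral_indicator measurableSet_Iio]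
          refine lintegral_congr fun r => ?_
          by_cases hr : r ∈ Iio (1 : ℝ) <;> simp [hχ_def, hr]
      _ = ENNReal.ofReal (1 / 3) := by
          rw [← ofReal_integral_eq_lintegral_ofReal (intervalIntegral.intervalIntegrable_pow 2).1
            (.of_forall fun r => sq_nonneg r), ← intervalIntegral.integral_of_le zero_le_one,
            integral_pow]
          norm_num
  have hball := lintegral_mul_angle_eq_mul_lintegral_sphere volume k hχ hF
  rw [lintegral_R3_mul_angle hk hχ hF, finrank_euclideanSpace_fin, hradial] at hball
  exact ((ENNReal.mul_right_inj (by simp) ENNReal.ofReal_ne_top).mp hball).symm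

lemma lintegral_sphere_half_angle_le (hk : k ≠ 0) {F : ℝ → ℝ≥0∞} (hF : Measurable F) :
    ∫⁻ σ : S2, (Iic (π / 4)).indicator (fun φ => F (2 * φ)) (angle k (σ : R3)) ∂sphMeasure ≤
      ∫⁻ σ : S2, F (angle k (σ : R3)) ∂sphMeasure := by
  rw [lintegral_sphere_angle hk hF,
    lintegral_sphere_angle hk ((by fun_prop : Measurable fun φ => F (2 * φ)).indicator
      measurableSet_Iic)]
  refine mul_le_mul_right ?_ _
  have hdouble := lintegral_image_eq_lintegral_abs_deriv_mul (s := Ioo (0 : ℝ) (π / 2))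
    (f := fun φ => 2 * φ) (f' := fun _ => 2) measurableSet_Ioo
    (fun x _ => by simpa using ((hasDerivAt_id x).const_mul 2).hasDerivWithinAt)
    (mul_right_injective₀ two_ne_zero).injOn (fun θ => ENNReal.ofReal (sin θ) * F θ)
  rw [image_mul_left_Ioo two_pos, mul_zero, mul_div_cancel₀ _ two_ne_zero] at hdouble
  rw [hdouble, ← lintegral_indicator measurableSet_Ioo, ← lintegral_indicator measurableSet_Ioo]
  refine lintegral_mono fun φ => ?_
  by_cases hφ : φ ∈ Ioc 0 (π / 4)
  · have hφ_mem : φ ∈ Ioo 0 (π / 2) := ⟨hφ.1, by linarith [hφ.2, pi_pos]⟩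
    have hsin : sin φ ≤ 2 * sin (2 * φ) := by
      have hsin₀ : 0 ≤ sin φ := sin_nonneg_of_nonneg_of_le_pi hφ.1.le (by linarith [hφ.2, pi_pos])
      have hcos : √2 / 2 ≤ cos φ := cos_pi_div_four ▸
        cos_le_cos_of_nonneg_of_le_pi hφ.1.le (by linarith [pi_pos]) hφ.2
      have h2 : (1 : ℝ) ≤ √2 := one_le_sqrt.mpr one_le_two
      rw [sin_two_mul]
      nlinarith
    rw [indicator_of_mem hφ_mem,
      indicator_of_mem (show φ ∈ Ioo 0 π from ⟨hφ.1, by linarith [hφ.2, pi_pos]⟩),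
      indicator_of_mem (mem_Iic.mpr hφ.2), abs_two, ← mul_assoc, ← ENNReal.ofReal_mul zero_le_two]
    gcongr
  · by_cases hφ₀ : 0 < φ
    · rw [indicator_apply, indicator_of_notMem (s := Iic (π / 4)) (fun h => hφ ⟨hφ₀, h⟩), mul_zero,
        ite_self]
      exact zero_le
    · rw [indicator_of_notMem fun h => hφ₀ h.1]
      exact zero_le

lemma lintegral_sin_arccos {κ : ℝ} (hκ₀ : 0 ≤ κ) (hκ₁ : κ ≤ 1) :
    ∫⁻ θ in Ioo (arccos κ) (arccos (-κ)), ENNReal.ofReal (sin θ) = ENNReal.ofReal (2 * κ) := by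
  rw [setLIntegral_congr Ioo_ae_eq_Ioc, ← ofReal_integral_eq_lintegral_ofReal
    (continuous_sin.intervalIntegrable _ _).1 ?_,
    ← intervalIntegral.integral_of_le (arccos_le_arccos (by linarith)), integral_sin,
    cos_arccos (by linarith) hκ₁, cos_arccos (by linarith) (by linarith)]
  · ring_nf
  · filter_upwards [ae_restrict_mem measurableSet_Ioc] with θ hθ
    exact sin_nonneg_of_nonneg_of_le_pi ((arccos_nonneg _).trans hθ.1.le)
      (hθ.2.trans (arccos_le_pi _))

lemma ofReal_le_sphMeasure_band (hk : k ≠ 0) {κ : ℝ} (hκ₀ : 0 ≤ κ) (hκ₁ : κ ≤ 1) :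
    ENNReal.ofReal (4 * π * κ) ≤ sphMeasure {σ : S2 | |cos (angle k (σ : R3))| ≤ κ} := by
  set I := Icc (arccos κ) (arccos (-κ)) with hI
  have hangle : Measurable fun σ : S2 => angle k (σ : R3) := by fun_prop
  have hband : (fun σ : S2 => angle k (σ : R3)) ⁻¹' I
      ⊆ {σ : S2 | |cos (angle k (σ : R3))| ≤ κ} := by
    intro σ hσ
    change |cos (angle k (σ : R3))| ≤ κ
    refine abs_le.mpr ⟨?_, ?_⟩
    · rw [← cos_arccos (show -1 ≤ -κ by linarith) (by linarith)]
      exact cos_le_cos_of_nonneg_of_le_pi (angle_nonneg _ _) (arccos_le_pi _) hσ.2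
    · rw [← cos_arccos (by linarith) hκ₁]
      exact cos_le_cos_of_nonneg_of_le_pi (arccos_nonneg _) (angle_le_pi _ _) hσ.1
  calc ENNReal.ofReal (4 * π * κ)
      = ENNReal.ofReal (2 * π) * ∫⁻ θ in Ioo (arccos κ) (arccos (-κ)),
          ENNReal.ofReal (sin θ) := by
        rw [lintegral_sin_arccos hκ₀ hκ₁, ← ENNReal.ofReal_mul (by positivity)]
        ring_nf
    _ = ENNReal.ofReal (2 * π) * ∫⁻ θ in Ioo (arccos κ) (arccos (-κ)),
          ENNReal.ofReal (sin θ) * I.indicator 1 θ := by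
        congr 1
        refine setLIntegral_congr_fun measurableSet_Ioo fun θ hθ => ?_
        simp only [hI, indicator_of_mem (Ioo_subset_Icc_self hθ), Pi.one_apply, mul_one]
    _ ≤ ENNReal.ofReal (2 * π) * ∫⁻ θ in Ioo 0 π, ENNReal.ofReal (sin θ) * I.indicator 1 θ := by
        gcongr
        exacts [arccos_nonneg _, arccos_le_pi _]
    _ = sphMeasure ((fun σ : S2 => angle k (σ : R3)) ⁻¹' I) := by
        rw [← lintegral_sphere_angle hk (measurable_one.indicator measurableSet_Icc),
          ← lintegral_indicator_one (hangle measurableSet_Icc)]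
        rfl
    _ ≤ _ := measure_mono hband

instance isFiniteMeasure_sphMeasure : IsFiniteMeasure sphMeasure := by
  unfold sphMeasure
  infer_instance

lemma sphMeasure_univ : sphMeasure univ = ENNReal.ofReal (4 * π) := by
  rw [sphMeasure, Measure.toSphere_apply_univ, EuclideanSpace.volume_ball_fin_three,
    finrank_euclideanSpace_fin, ENNReal.ofReal_one, one_pow, one_mul, ← ENNReal.ofReal_natCast,
    ← ENNReal.ofReal_mul (by positivity)]
  congr 1
  push_cast
  ring

end SphereMeasure

section AngularKernel

variable {b : ℝ → ℝ}

lemma GradCutoff.Cb_pos (hb : GradCutoff b) : 0 < Cb b := mul_pos (by positivity) hb.pos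

lemma GradCutoff.cos_angle_neg_right (hb : GradCutoff b) (k σ : R3) :
    b (cos (angle k (-σ))) = b (cos (angle k σ)) := by
  rw [angle_neg_right, hb.symm]

lemma GradCutoff.lintegral_sphere (hb : GradCutoff b) {k : R3} (hk : k ≠ 0) :
    ∫⁻ σ : S2, ENNReal.ofReal (b (cos (angle k (σ : R3)))) ∂sphMeasure = ENNReal.ofReal (Cb b) := by
  rw [lintegral_sphere_angle hk (F := fun θ => ENNReal.ofReal (b (cos θ)))
      (hb.measurable.comp measurable_cos).ennreal_ofReal,
    Cb, ENNReal.ofReal_mul two_pi_pos.le, intervalIntegral.integral_of_le pi_pos.le,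
    ofReal_integral_eq_lintegral_ofReal hb.integrable.1 ?_, setLIntegral_congr Ioo_ae_eq_Ioc]
  · congr 1
    refine lintegral_congr fun θ => ?_
    rw [ENNReal.ofReal_mul (hb.nonneg _), mul_comm]
  · filter_upwards [ae_restrict_mem measurableSet_Ioc] with θ hθ
    exact mul_nonneg (hb.nonneg _) (sin_nonneg_of_nonneg_of_le_pi hθ.1.le hθ.2)

end AngularKernel

section CollisionShift

variable {E : Type*} [NormedAddCommGroup E] [InnerProductSpace ℝ E] {e z : E}

/-- The map `z ↦ (z + ‖z‖ e) / 2`. A collision with deflection direction `σ` sends `v_*` to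
`v'_* = v - collisionShift σ (v - v_*)` and yields `v' = v - collisionShift (-σ) (v - v_*)`, so
integrals over `v_*` turn into integrals over outgoing velocities through this map. -/
def collisionShift (e z : E) : E := (2⁻¹ : ℝ) • (z + ‖z‖ • e)

lemma continuous_collisionShift (e : E) : Continuous (collisionShift e) := by
  unfold collisionShift
  fun_prop

lemma one_add_cos_angle (z e : E) : 1 + cos (angle z e) = 2 * cos (angle z e / 2) ^ 2 := by
  rw [cos_sq, mul_div_cancel₀ _ two_ne_zero]
  ring

lemma cos_half_angle_nonneg (z e : E) : 0 ≤ cos (angle z e / 2) :=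
  cos_nonneg_of_mem_Icc ⟨by linarith [angle_nonneg z e, pi_pos], by linarith [angle_le_pi z e]⟩

lemma cos_half_angle_pos (h : angle z e ≠ π) : 0 < cos (angle z e / 2) :=
  cos_pos_of_mem_Ioo ⟨by linarith [angle_nonneg z e, pi_pos],
    by linarith [(angle_le_pi z e).lt_of_ne h]⟩

lemma inner_collisionShift (he : ‖e‖ = 1) (z : E) :
    ⟪collisionShift e z, e⟫ = ‖z‖ * cos (angle z e / 2) ^ 2 := by
  rw [collisionShift, real_inner_smul_left, inner_add_left, real_inner_smul_left,
    real_inner_self_eq_norm_sq, he, ← cos_angle_mul_norm_mul_norm, he]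
  linear_combination (‖z‖ / 2) * one_add_cos_angle z e

lemma norm_collisionShift (he : ‖e‖ = 1) (z : E) :
    ‖collisionShift e z‖ = ‖z‖ * cos (angle z e / 2) := by
  rw [← sq_eq_sq₀ (norm_nonneg _) (mul_nonneg (norm_nonneg _) (cos_half_angle_nonneg z e)),
    collisionShift, norm_smul, mul_pow, norm_add_sq_real, norm_smul, real_inner_smul_right, he,
    ← cos_angle_mul_norm_mul_norm, he, norm_norm, norm_inv, Real.norm_ofNat]
  linear_combination (‖z‖ ^ 2 / 2) * one_add_cos_angle z e

lemma angle_collisionShift (he : ‖e‖ = 1) (hz : z ≠ 0) :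
    angle (collisionShift e z) e = angle z e / 2 := by
  by_cases h : angle z e = π
  · have h₀ : collisionShift e z = 0 := by
      rw [← norm_eq_zero, norm_collisionShift he, h, cos_pi_div_two, mul_zero]
    rw [h, h₀, angle_zero_left]
  · have hcos := cos_half_angle_pos h
    refine injOn_cos ⟨angle_nonneg _ _, angle_le_pi _ _⟩
      ⟨by linarith [angle_nonneg z e], by linarith [angle_nonneg z e, angle_le_pi z e]⟩ ?_
    rw [cos_angle, inner_collisionShift he, norm_collisionShift he, he]
    field_simp [norm_ne_zero_iff.mpr hz]

lemma collisionShift_injOn (he : ‖e‖ = 1) :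
    InjOn (collisionShift e) {z | z ≠ 0 ∧ angle z e ≠ π} := by
  have hnorm (z : E) (hz : z ≠ 0 ∧ angle z e ≠ π) :
      ‖z‖ = ‖collisionShift e z‖ ^ 2 / ⟪collisionShift e z, e⟫ := by
    have hcos := cos_half_angle_pos hz.2
    have hz₀ : ‖z‖ ≠ 0 := norm_ne_zero_iff.mpr hz.1
    rw [norm_collisionShift he, inner_collisionShift he]
    field_simp
  have hrecover (z : E) : z = (2 : ℝ) • collisionShift e z - ‖z‖ • e := by
    unfold collisionShift
    module
  intro z hz w hw h
  rw [hrecover z, hrecover w, hnorm z hz, hnorm w hw, h]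

/-- The derivative of `collisionShift e` at `z ≠ 0`. -/
def collisionShiftDeriv (e z : E) : E →L[ℝ] E :=
  (2⁻¹ : ℝ) • (ContinuousLinearMap.id ℝ E + (innerSL ℝ (‖z‖⁻¹ • z)).smulRight e)

lemma hasFDerivAt_collisionShift (hz : z ≠ 0) :
    HasFDerivAt (collisionShift e) (collisionShiftDeriv e z) z := by
  have hnorm : HasFDerivAt (fun z : E => ‖z‖) (innerSL ℝ (‖z‖⁻¹ • z)) z := by
    have hsqrt := (hasStrictFDerivAt_norm_sq z).hasFDerivAt.sqrt (by simpa using hz)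
    simp only [sqrt_sq (norm_nonneg _)] at hsqrt
    convert hsqrt using 1
    rw [map_smul, two_smul, ← two_smul ℝ, smul_smul]
    congr 1
    field_simp [norm_ne_zero_iff.mpr hz]
  exact ((hasFDerivAt_id z).add (hnorm.smul_const e)).const_smul (2⁻¹ : ℝ)

variable [FiniteDimensional ℝ E]

lemma det_collisionShiftDeriv (he : ‖e‖ = 1) (z : E) :
    (collisionShiftDeriv e z).det = (1 + cos (angle z e)) / 2 ^ finrank ℝ E := by
  have htrans : (collisionShiftDeriv e z : E →ₗ[ℝ] E) = (2⁻¹ : ℝ) • LinearMap.transvection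
      ((innerSL ℝ (‖z‖⁻¹ • z) : E →L[ℝ] ℝ) : E →ₗ[ℝ] ℝ) e := by
    ext y
    simp [collisionShiftDeriv, LinearMap.transvection]
  have hinner : innerSL ℝ (‖z‖⁻¹ • z) e = cos (angle z e) := by
    rw [innerSL_apply_apply, real_inner_smul_left, cos_angle, he, mul_one, inv_mul_eq_div]
  rw [ContinuousLinearMap.det, htrans, LinearMap.det_smul, LinearMap.transvection.det,
    ContinuousLinearMap.coe_coe, hinner, inv_pow, inv_mul_eq_div]

variable [MeasurableSpace E] [BorelSpace E] {s : Set E}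

lemma lintegral_image_collisionShift (he : ‖e‖ = 1) (hs : MeasurableSet s)
    (hsub : s ⊆ {z | z ≠ 0 ∧ angle z e ≠ π}) (G : E → ℝ≥0∞) :
    ∫⁻ y in collisionShift e '' s, G y = ∫⁻ z in s,
      ENNReal.ofReal ((1 + cos (angle z e)) / 2 ^ finrank ℝ E) * G (collisionShift e z) := by
  rw [lintegral_image_eq_lintegral_abs_det_fderiv_mul volume hs
    (fun z hz => (hasFDerivAt_collisionShift (hsub hz).1).hasFDerivWithinAt)
    ((collisionShift_injOn he).mono hsub) G]
  refine setLIntegral_congr_fun hs fun z _ => ?_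
  have hdet : 0 ≤ (1 + cos (angle z e)) / 2 ^ finrank ℝ E :=
    div_nonneg (by linarith [neg_one_le_cos (angle z e)]) (by positivity)
  simp only [det_collisionShiftDeriv he, abs_of_nonneg hdet]

lemma lintegral_comp_collisionShift_le [Nontrivial E] (he : ‖e‖ = 1) {κ : ℝ} (hκ : -1 < κ)
    (G : E → ℝ≥0∞) :
    ∫⁻ z in {z | κ ≤ cos (angle z e)}, G (collisionShift e z) ≤
      ENNReal.ofReal (2 ^ finrank ℝ E / (1 + κ)) * ∫⁻ y, G y := by
  set s : Set E := {z | κ ≤ cos (angle z e)} \ {0}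
  have hs : MeasurableSet s := (measurableSet_le (by fun_prop) (by fun_prop)).diff
    (measurableSet_singleton 0)
  have hsub : s ⊆ {z | z ≠ 0 ∧ angle z e ≠ π} := fun z hz => ⟨hz.2, fun h => by
    have hcos : κ ≤ cos (angle z e) := hz.1
    rw [h, cos_pi] at hcos
    exact hκ.not_ge hcos⟩
  have hκ₁ : 0 < 1 + κ := by linarith
  calc ∫⁻ z in {z | κ ≤ cos (angle z e)}, G (collisionShift e z)
      = ∫⁻ z in s, G (collisionShift e z) :=
        (setLIntegral_congr (sdiff_null_ae_eq_self (measure_singleton _))).symm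
    _ ≤ ∫⁻ z in s, ENNReal.ofReal (2 ^ finrank ℝ E / (1 + κ)) *
          (ENNReal.ofReal ((1 + cos (angle z e)) / 2 ^ finrank ℝ E) * G (collisionShift e z)) := by
        refine setLIntegral_mono' hs fun z hz => ?_
        have hcos : κ ≤ cos (angle z e) := hz.1
        rw [← mul_assoc, ← ENNReal.ofReal_mul (by positivity)]
        refine le_mul_of_one_le_left' (ENNReal.one_le_ofReal.mpr ?_)
        rw [div_mul_div_cancel₀' (by positivity), one_le_div hκ₁]
        linarith
    _ = ENNReal.ofReal (2 ^ finrank ℝ E / (1 + κ)) * ∫⁻ y in collisionShift e '' s, G y := by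
        rw [lintegral_image_collisionShift he hs hsub,
          lintegral_const_mul' _ _ ENNReal.ofReal_ne_top]
    _ ≤ _ := by gcongr; exact Measure.restrict_le_self

lemma volume_compl_ne_zero_and_angle_ne_pi (hdim : 2 ≤ finrank ℝ E) (he : ‖e‖ = 1) :
    volume {z : E | z ≠ 0 ∧ angle z e ≠ π}ᶜ = 0 := by
  have hspan : volume (Submodule.span ℝ {e} : Set E) = 0 := by
    refine Measure.addHaar_submodule _ _ fun htop => ?_
    have := finrank_span_singleton (K := ℝ) (v := e) (norm_ne_zero_iff.mp (by simp [he]))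
    rw [htop, finrank_top] at this
    omega
  refine measure_mono_null (fun z hz => ?_) hspan
  by_cases hz₀ : z = 0
  · exact hz₀ ▸ Submodule.zero_mem _
  · obtain ⟨-, r, hr, rfl⟩ := angle_eq_pi_iff.mp (not_not.mp fun h => hz ⟨hz₀, h⟩)
    exact Submodule.mem_span_singleton.mpr
      ⟨r⁻¹, by rw [smul_smul, inv_mul_cancel₀ hr.ne, one_smul]⟩

lemma volume_preimage_collisionShift_eq_zero (hdim : 2 ≤ finrank ℝ E) (he : ‖e‖ = 1)
    {N : Set E} (hN : volume N = 0) : volume (collisionShift e ⁻¹' N) = 0 := by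
  obtain ⟨N', hNN', hN'meas, hN'⟩ := exists_measurable_superset_of_null hN
  set s : Set E := {z | z ≠ 0 ∧ angle z e ≠ π}
  have hs : MeasurableSet s := (measurableSet_singleton 0).compl.inter
    ((measurableSet_singleton π).preimage (by fun_prop : Measurable fun z => angle z e)).compl
  have hregular : volume (s ∩ collisionShift e ⁻¹' N') = 0 := by
    have h := lintegral_image_collisionShift he hs subset_rfl (N'.indicator 1)
    have h₀ : ∫⁻ y in collisionShift e '' s, N'.indicator 1 y = 0 :=
      le_antisymm ((setLIntegral_le_lintegral _ _).trans_eq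
        (by rw [lintegral_indicator_one hN'meas, hN'])) zero_le
    have hmeas : Measurable fun z => ENNReal.ofReal ((1 + cos (angle z e)) / 2 ^ finrank ℝ E) *
        N'.indicator (1 : E → ℝ≥0∞) (collisionShift e z) :=
      (by fun_prop : Measurable _).mul ((measurable_one.indicator hN'meas).comp
        (continuous_collisionShift e).measurable)
    rw [h₀, eq_comm, lintegral_eq_zero_iff hmeas, Filter.EventuallyEq, ae_restrict_iff' hs] at h
    refine measure_mono_null (fun z hz => ?_) (ae_iff.mp h)
    intro hzero
    have hpos : 0 < (1 + cos (angle z e)) / 2 ^ finrank ℝ E := by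
      have := cos_half_angle_pos hz.1.2
      rw [one_add_cos_angle]
      positivity
    have hz₀ := hzero hz.1
    rw [indicator_of_mem (show collisionShift e z ∈ N' from hz.2), Pi.one_apply, mul_one,
      Pi.zero_apply, ENNReal.ofReal_eq_zero] at hz₀
    exact hz₀.not_gt hpos
  refine measure_mono_null (fun z hz => ?_)
    (measure_union_null hregular (volume_compl_ne_zero_and_angle_ne_pi hdim he))
  by_cases hzs : z ∈ s
  · exact Or.inl ⟨hzs, hNN' hz⟩
  · exact Or.inr hzs

end CollisionShift

/-! ### Bounds for the collision integral -/

section CollisionIntegrals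

variable {γ : ℝ} {b : ℝ → ℝ} {g : R3 → ℝ}

lemma vOutStar_eq_sub_collisionShift (v w : R3) (σ : S2) :
    vOutStar v w σ = v - collisionShift (σ : R3) (v - w) := by
  unfold vOutStar collisionShift
  module

lemma vOut_eq_sub_collisionShift (v w : R3) (σ : S2) :
    vOut v w σ = v - collisionShift (-(σ : R3)) (v - w) := by
  unfold vOut collisionShift
  module

lemma cosAngle_eq_cos_angle (v w : R3) (σ : S2) : cosAngle v w σ = cos (angle (v - w) σ) := by
  rw [cosAngle, real_inner_smul_left, cos_angle, norm_eq_of_mem_sphere, mul_one, div_eq_inv_mul]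

@[fun_prop]
lemma measurable_vOut (v : R3) : Measurable fun p : R3 × S2 => vOut v p.1 p.2 := by
  unfold vOut
  fun_prop

@[fun_prop]
lemma measurable_vOutStar (v : R3) : Measurable fun p : R3 × S2 => vOutStar v p.1 p.2 := by
  unfold vOutStar
  fun_prop

lemma quasiMeasurePreserving_sub_collisionShift (v : R3) {e : R3} (he : ‖e‖ = 1) :
    Measure.QuasiMeasurePreserving fun w => v - collisionShift e (v - w) := by
  have sub_left :=
    (Measure.measurePreserving_sub_left (volume : Measure R3) v).quasiMeasurePreserving
  have shift : Measure.QuasiMeasurePreserving (collisionShift e) := by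
    refine ⟨(continuous_collisionShift e).measurable, .mk fun N hN hN₀ => ?_⟩
    rw [Measure.map_apply (continuous_collisionShift e).measurable hN]
    exact volume_preimage_collisionShift_eq_zero (by simp) he hN₀
  exact sub_left.comp (shift.comp sub_left)

lemma quasiMeasurePreserving_vOut (v : R3) :
    Measure.QuasiMeasurePreserving (fun p : R3 × S2 => vOut v p.1 p.2)
      (volume.prod sphMeasure) volume := by
  refine QuasiMeasurePreserving.prod_of_left (measurable_vOut v) (.of_forall fun σ => ?_)
  simpa only [vOut_eq_sub_collisionShift] using
    quasiMeasurePreserving_sub_collisionShift v (by simp : ‖-(σ : R3)‖ = 1)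

lemma quasiMeasurePreserving_vOutStar (v : R3) :
    Measure.QuasiMeasurePreserving (fun p : R3 × S2 => vOutStar v p.1 p.2)
      (volume.prod sphMeasure) volume := by
  refine QuasiMeasurePreserving.prod_of_left (measurable_vOutStar v) (.of_forall fun σ => ?_)
  simpa only [vOutStar_eq_sub_collisionShift] using
    quasiMeasurePreserving_sub_collisionShift v (by simp : ‖(σ : R3)‖ = 1)

@[fun_prop]
lemma measurable_Bker (hb : GradCutoff b) (v : R3) :
    Measurable fun p : R3 × S2 => Bker γ b v p.1 p.2 := by
  have := hb.measurable
  simp only [Bker, cosAngle_eq_cos_angle]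
  fun_prop

lemma Bker_nonneg (hb : GradCutoff b) (v w : R3) (σ : S2) : 0 ≤ Bker γ b v w σ :=
  mul_nonneg (by positivity) (hb.nonneg _)

/-- The total mass plus energy `∫ g(w)(1 + |w|²) dw` of a nonnegative density. -/
def massEnergy (g : R3 → ℝ) : ℝ≥0∞ := ∫⁻ w, ENNReal.ofReal (g w * (1 + ‖w‖ ^ 2))

lemma rpow_le_one_add_sq (hγ₀ : 0 ≤ γ) (hγ₂ : γ ≤ 2) {x : ℝ} (hx : 0 ≤ x) :
    x ^ γ ≤ 1 + x ^ 2 := by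
  rcases le_total x 1 with h | h
  · linarith [rpow_le_one hx h hγ₀, sq_nonneg x]
  · have := rpow_le_rpow_of_exponent_le h hγ₂
    rw [rpow_two] at this
    linarith

lemma one_add_norm_sub_sq_le {E : Type*} [SeminormedAddCommGroup E] (v w : E) :
    1 + ‖v - w‖ ^ 2 ≤ 2 * (1 + ‖v‖ ^ 2) * (1 + ‖w‖ ^ 2) := by
  have hsq : ‖v - w‖ ^ 2 ≤ (‖v‖ + ‖w‖) ^ 2 := by gcongr; exact norm_sub_le v w
  nlinarith [sq_nonneg (‖v‖ - ‖w‖), mul_nonneg (sq_nonneg ‖v‖) (sq_nonneg ‖w‖)]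

lemma lintegral_Bker_mul_le (hγ₀ : 0 ≤ γ) (hγ₂ : γ ≤ 2) (hb : GradCutoff b) (hg : Measurable g)
    (hg₀ : ∀ w, 0 ≤ g w) (v : R3) :
    ∫⁻ p, ENNReal.ofReal (Bker γ b v p.1 p.2 * g p.1) ∂volume.prod sphMeasure ≤
      ENNReal.ofReal (2 * Cb b * (1 + ‖v‖ ^ 2)) * massEnergy g := by
  have hC := hb.Cb_pos.le
  rw [lintegral_prod _ (by fun_prop (disch := exact hb)), massEnergy,
    ← lintegral_const_mul' _ _ ENNReal.ofReal_ne_top]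
  refine lintegral_mono_ae ?_
  filter_upwards [Measure.ae_ne volume v] with w hw
  have hg_w := hg₀ w
  have hsplit (σ : S2) : ENNReal.ofReal (Bker γ b v w σ * g w) =
      ENNReal.ofReal (‖v - w‖ ^ γ * g w) * ENNReal.ofReal (b (cos (angle (v - w) σ))) := by
    rw [← ENNReal.ofReal_mul (by positivity), Bker, cosAngle_eq_cos_angle, mul_right_comm]
  simp_rw [hsplit]
  rw [lintegral_const_mul' _ _ ENNReal.ofReal_ne_top,
    hb.lintegral_sphere (sub_ne_zero.mpr hw.symm), ← ENNReal.ofReal_mul (by positivity),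
    ← ENNReal.ofReal_mul (by positivity)]
  apply ENNReal.ofReal_le_ofReal
  calc ‖v - w‖ ^ γ * g w * Cb b
      ≤ (2 * (1 + ‖v‖ ^ 2) * (1 + ‖w‖ ^ 2)) * g w * Cb b := by
        gcongr
        exact (rpow_le_one_add_sq hγ₀ hγ₂ (norm_nonneg _)).trans (one_add_norm_sub_sq_le v w)
    _ = 2 * Cb b * (1 + ‖v‖ ^ 2) * (g w * (1 + ‖w‖ ^ 2)) := by ring

/-- The cross section `b(cos θ)` of the collisions with `θ ≤ π/2`, as a function of the angle
`φ = θ/2` that `v - v'_*` forms with `σ`. -/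
def halfAngleKernel (b : ℝ → ℝ) : ℝ → ℝ≥0∞ :=
  (Iic (π / 4)).indicator fun φ => ENNReal.ofReal (b (cos (2 * φ)))

lemma measurable_halfAngleKernel (hb : GradCutoff b) : Measurable (halfAngleKernel b) := by
  have := hb.measurable
  exact Measurable.indicator (by fun_prop) measurableSet_Iic

lemma lintegral_halfAngleKernel_le (hb : GradCutoff b) (y : R3) :
    ∫⁻ σ : S2, halfAngleKernel b (angle y σ) ∂sphMeasure ≤ ENNReal.ofReal (Cb b) := by
  have := hb.measurable
  rcases eq_or_ne y 0 with rfl | hy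
  · have hzero : halfAngleKernel b (π / 2) = 0 :=
      indicator_of_notMem (by rw [mem_Iic, not_le]; linarith [pi_pos]) _
    simp only [angle_zero_left, hzero, lintegral_zero, zero_le]
  · exact (lintegral_sphere_half_angle_le hy (F := fun θ => ENNReal.ofReal (b (cos θ)))
      (by fun_prop)).trans (hb.lintegral_sphere hy).le

lemma lintegral_forward_gain_le (hγ₀ : 0 ≤ γ) (hγ₂ : γ ≤ 2) (hb : GradCutoff b)
    (hg₀ : ∀ w, 0 ≤ g w) (v : R3) {e : R3} (he : ‖e‖ = 1) :
    ∫⁻ z in {z | 0 ≤ cos (angle z e)},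
        ENNReal.ofReal (‖z‖ ^ γ * b (cos (angle z e)) * g (v - collisionShift e z)) ≤
      8 * ∫⁻ y, ENNReal.ofReal (4 * (1 + ‖v‖ ^ 2) * (g (v - y) * (1 + ‖v - y‖ ^ 2))) *
        halfAngleKernel b (angle y e) := by
  have cov := lintegral_comp_collisionShift_le he (show (-1 : ℝ) < 0 by norm_num) fun y =>
    ENNReal.ofReal (4 * (1 + ‖v‖ ^ 2) * (g (v - y) * (1 + ‖v - y‖ ^ 2))) *
      halfAngleKernel b (angle y e)
  have h8 : ENNReal.ofReal (2 ^ finrank ℝ R3 / (1 + 0)) = 8 := by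
    rw [finrank_euclideanSpace_fin]; norm_num
  rw [h8] at cov
  refine le_trans (setLIntegral_mono_ae' (measurableSet_le (by fun_prop) (by fun_prop)) ?_) cov
  filter_upwards [Measure.ae_ne volume 0] with z hz hcos
  have half_angle_le : angle z e / 2 ≤ π / 4 := by
    by_contra! h
    have := cos_neg_of_pi_div_two_lt_of_lt (x := angle z e) (by linarith)
      (by linarith [angle_le_pi z e, pi_pos])
    linarith [show 0 ≤ cos (angle z e) from hcos]
  have norm_sq_le : ‖z‖ ^ 2 ≤ 2 * ‖collisionShift e z‖ ^ 2 := by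
    rw [norm_collisionShift he]
    nlinarith [one_add_cos_angle z e, sq_nonneg ‖z‖, show 0 ≤ cos (angle z e) from hcos]
  set y := collisionShift e z
  have norm_rpow_le : ‖z‖ ^ γ ≤ 4 * (1 + ‖v‖ ^ 2) * (1 + ‖v - y‖ ^ 2) := by
    have hy := one_add_norm_sub_sq_le v (v - y)
    rw [sub_sub_cancel] at hy
    linarith [rpow_le_one_add_sq hγ₀ hγ₂ (norm_nonneg z)]
  have hg_y := hg₀ (v - y)
  have hb_z := hb.nonneg (cos (angle z e))
  rw [angle_collisionShift he hz, halfAngleKernel, indicator_of_mem (mem_Iic.mpr half_angle_le),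
    mul_div_cancel₀ _ two_ne_zero, ← ENNReal.ofReal_mul (by positivity)]
  apply ENNReal.ofReal_le_ofReal
  calc ‖z‖ ^ γ * b (cos (angle z e)) * g (v - y)
      ≤ (4 * (1 + ‖v‖ ^ 2) * (1 + ‖v - y‖ ^ 2)) * b (cos (angle z e)) * g (v - y) := by gcongr
    _ = _ := by ring

/-- An occupation number density: measurable with values in `[0, 1]`. -/
structure IsOccupation (g : R3 → ℝ) : Prop where
  measurable : Measurable g
  nonneg : ∀ w, 0 ≤ g w
  le_one : ∀ w, g w ≤ 1

lemma IsOccupation.one_sub (hg : IsOccupation g) : IsOccupation fun w => 1 - g w where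
  measurable := hg.measurable.const_sub 1
  nonneg w := sub_nonneg.mpr (hg.le_one w)
  le_one w := sub_le_self 1 (hg.nonneg w)

-- Collisions with `θ > π/2` become those with `θ ≤ π/2` when `σ` is replaced by `-σ`; on each half
-- one of the two factors of `g` is bounded by `1`.
lemma lintegral_gain_le_forward_add_forward (hb : GradCutoff b) (hg : IsOccupation g) (v : R3)
    (σ : S2) :
    ∫⁻ w, ENNReal.ofReal (Bker γ b v w σ * (g (vOut v w σ) * g (vOutStar v w σ))) ≤
      (∫⁻ z in {z | 0 ≤ cos (angle z (σ : R3))},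
        ENNReal.ofReal (‖z‖ ^ γ * b (cos (angle z σ)) * g (v - collisionShift (σ : R3) z))) +
      ∫⁻ z in {z | 0 ≤ cos (angle z (-(σ : R3)))},
        ENNReal.ofReal
          (‖z‖ ^ γ * b (cos (angle z (-(σ : R3)))) * g (v - collisionShift (-(σ : R3)) z)) := by
  have := hb.measurable
  have := hg.measurable
  have hshift (e : R3) : Measurable (collisionShift e) := (continuous_collisionShift e).measurable
  have hset (e : R3) : MeasurableSet {z : R3 | 0 ≤ cos (angle z e)} :=
    measurableSet_le (by fun_prop) (by fun_prop)
  simp_rw [Bker, cosAngle_eq_cos_angle, vOut_eq_sub_collisionShift, vOutStar_eq_sub_collisionShift]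
  rw [lintegral_sub_left_eq_self (fun z : R3 => ENNReal.ofReal (‖z‖ ^ γ * b (cos (angle z σ)) *
      (g (v - collisionShift (-(σ : R3)) z) * g (v - collisionShift (σ : R3) z)))) v,
    ← lintegral_indicator (hset _), ← lintegral_indicator (hset _),
    ← lintegral_add_left (Measurable.indicator (by fun_prop) (hset _))]
  refine lintegral_mono fun z => ?_
  have kernel_nonneg : 0 ≤ ‖z‖ ^ γ * b (cos (angle z σ)) :=
    mul_nonneg (by positivity) (hb.nonneg _)
  rcases le_total 0 (cos (angle z σ)) with hcos | hcos
  · rw [indicator_of_mem (show z ∈ {z | 0 ≤ cos (angle z (σ : R3))} from hcos)]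
    refine le_trans (ENNReal.ofReal_le_ofReal ?_) le_self_add
    exact mul_le_mul_of_nonneg_left (mul_le_of_le_one_left (hg.nonneg _) (hg.le_one _))
      kernel_nonneg
  · have hcos' : 0 ≤ cos (angle z (-(σ : R3))) := by
      rw [angle_neg_right, cos_pi_sub]; linarith
    rw [indicator_of_mem (show z ∈ {z | 0 ≤ cos (angle z (-(σ : R3)))} from hcos')]
    refine le_trans (ENNReal.ofReal_le_ofReal ?_) le_add_self
    rw [hb.cos_angle_neg_right]
    exact mul_le_mul_of_nonneg_left (mul_le_of_le_one_right (hg.nonneg _) (hg.le_one _))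
      kernel_nonneg

lemma lintegral_halfAngleKernel_average_le (hb : GradCutoff b) {W : R3 → ℝ≥0∞}
    (hW : Measurable W) :
    ∫⁻ σ : S2, (∫⁻ y, W y * (halfAngleKernel b (angle y σ) + halfAngleKernel b (angle (-y) σ)))
        ∂sphMeasure ≤ ENNReal.ofReal (2 * Cb b) * ∫⁻ y, W y := by
  have hK := measurable_halfAngleKernel hb
  rw [lintegral_lintegral_swap (by fun_prop), two_mul,
    ENNReal.ofReal_add hb.Cb_pos.le hb.Cb_pos.le, ← lintegral_const_mul _ hW]
  refine lintegral_mono fun y => ?_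
  simp only [mul_add]
  rw [lintegral_add_left (by fun_prop), lintegral_const_mul _ (by fun_prop),
    lintegral_const_mul _ (by fun_prop), ← mul_add, mul_comm]
  gcongr <;> exact lintegral_halfAngleKernel_le hb _

lemma lintegral_gain_le (hγ₀ : 0 ≤ γ) (hγ₂ : γ ≤ 2) (hb : GradCutoff b) (hg : IsOccupation g)
    (v : R3) :
    ∫⁻ p, ENNReal.ofReal (Bker γ b v p.1 p.2 * (g (vOut v p.1 p.2) * g (vOutStar v p.1 p.2)))
        ∂volume.prod sphMeasure ≤
      ENNReal.ofReal (64 * Cb b * (1 + ‖v‖ ^ 2)) * massEnergy g := by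
  have hC := hb.Cb_pos.le
  have hg_meas := hg.measurable
  have hK := measurable_halfAngleKernel hb
  set W : R3 → ℝ≥0∞ := fun y =>
    ENNReal.ofReal (4 * (1 + ‖v‖ ^ 2) * (g (v - y) * (1 + ‖v - y‖ ^ 2))) with hW
  have hW_meas : Measurable W := by fun_prop
  have fixed_σ (σ : S2) :
      ∫⁻ w, ENNReal.ofReal (Bker γ b v w σ * (g (vOut v w σ) * g (vOutStar v w σ))) ≤
        8 * ∫⁻ y, W y * (halfAngleKernel b (angle y σ) + halfAngleKernel b (angle (-y) σ)) := by
    simp_rw [mul_add]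
    rw [lintegral_add_left (by fun_prop), mul_add]
    have hneg (y : R3) : angle (-y) σ = angle y (-(σ : R3)) := by
      rw [angle_neg_left, angle_neg_right]
    simp_rw [hneg]
    exact (lintegral_gain_le_forward_add_forward hb hg v σ).trans (add_le_add
      (lintegral_forward_gain_le hγ₀ hγ₂ hb hg.nonneg v (norm_eq_of_mem_sphere σ))
      (lintegral_forward_gain_le hγ₀ hγ₂ hb hg.nonneg v (by simp)))
  rw [lintegral_prod_symm _ (by fun_prop (disch := exact hb))]
  refine (lintegral_mono fixed_σ).trans ?_
  rw [lintegral_const_mul' _ _ (by norm_num)]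
  refine (mul_le_mul_right (lintegral_halfAngleKernel_average_le hb hW_meas) 8).trans_eq ?_
  simp_rw [hW, ENNReal.ofReal_mul (show 0 ≤ 4 * (1 + ‖v‖ ^ 2) by positivity)]
  rw [lintegral_const_mul _ (by fun_prop),
    lintegral_sub_left_eq_self (fun w => ENNReal.ofReal (g w * (1 + ‖w‖ ^ 2))) v,
    show (8 : ℝ≥0∞) = ENNReal.ofReal 8 by norm_num, ← mul_assoc, ← mul_assoc,
    ← ENNReal.ofReal_mul (by positivity), ← ENNReal.ofReal_mul (by positivity), massEnergy]
  congr 2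
  ring

variable {h h' k k' : R3 → ℝ}

/-- The integrand `B(v - v_*, σ) h(v') h(v'_*) k(v_*)` of `Q1 γ b h h k v`. -/
def collisionDensity (γ : ℝ) (b : ℝ → ℝ) (h k : R3 → ℝ) (v : R3) (p : R3 × S2) : ℝ :=
  Bker γ b v p.1 p.2 * (h (vOut v p.1 p.2) * h (vOutStar v p.1 p.2) * k p.1)

/-- The collision integral `Q1 γ b h h k v`, as an integral over the product of the velocity space
and the sphere. -/
def collisionIntegral (γ : ℝ) (b : ℝ → ℝ) (h k : R3 → ℝ) (v : R3) : ℝ :=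
  ∫ p, collisionDensity γ b h k v p ∂volume.prod sphMeasure

lemma measurable_collisionDensity (hb : GradCutoff b) (hh : Measurable h) (hk : Measurable k)
    (v : R3) : Measurable (collisionDensity γ b h k v) := by
  unfold collisionDensity
  fun_prop (disch := exact hb)

lemma collisionDensity_nonneg (hb : GradCutoff b) (hh : ∀ w, 0 ≤ h w) (hk : ∀ w, 0 ≤ k w)
    (v : R3) (p : R3 × S2) : 0 ≤ collisionDensity γ b h k v p :=
  mul_nonneg (Bker_nonneg hb _ _ _) (mul_nonneg (mul_nonneg (hh _) (hh _)) (hk _))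

lemma collisionIntegral_nonneg (hb : GradCutoff b) (hh : ∀ w, 0 ≤ h w) (hk : ∀ w, 0 ≤ k w)
    (v : R3) : 0 ≤ collisionIntegral γ b h k v :=
  integral_nonneg (collisionDensity_nonneg hb hh hk v)

lemma ae_collision {P : R3 → Prop} (hP : ∀ᵐ w, P w) (v : R3) :
    ∀ᵐ p ∂volume.prod sphMeasure, P (vOut v p.1 p.2) ∧ P (vOutStar v p.1 p.2) ∧ P p.1 := by
  filter_upwards [(quasiMeasurePreserving_vOut v).ae hP, (quasiMeasurePreserving_vOutStar v).ae hP,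
    Measure.quasiMeasurePreserving_fst.ae hP] with p hp hp_star hp₁
  exact ⟨hp, hp_star, hp₁⟩

lemma collisionIntegral_congr_ae (hh : h =ᵐ[volume] h') (hk : k =ᵐ[volume] k') (v : R3) :
    collisionIntegral γ b h k v = collisionIntegral γ b h' k' v := by
  refine integral_congr_ae ?_
  filter_upwards [ae_collision hh v, ae_collision hk v] with p ⟨hp, hp_star, _⟩ ⟨_, _, hp₁⟩
  simp only [collisionDensity, hp, hp_star, hp₁]

lemma lintegral_collisionDensity_le (hγ₀ : 0 ≤ γ) (hγ₂ : γ ≤ 2) (hb : GradCutoff b)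
    (hh : IsOccupation h) (hk : IsOccupation k) (v : R3) :
    ∫⁻ p, ENNReal.ofReal (collisionDensity γ b h k v p) ∂volume.prod sphMeasure ≤
      ENNReal.ofReal (64 * Cb b * (1 + ‖v‖ ^ 2)) * min (massEnergy h) (massEnergy k) := by
  have hC := hb.Cb_pos.le
  have mono {F : R3 × S2 → ℝ}
      (hF : ∀ p, h (vOut v p.1 p.2) * h (vOutStar v p.1 p.2) * k p.1 ≤ F p) :
      ∫⁻ p, ENNReal.ofReal (collisionDensity γ b h k v p) ∂volume.prod sphMeasure ≤
        ∫⁻ p, ENNReal.ofReal (Bker γ b v p.1 p.2 * F p) ∂volume.prod sphMeasure :=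
    lintegral_mono fun p => ENNReal.ofReal_le_ofReal
      (mul_le_mul_of_nonneg_left (hF p) (Bker_nonneg hb _ _ _))
  have product_nonneg (p : R3 × S2) : 0 ≤ h (vOut v p.1 p.2) * h (vOutStar v p.1 p.2) :=
    mul_nonneg (hh.nonneg _) (hh.nonneg _)
  rcases min_choice (massEnergy h) (massEnergy k) with hmin | hmin <;> rw [hmin]
  · exact (mono fun p => mul_le_of_le_one_right (product_nonneg p) (hk.le_one _)).trans
      (lintegral_gain_le hγ₀ hγ₂ hb hh v)
  · refine (mono fun p => mul_le_of_le_one_left (hk.nonneg _)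
      (mul_le_one₀ (hh.le_one _) (hh.nonneg _) (hh.le_one _))).trans
      ((lintegral_Bker_mul_le hγ₀ hγ₂ hb hk.measurable hk.nonneg v).trans ?_)
    gcongr
    norm_num

lemma integrable_collisionDensity (hγ₀ : 0 ≤ γ) (hγ₂ : γ ≤ 2) (hb : GradCutoff b)
    (hh : IsOccupation h) (hk : IsOccupation k) (hfin : min (massEnergy h) (massEnergy k) < ∞)
    (v : R3) : Integrable (collisionDensity γ b h k v) (volume.prod sphMeasure) := by
  refine ⟨(measurable_collisionDensity hb hh.measurable hk.measurable v).aestronglyMeasurable, ?_⟩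
  rw [hasFiniteIntegral_iff_ofReal (.of_forall (collisionDensity_nonneg hb hh.nonneg hk.nonneg v))]
  exact (lintegral_collisionDensity_le hγ₀ hγ₂ hb hh hk v).trans_lt
    (ENNReal.mul_lt_top ENNReal.ofReal_lt_top hfin)

lemma collisionIntegral_le (hγ₀ : 0 ≤ γ) (hγ₂ : γ ≤ 2) (hb : GradCutoff b) (hh : IsOccupation h)
    (hk : IsOccupation k) {M : ℝ} (hM₀ : 0 ≤ M)
    (hM : min (massEnergy h) (massEnergy k) ≤ ENNReal.ofReal M) (v : R3) :
    collisionIntegral γ b h k v ≤ 64 * Cb b * (1 + ‖v‖ ^ 2) * M := by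
  have hC := hb.Cb_pos.le
  rw [collisionIntegral, integral_eq_lintegral_of_nonneg_ae
    (.of_forall (collisionDensity_nonneg hb hh.nonneg hk.nonneg v))
    (measurable_collisionDensity hb hh.measurable hk.measurable v).aestronglyMeasurable]
  refine ENNReal.toReal_le_of_le_ofReal (by positivity) ?_
  rw [ENNReal.ofReal_mul (by positivity)]
  exact (lintegral_collisionDensity_le hγ₀ hγ₂ hb hh hk v).trans (by gcongr)

lemma QFD_eq_gain_sub_loss (hγ₀ : 0 ≤ γ) (hγ₂ : γ ≤ 2) (hb : GradCutoff b) (hg : IsOccupation g)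
    (hfin : massEnergy g < ∞) (v : R3) :
    QFD γ b g v = collisionIntegral γ b g (fun w => 1 - g w) v * (1 - g v) -
      g v * collisionIntegral γ b (fun w => 1 - g w) g v := by
  have gain := (integrable_collisionDensity hγ₀ hγ₂ hb hg hg.one_sub (min_lt_of_left_lt hfin)
    v).mul_const (1 - g v)
  have loss := (integrable_collisionDensity hγ₀ hγ₂ hb hg.one_sub hg (min_lt_of_right_lt hfin)
    v).const_mul (g v)
  have integrand : (fun p : R3 × S2 => Bker γ b v p.1 p.2 *
      (g (vOut v p.1 p.2) * g (vOutStar v p.1 p.2) * (1 - g v) * (1 - g p.1)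
        - g v * g p.1 * (1 - g (vOut v p.1 p.2)) * (1 - g (vOutStar v p.1 p.2)))) = fun p =>
      collisionDensity γ b g (fun w => 1 - g w) v p * (1 - g v) -
        g v * collisionDensity γ b (fun w => 1 - g w) g v p := by
    ext p
    simp only [collisionDensity]
    ring
  rw [collisionIntegral, collisionIntegral, ← integral_mul_const, ← integral_const_mul,
    ← integral_sub gain loss, ← integrand, integral_prod _ (by rw [integrand]; exact gain.sub loss),
    QFD]

lemma measurable_collisionIntegral_time (hb : GradCutoff b) {h k : ℝ → R3 → ℝ}
    (hh : Measurable (Function.uncurry h)) (hk : Measurable (Function.uncurry k)) (v : R3) :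
    Measurable fun τ => collisionIntegral γ b (h τ) (k τ) v := by
  have density : Measurable fun q : ℝ × R3 × S2 => collisionDensity γ b (h q.1) (k q.1) v q.2 := by
    have hsnd : Measurable (Prod.snd : ℝ × R3 × S2 → R3 × S2) := measurable_snd
    have hB := (measurable_Bker (γ := γ) hb v).comp hsnd
    have hOut := (measurable_vOut v).comp hsnd
    have hOutStar := (measurable_vOutStar v).comp hsnd
    exact hB.mul (((hh.comp (measurable_fst.prodMk hOut)).mul
      (hh.comp (measurable_fst.prodMk hOutStar))).mul
      (hk.comp (measurable_fst.prodMk measurable_snd.fst)))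
  exact (density.stronglyMeasurable.integral_prod_right (ν := volume.prod sphMeasure)).measurable

lemma mul_measureReal_le_collisionIntegral (hb : GradCutoff b) (hh : ∀ w, 0 ≤ h w)
    (hk : ∀ w, 0 ≤ k w)
    (hint : Integrable (collisionDensity γ b h k v) (volume.prod sphMeasure)) {G : Set (R3 × S2)}
    (hG : MeasurableSet G) (hG_fin : (volume.prod sphMeasure) G ≠ ∞) {c : ℝ}
    (hc : ∀ᵐ p ∂volume.prod sphMeasure, p ∈ G → c ≤ collisionDensity γ b h k v p) :
    c * (volume.prod sphMeasure).real G ≤ collisionIntegral γ b h k v := by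
  calc c * (volume.prod sphMeasure).real G = ∫ _ in G, c ∂volume.prod sphMeasure := by
        rw [setIntegral_const, smul_eq_mul, mul_comm]
    _ ≤ ∫ p in G, collisionDensity γ b h k v p ∂volume.prod sphMeasure :=
        setIntegral_mono_on_ae (integrableOn_const hG_fin) hint.integrableOn hG hc
    _ ≤ collisionIntegral γ b h k v :=
        setIntegral_le_integral hint (.of_forall (collisionDensity_nonneg hb hh hk v))

end CollisionIntegrals

section JointMeasurability

open ProbabilityTheory

variable {T X : Type*} [MeasurableSpace T] [MeasurableSpace X]

/-- The measures with densities `u t`, as a kernel. -/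
def densityKernel (μ : Measure X) (u : T → X → ℝ≥0∞)
    (hu : ∀ A, MeasurableSet A → Measurable fun t => ∫⁻ x in A, u t x ∂μ) : Kernel T X where
  toFun t := μ.withDensity (u t)
  measurable' := Measure.measurable_of_measurable_coe _ fun A hA => by
    simpa only [withDensity_apply _ hA] using hu A hA

-- The jointly measurable version is the density of the kernel `t ↦ u t • μ`.
lemma exists_measurable_uncurry_ae_eq [MeasurableSpace.CountablyGenerated X] {μ : Measure X}
    [SigmaFinite μ] {u : T → X → ℝ≥0∞} (hu : ∀ t, Measurable (u t)) {C : ℝ≥0∞} (hC : C < ∞)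
    (hu_le : ∀ t, ∫⁻ x, u t x ∂μ ≤ C)
    (hu_set : ∀ A, MeasurableSet A → Measurable fun t => ∫⁻ x in A, u t x ∂μ) :
    ∃ G : T → X → ℝ≥0∞, Measurable (Function.uncurry G) ∧ ∀ t, G t =ᵐ[μ] u t := by
  set κ := densityKernel μ u hu_set
  have hκ_apply (t : T) : κ t = μ.withDensity (u t) := rfl
  have : IsFiniteKernel κ := ⟨C, hC, fun t => by
    simpa only [hκ_apply, withDensity_apply _ MeasurableSet.univ, Measure.restrict_univ]
      using hu_le t⟩
  set ν := μ.toFinite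
  refine ⟨fun t x => κ.rnDeriv (Kernel.const T ν) t x * ν.rnDeriv μ x, ?_, fun t => ?_⟩
  · exact (Kernel.measurable_rnDeriv κ _).mul
      ((Measure.measurable_rnDeriv ν μ).comp measurable_snd)
  · have hκν : κ t ≪ ν :=
      (withDensity_absolutelyContinuous μ (u t)).trans (absolutelyContinuous_toFinite μ)
    have hkernel : κ.rnDeriv (Kernel.const T ν) t =ᵐ[μ] (κ t).rnDeriv ν :=
      (absolutelyContinuous_toFinite μ).ae_le
        (Kernel.rnDeriv_eq_rnDeriv_measure (η := Kernel.const T ν) (a := t))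
    calc (fun x => κ.rnDeriv (Kernel.const T ν) t x * ν.rnDeriv μ x)
        =ᵐ[μ] (κ t).rnDeriv ν * ν.rnDeriv μ := hkernel.mul .rfl
      _ =ᵐ[μ] (κ t).rnDeriv μ := Measure.rnDeriv_mul_rnDeriv hκν
      _ =ᵐ[μ] u t := Measure.rnDeriv_withDensity μ (hu t)

end JointMeasurability

/-! ### Conserved quantities and time regularity of solutions -/

section Solutions

variable {γ : ℝ} {b : ℝ → ℝ} {f₀ : R3 → ℝ} {f : ℝ → R3 → ℝ}

lemma wnorm_two (g : R3 → ℝ) : wnorm 2 g = ∫ v, |g v| * (1 + ‖v‖ ^ 2) := by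
  simp [wnorm]

lemma MemL1s.integrable_mul {g : R3 → ℝ} (hg : MemL1s 2 g) :
    Integrable fun v => |g v| * (1 + ‖v‖ ^ 2) := by
  simpa [MemL1s] using hg

lemma MemL1s.integrable {g : R3 → ℝ} (hg : MemL1s 2 g) (hg_meas : Measurable g) :
    Integrable g := by
  refine hg.integrable_mul.mono' hg_meas.aestronglyMeasurable (.of_forall fun v => ?_)
  exact le_mul_of_one_le_right (abs_nonneg _) (by simp)

lemma IsFDSolution.isOccupation (hf : IsFDSolution γ b f₀ f) {t : ℝ} (ht : 0 ≤ t) :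
    IsOccupation (f t) :=
  ⟨hf.measurable t, hf.nonneg t ht, hf.le_one t ht⟩

lemma IsFDSolution.integrable (hf : IsFDSolution γ b f₀ f) {t : ℝ} (ht : 0 ≤ t) :
    Integrable (f t) :=
  (hf.memL12 t ht).integrable (hf.measurable t)

lemma abs_setIntegral_sub_le_wnorm {g h : R3 → ℝ} (hg : MemL1s 2 g) (hh : MemL1s 2 h)
    (hg_meas : Measurable g) (hh_meas : Measurable h) (A : Set R3) :
    |(∫ v in A, g v) - ∫ v in A, h v| ≤ wnorm 2 fun v => g v - h v := by
  have hsub : Integrable fun v => |g v - h v| * (1 + ‖v‖ ^ 2) := by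
    refine (hg.integrable_mul.add hh.integrable_mul).mono' (by fun_prop) (.of_forall fun v => ?_)
    rw [Real.norm_of_nonneg (by positivity), Pi.add_apply, ← add_mul]
    gcongr
    exact abs_sub _ _
  rw [← integral_sub (hg.integrable hg_meas).integrableOn (hh.integrable hh_meas).integrableOn,
    wnorm_two]
  calc |∫ v in A, g v - h v| ≤ ∫ v in A, |g v - h v| * (1 + ‖v‖ ^ 2) := by
        rw [← Real.norm_eq_abs]
        refine norm_integral_le_of_norm_le hsub.integrableOn (.of_forall fun v => ?_)
        exact le_mul_of_one_le_right (abs_nonneg _) (by simp)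
    _ ≤ ∫ v, |g v - h v| * (1 + ‖v‖ ^ 2) :=
        setIntegral_le_integral hsub (.of_forall fun v => by positivity)

lemma IsFDSolution.continuousOn_setIntegral (hf : IsFDSolution γ b f₀ f) (A : Set R3) :
    ContinuousOn (fun t => ∫ v in A, f t v) (Ici 0) := by
  refine Metric.continuousOn_iff.mpr fun t ht ε hε => ?_
  obtain ⟨δ, hδ, hclose⟩ := hf.contL12 t ht ε hε
  exact ⟨δ, hδ, fun s hs hst => (abs_setIntegral_sub_le_wnorm (hf.memL12 s hs) (hf.memL12 t ht)
    (hf.measurable s) (hf.measurable t) A).trans_lt (hclose s hs hst)⟩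

lemma IsFDSolution.exists_measurable_uncurry (hf : IsFDSolution γ b f₀ f) :
    ∃ G : ℝ → R3 → ℝ, Measurable (Function.uncurry G) ∧ ∀ t, 0 ≤ t → G t =ᵐ[volume] f t := by
  have setLIntegral_eq (t : ℝ) (A : Set R3) :
      ∫⁻ v in A, ENNReal.ofReal (f |t| v) = ENNReal.ofReal (∫ v in A, f |t| v) :=
    (ofReal_integral_eq_lintegral_ofReal (hf.integrable (abs_nonneg t)).integrableOn
      (.of_forall (hf.nonneg _ (abs_nonneg t)))).symm
  obtain ⟨G, hG, hG_eq⟩ := exists_measurable_uncurry_ae_eq (μ := (volume : Measure R3))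
    (u := fun t v => ENNReal.ofReal (f |t| v)) (C := ENNReal.ofReal (∫ v, f₀ v))
    (fun t => (hf.measurable _).ennreal_ofReal) ENNReal.ofReal_lt_top
    (fun t => by
      rw [← hf.mass _ (abs_nonneg t)]
      simpa only [Measure.restrict_univ] using (setLIntegral_eq t univ).le)
    (fun A _ => by
      simp_rw [setLIntegral_eq]
      exact ((hf.continuousOn_setIntegral A).comp_continuous continuous_abs
        abs_nonneg).measurable.ennreal_ofReal)
  refine ⟨fun t v => (G t v).toReal, hG.ennreal_toReal, fun t ht => ?_⟩
  filter_upwards [hG_eq t] with v hv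
  rw [hv, abs_of_nonneg ht, ENNReal.toReal_ofReal (hf.nonneg t ht v)]

lemma massEnergy_eq_ofReal_wnorm {g : R3 → ℝ} (hg : MemL1s 2 g) (hg₀ : ∀ v, 0 ≤ g v) :
    massEnergy g = ENNReal.ofReal (wnorm 2 g) := by
  rw [wnorm_two, ofReal_integral_eq_lintegral_ofReal hg.integrable_mul
    (.of_forall fun v => by positivity)]
  simp only [massEnergy, abs_of_nonneg (hg₀ _)]

lemma IsFDSolution.wnorm_eq (hf : IsFDSolution γ b f₀ f) {t : ℝ} (ht : 0 ≤ t) :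
    wnorm 2 (f t) = (∫ v, f₀ v) + ∫ v, f₀ v * ‖v‖ ^ 2 := by
  have hf_meas := hf.measurable t
  have henergy : Integrable fun v => f t v * ‖v‖ ^ 2 := by
    refine (hf.memL12 t ht).integrable_mul.mono' (by fun_prop) (.of_forall fun v => ?_)
    rw [norm_mul, norm_pow, norm_norm, Real.norm_eq_abs]
    gcongr
    simp
  rw [← hf.mass t ht, ← hf.energy t ht, ← integral_add (hf.integrable ht) henergy, wnorm_two]
  congr! 2 with v
  rw [abs_of_nonneg (hf.nonneg t ht v)]
  ring

lemma IsFDSolution.massEnergy_eq (hf : IsFDSolution γ b f₀ f) {t : ℝ} (ht : 0 ≤ t) :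
    massEnergy (f t) = ENNReal.ofReal (wnorm 2 (f 0)) := by
  rw [massEnergy_eq_ofReal_wnorm (hf.memL12 t ht) (hf.nonneg t ht), hf.wnorm_eq ht,
    hf.wnorm_eq le_rfl]

end Solutions

/-! ### The scalar mild equation -/

-- Past the last integrability time the primitive takes the junk value `0`, so it stays measurable.
lemma aestronglyMeasurable_primitive {E : Type*} [NormedAddCommGroup E] [NormedSpace ℝ E]
    (h : ℝ → E) {a T : ℝ} (haT : a ≤ T) :
    AEStronglyMeasurable (fun t => ∫ τ in a..t, h τ) (volume.restrict (Ioc a T)) := by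
  set S : Set ℝ := {t | t ∈ Icc a T ∧ IntervalIntegrable h volume a t}
  have ha_mem : a ∈ S := ⟨⟨le_rfl, haT⟩, .refl⟩
  have hS_bdd : BddAbove S := ⟨T, fun t ht => ht.1.2⟩
  set t₀ := sSup S
  have hat₀ : a ≤ t₀ := le_csSup hS_bdd ha_mem
  have ht₀T : t₀ ≤ T := csSup_le ⟨a, ha_mem⟩ fun t ht => ht.1.2
  have continuousOn_before : ContinuousOn (fun t => ∫ τ in a..t, h τ) (Ioo a t₀) := by
    intro t ht
    obtain ⟨t₁, ht₁, htt₁⟩ := exists_lt_of_lt_csSup ⟨a, ha_mem⟩ ht.2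
    have hint : IntegrableOn h (uIcc a t₁) := by
      rw [uIcc_of_le ht₁.1.1]
      exact (intervalIntegrable_iff_integrableOn_Icc_of_le ht₁.1.1).mp ht₁.2
    exact ((intervalIntegral.continuousOn_primitive_interval hint).continuousAt
      (by rw [uIcc_of_le ht₁.1.1]; exact Icc_mem_nhds ht.1 htt₁)).continuousWithinAt
  have zero_after : ∀ t ∈ Ioc t₀ T, ∫ τ in a..t, h τ = 0 := fun t ht =>
    intervalIntegral.integral_undef fun hint =>
      ht.1.not_ge (le_csSup hS_bdd ⟨⟨hat₀.trans ht.1.le, ht.2⟩, hint⟩)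
  rw [← Ioc_union_Ioc_eq_Ioc hat₀ ht₀T, aestronglyMeasurable_union_iff]
  constructor
  · rw [← Measure.restrict_congr_set Ioo_ae_eq_Ioc]
    exact continuousOn_before.aestronglyMeasurable measurableSet_Ioo
  · refine (aestronglyMeasurable_const (b := (0 : E))).congr ?_
    filter_upwards [ae_restrict_mem measurableSet_Ioc] with t ht
    exact (zero_after t ht).symm

lemma intervalIntegrable_of_mild_affine {y p q h : ℝ → ℝ} {y₀ C T : ℝ} (hT : 0 ≤ T)
    (hp : IntervalIntegrable p volume 0 T) (hq : IntervalIntegrable q volume 0 T)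
    (hy : ∀ t ∈ Ioc 0 T, |y t| ≤ C) (hh : ∀ t ∈ Ioc 0 T, h t = p t - q t * y t)
    (hmild : ∀ t ∈ Ioc 0 T, y t = y₀ + ∫ τ in (0 : ℝ)..t, h τ) :
    IntervalIntegrable h volume 0 T := by
  rw [intervalIntegrable_iff_integrableOn_Ioc_of_le hT] at hp hq ⊢
  have hy_meas : AEStronglyMeasurable y (volume.restrict (Ioc 0 T)) := by
    refine ((aestronglyMeasurable_primitive h hT).const_add y₀).congr ?_
    filter_upwards [ae_restrict_mem measurableSet_Ioc] with t ht
    exact (hmild t ht).symm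
  have hqy : IntegrableOn (fun t => q t * y t) (Ioc 0 T) := by
    refine hq.mul_bdd (c := C) hy_meas ?_
    filter_upwards [ae_restrict_mem measurableSet_Ioc] with t ht
    exact hy t ht
  exact (hp.sub hqy).congr_fun (fun t ht => (hh t ht).symm) measurableSet_Ioc

lemma nonneg_of_neg_mul_integral_le_sub {d : ℝ → ℝ} {s t K : ℝ} (hK : 0 ≤ K) (hst : s ≤ t)
    (hd : ContinuousOn d (Icc s t)) (hs : 0 ≤ d s)
    (hincr : ∀ x z, s ≤ x → x ≤ z → z ≤ t → -(K * ∫ τ in x..z, d τ) ≤ d z - d x) :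
    0 ≤ d t := by
  have hcompact : IsCompact (Icc s t ∩ d ⁻¹' Ici 0) :=
    isCompact_Icc.of_isClosed_subset (hd.preimage_isClosed_of_isClosed isClosed_Icc isClosed_Ici)
      inter_subset_left
  obtain ⟨x, ⟨hx, hdx⟩, hlast⟩ := hcompact.exists_isGreatest ⟨s, ⟨le_rfl, hst⟩, hs⟩
  have hneg : ∫ τ in x..t, d τ ≤ 0 := by
    rw [intervalIntegral.integral_of_le hx.2]
    refine setIntegral_nonpos measurableSet_Ioc fun τ hτ => ?_
    by_contra! hdτ
    exact hτ.1.not_ge (hlast ⟨⟨hx.1.trans hτ.1.le, hτ.2⟩, hdτ.le⟩)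
  have hincr_xt := hincr x t hx.1 hx.2 le_rfl
  have hdx : 0 ≤ d x := hdx
  have := mul_nonpos_of_nonneg_of_nonpos hK hneg
  linarith

lemma exp_neg_mul_le_of_integral_le_sub {y : ℝ → ℝ} {s t K α : ℝ} (hst : s ≤ t) (hα : 0 ≤ α)
    (hK : 0 ≤ K) (hy : ContinuousOn y (Icc s t))
    (hincr : ∀ x z, s ≤ x → x ≤ z → z ≤ t → ∫ τ in x..z, (α - K * y τ) ≤ y z - y x) :
    exp (-(K * (t - s))) * (y s + α * (t - s)) ≤ y t := by
  set ψ : ℝ → ℝ := fun τ => exp (-(K * (τ - s))) * (y s + α * (τ - s)) with hψ_def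
  have hψ : Continuous ψ := by rw [hψ_def]; fun_prop
  have hψ_deriv (τ : ℝ) : HasDerivAt ψ (α * exp (-(K * (τ - s))) - K * ψ τ) τ := by
    have hexp : HasDerivAt (fun τ => exp (-(K * (τ - s)))) (exp (-(K * (τ - s))) * (-(K * 1))) τ :=
      (((hasDerivAt_id τ).sub_const s).const_mul K).neg.exp
    have haff : HasDerivAt (fun τ => y s + α * (τ - s)) (α * 1) τ :=
      (((hasDerivAt_id τ).sub_const s).const_mul α).const_add (y s)
    exact (hexp.mul haff).congr_deriv (by simp only [hψ_def]; ring)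
  have hψ_incr (x z : ℝ) (hsx : s ≤ x) (hxz : x ≤ z) :
      ψ z - ψ x ≤ ∫ τ in x..z, (α - K * ψ τ) := by
    rw [← intervalIntegral.integral_eq_sub_of_hasDerivAt (fun τ _ => hψ_deriv τ)
      (Continuous.intervalIntegrable (by fun_prop) _ _)]
    refine intervalIntegral.integral_mono_on hxz (Continuous.intervalIntegrable (by fun_prop) _ _)
      (Continuous.intervalIntegrable (by fun_prop) _ _) fun τ hτ => ?_
    have hexp : exp (-(K * (τ - s))) ≤ 1 :=
      exp_le_one_iff.mpr (neg_nonpos.mpr (mul_nonneg hK (by linarith [hτ.1])))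
    linarith [mul_le_of_le_one_right hα hexp]
  suffices 0 ≤ y t - ψ t by linarith
  refine nonneg_of_neg_mul_integral_le_sub (d := fun τ => y τ - ψ τ) hK hst
    (hy.sub hψ.continuousOn) (by simp [hψ_def]) fun x z hsx hxz hzt => ?_
  have hyi : IntervalIntegrable y volume x z :=
    (hy.mono (by rw [uIcc_of_le hxz]; exact Icc_subset_Icc hsx hzt)).intervalIntegrable
  have hψi : IntervalIntegrable ψ volume x z := hψ.intervalIntegrable x z
  have hdiff : (∫ τ in x..z, (α - K * y τ)) - ∫ τ in x..z, (α - K * ψ τ)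
      = -(K * ∫ τ in x..z, (y τ - ψ τ)) := by
    rw [← intervalIntegral.integral_sub (intervalIntegrable_const.sub (hyi.const_mul K))
      (intervalIntegrable_const.sub (hψi.const_mul K)), ← intervalIntegral.integral_const_mul,
      ← intervalIntegral.integral_neg]
    congr! 2
    ring
  linarith [hincr x z hsx hxz hzt, hψ_incr x z hsx hxz]

/-! ### Duhamel's inequality for the two populations -/

/-- The two populations governed by the equation: the particles `f` (`true`) and the holes
`1 - f` (`false`). The gain of either one is driven by the collisions of its own members with the
other one as target. -/
def population (f : ℝ → R3 → ℝ) : Bool → ℝ → R3 → ℝ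
  | true => f
  | false => fun t => 1 - f t

/-- The constant by which the gain and loss frequencies at velocity `v` are bounded as long as one
of the two populations has the mass and the energy of `g`. -/
def frequencyBound (b : ℝ → ℝ) (g : R3 → ℝ) (v : R3) : ℝ :=
  64 * Cb b * (1 + ‖v‖ ^ 2) * wnorm 2 g

/-- Duhamel's lower bound at velocity `v`, for both populations: a gain frequency which is at least
`α` during `[s, t]` produces the density `α (t - s)`, up to the damping by the loss frequency. -/
def HasDuhamelBound (γ : ℝ) (b : ℝ → ℝ) (f : ℝ → R3 → ℝ) (v : R3) : Prop :=
  ∀ (i : Bool) ⦃s t α : ℝ⦄, 0 ≤ s → s ≤ t → 0 ≤ α →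
    (∀ τ ∈ Icc s t, α ≤ collisionIntegral γ b (population f i τ) (population f (!i) τ) v) →
    exp (-(2 * frequencyBound b (f 0) v * (t - s))) * (population f i s v + α * (t - s))
      ≤ population f i t v

section Duhamel

variable {γ : ℝ} {b : ℝ → ℝ} {f₀ : R3 → ℝ} {f : ℝ → R3 → ℝ} {v : R3}

lemma IsFDSolution.isOccupation_population (hf : IsFDSolution γ b f₀ f) (i : Bool) {t : ℝ}
    (ht : 0 ≤ t) : IsOccupation (population f i t) := by
  cases i
  exacts [(hf.isOccupation ht).one_sub, hf.isOccupation ht]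

lemma wnorm_nonneg (s : ℝ) (g : R3 → ℝ) : 0 ≤ wnorm s g :=
  integral_nonneg fun v => by positivity

lemma IsFDSolution.min_massEnergy_population_le (hf : IsFDSolution γ b f₀ f) (i : Bool) {t : ℝ}
    (ht : 0 ≤ t) : min (massEnergy (population f i t)) (massEnergy (population f (!i) t))
      ≤ ENNReal.ofReal (wnorm 2 (f 0)) := by
  cases i
  exacts [(min_le_right _ _).trans (hf.massEnergy_eq ht).le,
    (min_le_left _ _).trans (hf.massEnergy_eq ht).le]

lemma IsFDSolution.collisionIntegral_population_le (hf : IsFDSolution γ b f₀ f) (hγ₀ : 0 ≤ γ)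
    (hγ₂ : γ ≤ 2) (hb : GradCutoff b) (i : Bool) {t : ℝ} (ht : 0 ≤ t) (v : R3) :
    collisionIntegral γ b (population f i t) (population f (!i) t) v
      ≤ frequencyBound b (f 0) v :=
  collisionIntegral_le hγ₀ hγ₂ hb (hf.isOccupation_population i ht)
    (hf.isOccupation_population _ ht) (wnorm_nonneg 2 _) (hf.min_massEnergy_population_le i ht) v

lemma IsFDSolution.intervalIntegrable_collisionIntegral (hf : IsFDSolution γ b f₀ f)
    (hγ₀ : 0 ≤ γ) (hγ₂ : γ ≤ 2) (hb : GradCutoff b) (i : Bool) {T : ℝ} (hT : 0 ≤ T) (v : R3) :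
    IntervalIntegrable
      (fun τ => collisionIntegral γ b (population f i τ) (population f (!i) τ) v) volume 0 T := by
  obtain ⟨G, hG, hG_eq⟩ := hf.exists_measurable_uncurry
  have hG_pop (j : Bool) : Measurable (Function.uncurry (population G j)) := by
    cases j
    exacts [measurable_const.sub hG, hG]
  have hG_pop_eq (j : Bool) (t : ℝ) (ht : 0 ≤ t) :
      population G j t =ᵐ[volume] population f j t := by
    cases j
    exacts [(hG_eq t ht).fun_comp (1 - ·), hG_eq t ht]
  rw [intervalIntegrable_iff_integrableOn_Ioc_of_le hT]
  refine Integrable.of_bound (C := frequencyBound b (f 0) v) ?_ ?_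
  · refine (measurable_collisionIntegral_time (γ := γ) hb (hG_pop i) (hG_pop !i)
      v).aestronglyMeasurable.congr ?_
    filter_upwards [ae_restrict_mem measurableSet_Ioc] with t ht
    exact collisionIntegral_congr_ae (hG_pop_eq i t ht.1.le) (hG_pop_eq (!i) t ht.1.le) v
  · filter_upwards [ae_restrict_mem measurableSet_Ioc] with t ht
    rw [Real.norm_of_nonneg (collisionIntegral_nonneg hb
      (hf.isOccupation_population i ht.1.le).nonneg
      (hf.isOccupation_population _ ht.1.le).nonneg v)]
    exact hf.collisionIntegral_population_le hγ₀ hγ₂ hb i ht.1.le v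

lemma IsFDSolution.QFD_eq (hf : IsFDSolution γ b f₀ f) (hγ₀ : 0 ≤ γ) (hγ₂ : γ ≤ 2)
    (hb : GradCutoff b) {t : ℝ} (ht : 0 ≤ t) (v : R3) :
    QFD γ b (f t) v = collisionIntegral γ b (f t) (1 - f t) v * (1 - f t v)
      - f t v * collisionIntegral γ b (1 - f t) (f t) v :=
  QFD_eq_gain_sub_loss hγ₀ hγ₂ hb (hf.isOccupation ht)
    ((hf.massEnergy_eq ht).trans_lt ENNReal.ofReal_lt_top) v

lemma IsFDSolution.intervalIntegrable_QFD (hf : IsFDSolution γ b f₀ f)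
    (hv : ∀ t, 0 ≤ t → f t v = f₀ v + ∫ τ in (0 : ℝ)..t, QFD γ b (f τ) v) (hγ₀ : 0 ≤ γ)
    (hγ₂ : γ ≤ 2) (hb : GradCutoff b) {T : ℝ} (hT : 0 ≤ T) :
    IntervalIntegrable (fun τ => QFD γ b (f τ) v) volume 0 T := by
  have hgain := hf.intervalIntegrable_collisionIntegral hγ₀ hγ₂ hb true hT v
  have hloss := hf.intervalIntegrable_collisionIntegral hγ₀ hγ₂ hb false hT v
  refine intervalIntegrable_of_mild_affine (C := 1) hT hgain (hgain.add hloss) (fun t ht => ?_)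
    (fun t ht => ?_) fun t ht => hv t ht.1.le
  · rw [abs_of_nonneg (hf.nonneg t ht.1.le v)]
    exact hf.le_one t ht.1.le v
  · rw [hf.QFD_eq hγ₀ hγ₂ hb ht.1.le]
    simp only [population, Bool.not_true, Bool.not_false]
    ring

lemma IsFDSolution.population_sub_eq_integral (hf : IsFDSolution γ b f₀ f)
    (hv : ∀ t, 0 ≤ t → f t v = f₀ v + ∫ τ in (0 : ℝ)..t, QFD γ b (f τ) v) (hγ₀ : 0 ≤ γ)
    (hγ₂ : γ ≤ 2) (hb : GradCutoff b) (i : Bool) {s t : ℝ} (hs : 0 ≤ s) (ht : 0 ≤ t) :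
    population f i t v - population f i s v
      = ∫ τ in s..t, (if i then 1 else -1) * QFD γ b (f τ) v := by
  have hsub : f t v - f s v = ∫ τ in s..t, QFD γ b (f τ) v := by
    rw [hv t ht, hv s hs, ← intervalIntegral.integral_interval_sub_left
      (hf.intervalIntegrable_QFD hv hγ₀ hγ₂ hb ht) (hf.intervalIntegrable_QFD hv hγ₀ hγ₂ hb hs)]
    ring
  rw [intervalIntegral.integral_const_mul, ← hsub]
  cases i <;> simp [population]

lemma IsFDSolution.continuousOn_population (hf : IsFDSolution γ b f₀ f)
    (hv : ∀ t, 0 ≤ t → f t v = f₀ v + ∫ τ in (0 : ℝ)..t, QFD γ b (f τ) v) (hγ₀ : 0 ≤ γ)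
    (hγ₂ : γ ≤ 2) (hb : GradCutoff b) (i : Bool) (T : ℝ) :
    ContinuousOn (fun t => population f i t v) (Icc 0 T) := by
  rcases lt_or_ge T 0 with hT | hT
  · simp [Icc_eq_empty hT.not_ge]
  have hint : IntegrableOn (fun τ => (if i then 1 else -1) * QFD γ b (f τ) v) (uIcc 0 T) := by
    rw [uIcc_of_le hT, ← intervalIntegrable_iff_integrableOn_Icc_of_le hT]
    exact (hf.intervalIntegrable_QFD hv hγ₀ hγ₂ hb hT).const_mul _
  have hprim := intervalIntegral.continuousOn_primitive_interval hint
  rw [uIcc_of_le hT] at hprim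
  refine (hprim.const_add (population f i 0 v)).congr fun t ht => ?_
  linarith [hf.population_sub_eq_integral hv hγ₀ hγ₂ hb i le_rfl ht.1]

lemma IsFDSolution.sub_two_mul_frequencyBound_mul_le (hf : IsFDSolution γ b f₀ f) (hγ₀ : 0 ≤ γ)
    (hγ₂ : γ ≤ 2) (hb : GradCutoff b) (i : Bool) {t α : ℝ} (ht : 0 ≤ t)
    (hα : α ≤ collisionIntegral γ b (population f i t) (population f (!i) t) v) :
    α - 2 * frequencyBound b (f 0) v * population f i t v ≤
      (if i then 1 else -1) * QFD γ b (f t) v := by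
  have hα_le := hα.trans (hf.collisionIntegral_population_le hγ₀ hγ₂ hb i ht v)
  have hl := hf.collisionIntegral_population_le hγ₀ hγ₂ hb (!i) ht v
  have hy₀ := (hf.isOccupation_population i ht).nonneg v
  have hy₁ := (hf.isOccupation_population i ht).le_one v
  rw [Bool.not_not] at hl
  calc α - 2 * frequencyBound b (f 0) v * population f i t v
      ≤ α * (1 - population f i t v) - population f i t v * frequencyBound b (f 0) v := by
        linarith [mul_le_mul_of_nonneg_right hα_le hy₀]
    _ ≤ collisionIntegral γ b (population f i t) (population f (!i) t) v
          * (1 - population f i t v)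
        - population f i t v * collisionIntegral γ b (population f (!i) t) (population f i t) v :=
      sub_le_sub (mul_le_mul_of_nonneg_right hα (sub_nonneg.mpr hy₁))
        (mul_le_mul_of_nonneg_left hl hy₀)
    _ = (if i then 1 else -1) * QFD γ b (f t) v := by
      rw [hf.QFD_eq hγ₀ hγ₂ hb ht]
      cases i
      all_goals simp only [population, Pi.sub_apply, Pi.one_apply, Bool.not_true, Bool.not_false,
        if_true, Bool.false_eq_true, if_false]
      all_goals ring

lemma IsFDSolution.hasDuhamelBound (hf : IsFDSolution γ b f₀ f)
    (hv : ∀ t, 0 ≤ t → f t v = f₀ v + ∫ τ in (0 : ℝ)..t, QFD γ b (f τ) v) (hγ₀ : 0 ≤ γ)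
    (hγ₂ : γ ≤ 2) (hb : GradCutoff b) : HasDuhamelBound γ b f v := by
  intro i s t α hs hst hα hgain
  have hα_le : α ≤ frequencyBound b (f 0) v :=
    (hgain s ⟨le_rfl, hst⟩).trans
      (hf.collisionIntegral_population_le hγ₀ hγ₂ hb i hs v)
  have hy : ContinuousOn (fun t => population f i t v) (Icc s t) :=
    (hf.continuousOn_population hv hγ₀ hγ₂ hb i t).mono (Icc_subset_Icc_left hs)
  refine exp_neg_mul_le_of_integral_le_sub (y := fun t => population f i t v) hst hα
    (by linarith) hy fun x z hsx hxz hzt => ?_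
  have hx : 0 ≤ x := hs.trans hsx
  rw [hf.population_sub_eq_integral hv hγ₀ hγ₂ hb i hx (hx.trans hxz)]
  have hxz_sub : uIcc x z ⊆ Icc s t := by
    rw [uIcc_of_le hxz]
    exact Icc_subset_Icc hsx hzt
  refine intervalIntegral.integral_mono_on hxz
    (intervalIntegrable_const.sub ((hy.mono hxz_sub).intervalIntegrable.const_mul _))
    (((hf.intervalIntegrable_QFD hv hγ₀ hγ₂ hb hx).symm.trans
      (hf.intervalIntegrable_QFD hv hγ₀ hγ₂ hb (hx.trans hxz))).const_mul _) fun τ hτ => ?_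
  exact hf.sub_two_mul_frequencyBound_mul_le hγ₀ hγ₂ hb i (hx.trans hτ.1)
    (hgain τ ⟨hsx.trans hτ.1, hτ.2.trans hzt⟩)

lemma IsFDSolution.ae_hasDuhamelBound (hf : IsFDSolution γ b f₀ f) (hγ₀ : 0 ≤ γ) (hγ₂ : γ ≤ 2)
    (hb : GradCutoff b) : ∀ᵐ v, HasDuhamelBound γ b f v := by
  obtain ⟨Z, hZ, hmild⟩ := hf.mild
  filter_upwards [measure_eq_zero_iff_ae_notMem.mp hZ] with v hv
  exact hf.hasDuhamelBound (fun t ht => hmild t ht v hv) hγ₀ hγ₂ hb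

lemma IsFDSolution.ae_eq_initial (hf : IsFDSolution γ b f₀ f) : f 0 =ᵐ[volume] f₀ := by
  obtain ⟨Z, hZ, hmild⟩ := hf.mild
  filter_upwards [measure_eq_zero_iff_ae_notMem.mp hZ] with v hv
  simpa using hmild 0 le_rfl v hv

end Duhamel

/-! ### Gain from nearly orthogonal collisions -/

section NearlyOrthogonal

variable {E : Type*} [NormedAddCommGroup E] [InnerProductSpace ℝ E] {v v₀ w e : E} {r ε : ℝ}

lemma norm_inv_two_smul_sub_sq (v w : E) (he : ‖e‖ = 1) :
    ‖(2⁻¹ : ℝ) • (v + w) - (‖v - w‖ / 2) • e‖ ^ 2 =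
      (‖v‖ ^ 2 + ‖w‖ ^ 2) / 2 - ‖v - w‖ * ⟪v + w, e⟫ / 2 := by
  have parallelogram := parallelogram_law_with_norm ℝ v w
  rw [norm_sub_sq_real, norm_smul, norm_smul, real_inner_smul_left, real_inner_smul_right, he,
    norm_inv, Real.norm_ofNat, Real.norm_of_nonneg (by positivity)]
  linarith

lemma norm_inv_two_smul_sub_lt {a u : E} (he : ‖e‖ = 1) (hr : 0 < r) (hε₀ : 0 < ε) (hε₁ : ε ≤ 1)
    (ha : ‖a‖ < √2 * (1 - ε) * r) (hu : ‖u‖ < ε / 8 * r)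
    (hcos : -(ε / 8) ≤ cos (angle (a - u) e)) :
    ‖(2⁻¹ : ℝ) • (a + u) - (‖a - u‖ / 2) • e‖ < r := by
  have hsqrt : √2 ≤ 3 / 2 := Real.sqrt_le_iff.mpr (by norm_num)
  have a_sq : ‖a‖ ^ 2 ≤ 2 * (1 - ε) ^ 2 * r ^ 2 := by
    calc ‖a‖ ^ 2 ≤ (√2 * (1 - ε) * r) ^ 2 := by gcongr
      _ = 2 * (1 - ε) ^ 2 * r ^ 2 := by rw [mul_pow, mul_pow, Real.sq_sqrt (by norm_num)]
  have u_sq : ‖u‖ ^ 2 ≤ (ε / 8 * r) ^ 2 := by gcongr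
  have a_sub_u : ‖a - u‖ ≤ 2 * r := by
    have : √2 * (1 - ε) * r ≤ 3 / 2 * r := by
      gcongr
      nlinarith
    nlinarith [norm_sub_le a u]
  have inner_ge : -(ε / 2 * r) ≤ ⟪a + u, e⟫ := by
    have inner_sub : ⟪a - u, e⟫ = cos (angle (a - u) e) * ‖a - u‖ := by
      rw [← cos_angle_mul_norm_mul_norm, he, mul_one]
    have inner_u : -‖u‖ ≤ ⟪u, e⟫ := by
      simpa [he] using neg_le_of_abs_le (abs_real_inner_le_norm u e)
    rw [show a + u = (a - u) + (2 : ℝ) • u by module, inner_add_left, real_inner_smul_left,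
      inner_sub]
    nlinarith [norm_nonneg (a - u)]
  refine lt_of_pow_lt_pow_left₀ 2 hr.le ?_
  rw [norm_inv_two_smul_sub_sq a u he]
  have product : -(ε * r ^ 2) ≤ ‖a - u‖ * ⟪a + u, e⟫ := by
    calc -(ε * r ^ 2) = 2 * r * -(ε / 2 * r) := by ring
      _ ≤ ‖a - u‖ * -(ε / 2 * r) :=
          mul_le_mul_of_nonpos_right a_sub_u (neg_nonpos.mpr (by positivity))
      _ ≤ ‖a - u‖ * ⟪a + u, e⟫ := by gcongr
  have small : (1 - ε) ^ 2 + (ε / 8) ^ 2 / 2 + ε / 2 < 1 := by nlinarith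
  nlinarith [mul_lt_mul_of_pos_right small (pow_pos hr 2)]

lemma sub_collisionShift_mem_ball (he : ‖e‖ = 1) (hr : 0 < r) (hε₀ : 0 < ε) (hε₁ : ε ≤ 1)
    (hv : ‖v - v₀‖ < √2 * (1 - ε) * r) (hw : w ∈ Metric.ball v₀ (ε / 8 * r))
    (hcos : -(ε / 8) ≤ cos (angle (v - w) e)) :
    v - collisionShift e (v - w) ∈ Metric.ball v₀ r := by
  rw [mem_ball_iff_norm] at hw ⊢
  rw [← sub_sub_sub_cancel_right v w v₀] at hcos
  have relative : v - collisionShift e (v - w) - v₀ = (2⁻¹ : ℝ) • ((v - v₀) + (w - v₀)) -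
      (‖(v - v₀) - (w - v₀)‖ / 2) • e := by
    rw [sub_sub_sub_cancel_right, collisionShift]
    module
  rw [relative]
  exact norm_inv_two_smul_sub_lt he hr hε₀ hε₁ hv hw hcos

lemma norm_collisionShift_le (he : ‖e‖ = 1) (z : E) : ‖collisionShift e z‖ ≤ ‖z‖ := by
  rw [norm_collisionShift he]
  exact mul_le_of_le_one_right (norm_nonneg z) (cos_le_one _)

lemma sub_collisionShift_mem_closedBall (he : ‖e‖ = 1) {s : ℝ} (hv : ‖v - v₀‖ ≤ s)
    (hw : w ∈ Metric.closedBall v₀ r) :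
    v - collisionShift e (v - w) ∈ Metric.closedBall v₀ (2 * s + r) := by
  rw [mem_closedBall_iff_norm] at hw ⊢
  rw [sub_right_comm]
  have relative : ‖v - w‖ ≤ ‖v - v₀‖ + ‖w - v₀‖ := by
    simpa using norm_sub_le (v - v₀) (w - v₀)
  linarith [norm_sub_le (v - v₀) (collisionShift e (v - w)), norm_collisionShift_le he (v - w)]

lemma volume_sub_collisionShift_mem_le [FiniteDimensional ℝ E] [MeasurableSpace E] [BorelSpace E]
    [Nontrivial E] (he : ‖e‖ = 1) {κ : ℝ} (hκ : -1 < κ) {N : Set E} (hN : MeasurableSet N) (v : E) :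
    volume {w | κ ≤ cos (angle (v - w) e) ∧ v - collisionShift e (v - w) ∈ N} ≤
      ENNReal.ofReal (2 ^ finrank ℝ E / (1 + κ)) * volume N := by
  have sub_left := Measure.measurePreserving_sub_left (volume : Measure E) v
  have hN' : MeasurableSet ((v - ·) ⁻¹' N) := sub_left.measurable hN
  have hcone : MeasurableSet {z : E | κ ≤ cos (angle z e)} :=
    measurableSet_le measurable_const (by fun_prop)
  have hshift := (continuous_collisionShift e).measurable hN'
  have bound := lintegral_comp_collisionShift_le he hκ (((v - ·) ⁻¹' N).indicator 1)
  rw [lintegral_indicator_one hN', sub_left.measure_preimage hN.nullMeasurableSet] at bound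
  refine le_trans (le_of_eq ?_) bound
  change _ = ∫⁻ z in _, (collisionShift e ⁻¹' ((v - ·) ⁻¹' N)).indicator 1 z
  rw [lintegral_indicator_one hshift, Measure.restrict_apply hshift, inter_comm,
    ← sub_left.measure_preimage (hcone.inter hshift).nullMeasurableSet]
  rfl

end NearlyOrthogonal

section NearlyOrthogonalGain

variable {γ c_b c d ρ κ : ℝ} {b : ℝ → ℝ} {h k : R3 → ℝ} {v v₀ : R3}

lemma le_kernel_of_abs_le_half (hH2 : ∀ θ ∈ Icc (π / 4) (3 * π / 4), c_b ≤ b (cos θ)) {x : ℝ}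
    (hx : |x| ≤ 1 / 2) : c_b ≤ b x := by
  obtain ⟨hx₁, hx₂⟩ := abs_le.mp hx
  have hsqrt : 1 / 2 ≤ √2 / 2 := by
    gcongr
    exact Real.one_le_sqrt.mpr one_le_two
  have cos_three : cos (3 * π / 4) = -(√2 / 2) := by
    rw [← cos_pi_div_four, ← cos_pi_sub]
    ring_nf
  have lower : π / 4 ≤ arccos x := by
    rw [← arccos_cos (by positivity) (by linarith [pi_pos] : π / 4 ≤ π), cos_pi_div_four]
    exact arccos_le_arccos (by linarith)
  have upper : arccos x ≤ 3 * π / 4 := by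
    rw [← arccos_cos (by positivity) (by linarith [pi_pos] : 3 * π / 4 ≤ π), cos_three]
    exact arccos_le_arccos (by linarith)
  simpa only [cos_arccos (by linarith : -1 ≤ x) (by linarith)] using hH2 _ ⟨lower, upper⟩

lemma vOut_vOutStar_of_forall_collisionShift {P : R3 → Prop} {w : R3}
    (hP : ∀ e : R3, ‖e‖ = 1 → |cos (angle (v - w) e)| ≤ κ → P (v - collisionShift e (v - w)))
    {σ : S2} (hσ : |cos (angle (v - w) σ)| ≤ κ) : P (vOut v w σ) ∧ P (vOutStar v w σ) := by
  rw [vOut_eq_sub_collisionShift, vOutStar_eq_sub_collisionShift]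
  refine ⟨hP _ (by simp) ?_, hP _ (by simp) hσ⟩
  rwa [angle_neg_right, cos_pi_sub, abs_neg]

/-- The collisions of a particle of velocity `v` with partners in `W` whose deviation angle is
nearly right, `|cos θ| ≤ κ`; there the hypothesis (H2) bounds the kernel from below. -/
def nearOrthogonal (v : R3) (W : Set R3) (κ : ℝ) : Set (R3 × S2) :=
  {p | p.1 ∈ W ∧ |cos (angle (v - p.1) (p.2 : R3))| ≤ κ}

lemma measurableSet_nearOrthogonal (v : R3) {W : Set R3} (hW : MeasurableSet W) (κ : ℝ) :
    MeasurableSet (nearOrthogonal v W κ) := by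
  have hcos : Measurable fun p : R3 × S2 => |cos (angle (v - p.1) (p.2 : R3))| := by fun_prop
  exact (measurable_fst hW).inter (measurableSet_le hcos measurable_const)

lemma volume_prod_sphMeasure_ne_top {W : Set R3} (hW : volume W ≠ ∞) {G : Set (R3 × S2)}
    (hG : ∀ p ∈ G, p.1 ∈ W) : (volume.prod sphMeasure) G ≠ ∞ := by
  have subset : G ⊆ W ×ˢ univ := fun p hp => ⟨hG p hp, mem_univ p.2⟩
  refine measure_ne_top_of_subset subset ?_
  rw [Measure.prod_prod]
  exact ENNReal.mul_ne_top hW (measure_ne_top _ _)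

lemma mul_le_measureReal_nearOrthogonal {W : Set R3} (hW : MeasurableSet W) (hW_fin : volume W ≠ ∞)
    (hvW : v ∉ W) (hκ₀ : 0 ≤ κ) (hκ₁ : κ ≤ 1) :
    4 * π * κ * volume.real W ≤ (volume.prod sphMeasure).real (nearOrthogonal v W κ) := by
  refine (ENNReal.ofReal_le_iff_le_toReal
    (volume_prod_sphMeasure_ne_top hW_fin fun p hp => hp.1)).mp ?_
  rw [ENNReal.ofReal_mul (by positivity), ofReal_measureReal hW_fin,
    Measure.prod_apply (measurableSet_nearOrthogonal v hW κ), ← setLIntegral_const]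
  refine (setLIntegral_mono' hW fun w hw => ?_).trans (setLIntegral_le_lintegral W _)
  have hvw : v - w ≠ 0 := sub_ne_zero.mpr fun h => hvW (h ▸ hw)
  exact (ofReal_le_sphMeasure_band hvw hκ₀ hκ₁).trans (measure_mono fun σ hσ => ⟨hw, hσ⟩)

lemma le_collisionDensity (hγ₀ : 0 ≤ γ) (hb : GradCutoff b) (hc_b : 0 ≤ c_b)
    (hb_low : ∀ x, |x| ≤ 1 / 2 → c_b ≤ b x) (hc : 0 ≤ c) (hd : 0 ≤ d) (hρ : 0 ≤ ρ) {p : R3 × S2}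
    (hp : ρ ≤ ‖v - p.1‖) (hcos : |cos (angle (v - p.1) p.2)| ≤ 1 / 2)
    (hout : c ≤ h (vOut v p.1 p.2)) (hout_star : c ≤ h (vOutStar v p.1 p.2)) (hk : d ≤ k p.1) :
    ρ ^ γ * c_b * (c ^ 2 * d) ≤ collisionDensity γ b h k v p := by
  rw [collisionDensity, Bker, cosAngle_eq_cos_angle, pow_two]
  have kernel_nonneg := hb.nonneg (cos (angle (v - p.1) p.2))
  have out_nonneg := hc.trans hout
  have out_star_nonneg := hc.trans hout_star
  gcongr
  exact hb_low _ hcos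

lemma mul_measureReal_le_collisionIntegral_of_nearOrthogonal (hγ₀ : 0 ≤ γ) (hb : GradCutoff b)
    (hc_b : 0 ≤ c_b) (hb_low : ∀ x, |x| ≤ 1 / 2 → c_b ≤ b x) (hh : IsOccupation h)
    (hk : IsOccupation k) (hint : Integrable (collisionDensity γ b h k v) (volume.prod sphMeasure))
    {A B : Set R3} (hB : volume B ≠ ∞) (hA_low : ∀ᵐ w, w ∈ A → c ≤ h w)
    (hB_low : ∀ᵐ w, w ∈ B → d ≤ k w) (hc : 0 ≤ c) (hd : 0 ≤ d) (hρ : 0 ≤ ρ) {G : Set (R3 × S2)}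
    (hG : MeasurableSet G) (hG_near : G ⊆ nearOrthogonal v B (1 / 2))
    (hG_far : ∀ p ∈ G, ρ ≤ ‖v - p.1‖)
    (hG_out : ∀ p ∈ G, vOut v p.1 p.2 ∈ A ∧ vOutStar v p.1 p.2 ∈ A) :
    ρ ^ γ * c_b * (c ^ 2 * d) * (volume.prod sphMeasure).real G ≤ collisionIntegral γ b h k v := by
  refine mul_measureReal_le_collisionIntegral hb hh.nonneg hk.nonneg hint hG
    (volume_prod_sphMeasure_ne_top hB fun p hp => (hG_near hp).1) ?_
  filter_upwards [ae_collision hA_low v, ae_collision hB_low v]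
    with p ⟨out_low, out_star_low, _⟩ ⟨_, _, partner_low⟩ hp
  exact le_collisionDensity hγ₀ hb hc_b hb_low hc hd hρ (hG_far p hp) (hG_near hp).2
    (out_low (hG_out p hp).1) (out_star_low (hG_out p hp).2) (partner_low (hG_near hp).1)

lemma le_collisionIntegral_outside_ball (hγ₀ : 0 ≤ γ) (hb : GradCutoff b) (hc_b : 0 ≤ c_b)
    (hb_low : ∀ x, |x| ≤ 1 / 2 → c_b ≤ b x) (hh : IsOccupation h) (hk : IsOccupation k)
    (hint : Integrable (collisionDensity γ b h k v) (volume.prod sphMeasure)) {r ε : ℝ} (hr : 0 < r)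
    (hε₀ : 0 < ε) (hε₁ : ε ≤ 1) (hc : 0 ≤ c) (hd : 0 ≤ d)
    (hh_low : ∀ᵐ w, w ∈ Metric.ball v₀ r → c ≤ h w) {W : Set R3} (hW : MeasurableSet W)
    (hW_sub : W ⊆ Metric.ball v₀ (ε / 8 * r)) (hk_low : ∀ᵐ w, w ∈ W → d ≤ k w)
    (hv : r ≤ ‖v - v₀‖) (hv' : ‖v - v₀‖ < √2 * (1 - ε) * r) :
    (r / 2) ^ γ * c_b * (c ^ 2 * d) * (π / 2 * ε * volume.real W)
      ≤ collisionIntegral γ b h k v := by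
  have hW_fin : volume W ≠ ∞ := measure_ne_top_of_subset hW_sub measure_ball_lt_top.ne
  have far : ∀ w ∈ W, r / 2 ≤ ‖v - w‖ := fun w hw => by
    have hw₀ := mem_ball_iff_norm.mp (hW_sub hw)
    have relative := norm_sub_norm_le (v - v₀) (w - v₀)
    rw [sub_sub_sub_cancel_right] at relative
    nlinarith
  have hvW : v ∉ W := fun h => by
    have := far v h
    rw [sub_self, norm_zero] at this
    linarith
  have near_measure := mul_le_measureReal_nearOrthogonal hW hW_fin hvW (κ := ε / 8) (by positivity)
    (by linarith)
  calc (r / 2) ^ γ * c_b * (c ^ 2 * d) * (π / 2 * ε * volume.real W)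
      = (r / 2) ^ γ * c_b * (c ^ 2 * d) * (4 * π * (ε / 8) * volume.real W) := by ring
    _ ≤ (r / 2) ^ γ * c_b * (c ^ 2 * d) *
          (volume.prod sphMeasure).real (nearOrthogonal v W (ε / 8)) := by gcongr
    _ ≤ collisionIntegral γ b h k v := ?_
  refine mul_measureReal_le_collisionIntegral_of_nearOrthogonal hγ₀ hb hc_b hb_low hh hk hint hW_fin
    hh_low hk_low hc hd (by positivity) (measurableSet_nearOrthogonal v hW _)
    (fun p hp => ⟨hp.1, hp.2.trans (by linarith)⟩) (fun p hp => far _ hp.1) fun p hp =>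
    vOut_vOutStar_of_forall_collisionShift (κ := ε / 8) (fun e he hcos => ?_) hp.2
  exact sub_collisionShift_mem_ball he hr hε₀ hε₁ hv' (hW_sub hp.1) (neg_le_of_abs_le hcos)

end NearlyOrthogonalGain

section DenseGain

variable {γ c_b c r : ℝ} {b : ℝ → ℝ} {h k : R3 → ℝ} {v v₀ : R3} {W N E : Set R3}

lemma prod_sub_collisionShift_mem_le {e : S2 → R3} (he : ∀ σ, ‖e σ‖ = 1) (he_meas : Measurable e)
    (hN : MeasurableSet N) (v : R3) :
    (volume.prod sphMeasure) {p | -(1 / 2) ≤ cos (angle (v - p.1) (e p.2)) ∧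
      v - collisionShift (e p.2) (v - p.1) ∈ N} ≤ ENNReal.ofReal (64 * π) * volume N := by
  have hcos : Measurable fun p : R3 × S2 => cos (angle (v - p.1) (e p.2)) := by fun_prop
  have hshift : Measurable fun p : R3 × S2 => v - collisionShift (e p.2) (v - p.1) := by
    unfold collisionShift
    fun_prop
  refine (Measure.prod_apply_symm
    ((measurableSet_le measurable_const hcos).inter (hshift hN))).trans_le ?_
  calc _ ≤ ∫⁻ _ : S2, ENNReal.ofReal 16 * volume N ∂sphMeasure := lintegral_mono fun σ => by
        refine (volume_sub_collisionShift_mem_le (he σ) (κ := -(1 / 2)) (by norm_num)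
          hN v).trans_eq ?_
        norm_num
    _ = ENNReal.ofReal (64 * π) * volume N := by
      rw [lintegral_const, sphMeasure_univ, mul_right_comm, ← ENNReal.ofReal_mul (by norm_num)]
      ring_nf

/-- The collisions of a particle of velocity `v` with deviation angle `|cos θ| ≤ 1 / 2` that send
at least one of the two particles into `N`. -/
def collisionsInto (v : R3) (N : Set R3) : Set (R3 × S2) :=
  {p ∈ nearOrthogonal v univ (1 / 2) | vOut v p.1 p.2 ∈ N ∨ vOutStar v p.1 p.2 ∈ N}

lemma measurableSet_collisionsInto (v : R3) (hN : MeasurableSet N) :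
    MeasurableSet (collisionsInto v N) :=
  (measurableSet_nearOrthogonal v .univ _).inter
    ((measurable_vOut v hN).union (measurable_vOutStar v hN))

lemma measure_collisionsInto_le (v : R3) (hN : MeasurableSet N) :
    (volume.prod sphMeasure) (collisionsInto v N) ≤ ENNReal.ofReal (128 * π) * volume N := by
  have out := prod_sub_collisionShift_mem_le (e := fun σ => -σ) (by simp) (by fun_prop) hN v
  have out_star := prod_sub_collisionShift_mem_le (e := (↑)) (by simp) (by fun_prop) hN v
  calc (volume.prod sphMeasure) (collisionsInto v N)
      ≤ _ := measure_mono ?_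
    _ ≤ _ := measure_union_le _ _
    _ ≤ ENNReal.ofReal (64 * π) * volume N + ENNReal.ofReal (64 * π) * volume N :=
        add_le_add out out_star
    _ = ENNReal.ofReal (128 * π) * volume N := by
        rw [← add_mul, ← ENNReal.ofReal_add (by positivity) (by positivity)]
        ring_nf
  rintro p ⟨⟨-, hcos⟩, hp⟩
  obtain ⟨lower, upper⟩ := abs_le.mp hcos
  refine hp.imp (fun hp => ⟨?_, ?_⟩) (fun hp => ⟨lower, ?_⟩)
  · rw [angle_neg_right, cos_pi_sub]
    linarith
  · rwa [← vOut_eq_sub_collisionShift]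
  · rwa [← vOutStar_eq_sub_collisionShift]

lemma le_measureReal_nearOrthogonal_sdiff (hW : MeasurableSet W) (hW_fin : volume W ≠ ∞)
    (hvW : v ∉ W) (hN : MeasurableSet N) (hN_fin : volume N ≠ ∞) :
    2 * π * volume.real W - 130 * π * volume.real N ≤
      (volume.prod sphMeasure).real (nearOrthogonal v (W \ N) (1 / 2) \ collisionsInto v N) := by
  have partners : volume.real W - volume.real N ≤ volume.real (W \ N) := le_measureReal_sdiff hN_fin
  have near := mul_le_measureReal_nearOrthogonal (hW.diff hN)
    (measure_ne_top_of_subset sdiff_subset hW_fin) (fun h => hvW h.1) (κ := 1 / 2) (by norm_num)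
    (by norm_num)
  have into : (volume.prod sphMeasure).real (collisionsInto v N) ≤ 128 * π * volume.real N := by
    refine ENNReal.toReal_le_of_le_ofReal (by positivity) ?_
    rw [ENNReal.ofReal_mul (by positivity), ofReal_measureReal hN_fin]
    exact measure_collisionsInto_le v hN
  have into_fin : (volume.prod sphMeasure) (collisionsInto v N) ≠ ∞ :=
    ((measure_collisionsInto_le v hN).trans_lt
      (ENNReal.mul_lt_top ENNReal.ofReal_lt_top hN_fin.lt_top)).ne
  have sdiff := le_measureReal_sdiff (μ := volume.prod sphMeasure)
    (s₁ := nearOrthogonal v (W \ N) (1 / 2)) into_fin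
  nlinarith [pi_pos]

lemma volume_real_closedBall_sdiff_closedBall (v₀ : R3) (hr : 0 ≤ r) :
    volume.real (Metric.closedBall v₀ (r / 8) \ Metric.closedBall v₀ (r / 16)) =
      7 / 4096 * volume.real (Metric.closedBall v₀ r) := by
  rw [measureReal_sdiff (Metric.closedBall_subset_closedBall (by linarith))
      measurableSet_closedBall measure_closedBall_lt_top.ne,
    Measure.addHaar_real_closedBall _ _ hr, Measure.addHaar_real_closedBall _ _ (by positivity),
    Measure.addHaar_real_closedBall _ _ (by positivity), finrank_euclideanSpace_fin]
  ring

lemma le_collisionIntegral_of_dense (hγ₀ : 0 ≤ γ) (hb : GradCutoff b) (hc_b : 0 ≤ c_b)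
    (hb_low : ∀ x, |x| ≤ 1 / 2 → c_b ≤ b x) (hh : IsOccupation h) (hk : IsOccupation k)
    (hint : Integrable (collisionDensity γ b h k v) (volume.prod sphMeasure)) (hr : 0 < r)
    (hc : 0 ≤ c) (hE : MeasurableSet E)
    (hE_dense : volume.real (Metric.closedBall v₀ r \ E) ≤
      1 / 100000 * volume.real (Metric.closedBall v₀ r))
    (hh_low : ∀ᵐ w, w ∈ E → c ≤ h w) (hk_low : ∀ᵐ w, w ∈ E → c ≤ k w) (hv : ‖v - v₀‖ < r / 32) :
    (r / 32) ^ γ * c_b * (c ^ 2 * c) * (π / 1000 * volume.real (Metric.closedBall v₀ r)) ≤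
      collisionIntegral γ b h k v := by
  set N := Metric.closedBall v₀ r \ E
  set W := Metric.closedBall v₀ (r / 8) \ Metric.closedBall v₀ (r / 16) with hW_def
  have hN : MeasurableSet N := measurableSet_closedBall.diff hE
  have hW : MeasurableSet W := measurableSet_closedBall.diff measurableSet_closedBall
  have ball_fin : volume (Metric.closedBall v₀ r) ≠ ∞ := measure_closedBall_lt_top.ne
  have hW_fin : volume W ≠ ∞ := measure_ne_top_of_subset sdiff_subset measure_closedBall_lt_top.ne
  have far : ∀ w ∈ W, r / 32 ≤ ‖v - w‖ := fun w hw => by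
    have hw₀ : r / 16 < ‖w - v₀‖ := not_le.mp (mem_closedBall_iff_norm.not.mp hw.2)
    have relative := norm_sub_norm_le (w - v₀) (v - v₀)
    rw [sub_sub_sub_cancel_right, norm_sub_rev w v] at relative
    linarith
  have hvW : v ∉ W := fun h => by linarith [far v h, norm_eq_zero.mpr (sub_self v)]
  have mem_E {w : R3} (hw : w ∈ Metric.closedBall v₀ r) (hwN : w ∉ N) : w ∈ E :=
    not_not.mp fun hwE => hwN ⟨hw, hwE⟩
  have good_measure := le_measureReal_nearOrthogonal_sdiff hW hW_fin hvW hN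
    (measure_ne_top_of_subset sdiff_subset ball_fin)
  rw [hW_def, volume_real_closedBall_sdiff_closedBall v₀ hr.le] at good_measure
  have ball_nonneg : 0 ≤ volume.real (Metric.closedBall v₀ r) := measureReal_nonneg
  refine le_trans ?_ (mul_measureReal_le_collisionIntegral_of_nearOrthogonal hγ₀ hb hc_b hb_low hh
    hk hint (B := W \ N) (measure_ne_top_of_subset sdiff_subset hW_fin) hh_low ?_ hc hc
    (by positivity : 0 ≤ r / 32)
    ((measurableSet_nearOrthogonal v (hW.diff hN) _).diff (measurableSet_collisionsInto v hN))
    sdiff_subset (fun p hp => far _ hp.1.1.1) fun p hp => ?_)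
  · gcongr
    nlinarith [pi_pos, mul_nonneg pi_pos.le ball_nonneg]
  · filter_upwards [hk_low] with w hw hwW
    exact hw (mem_E (Metric.closedBall_subset_closedBall (by linarith) hwW.1.1) hwW.2)
  · have output_mem := vOut_vOutStar_of_forall_collisionShift
      (P := (· ∈ Metric.closedBall v₀ r)) (fun e he _ => Metric.closedBall_subset_closedBall
        (by linarith) (sub_collisionShift_mem_closedBall he hv.le hp.1.1.1.1)) hp.1.2
    have hp_out : ¬(vOut v p.1 p.2 ∈ N ∨ vOutStar v p.1 p.2 ∈ N) :=
      fun h => hp.2 ⟨⟨mem_univ _, hp.1.2⟩, h⟩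
    exact ⟨mem_E output_mem.1 fun h => hp_out (.inl h), mem_E output_mem.2 fun h => hp_out (.inr h)⟩

end DenseGain

lemma exists_closedBall_measureReal_sdiff_le {E : Type*} [NormedAddCommGroup E] [NormedSpace ℝ E]
    [FiniteDimensional ℝ E] [MeasurableSpace E] [BorelSpace E] (μ : Measure E)
    [IsLocallyFiniteMeasure μ] {s : Set E} (hs : MeasurableSet s) (hμs : μ s ≠ 0) {κ R : ℝ}
    (hκ : 0 < κ) (hR : 0 < R) :
    ∃ x r, 0 < r ∧ r ≤ R ∧
      μ.real (Metric.closedBall x r \ s) ≤ κ * μ.real (Metric.closedBall x r) := by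
  have : (ae (μ.restrict s)).NeBot := by
    rwa [ae_neBot, Ne, Measure.restrict_eq_zero]
  obtain ⟨x, hx⟩ := (Besicovitch.ae_tendsto_measure_inter_div μ s).exists
  have hx_real : Filter.Tendsto
      (fun r => μ.real (s ∩ Metric.closedBall x r) / μ.real (Metric.closedBall x r))
      (nhdsWithin 0 (Ioi 0)) (nhds 1) := by
    simpa only [Function.comp_def, ENNReal.toReal_div, ENNReal.toReal_one, Measure.real]
      using (ENNReal.tendsto_toReal ENNReal.one_ne_top).comp hx
  obtain ⟨r, ⟨hr_dense, hrR⟩, hr₀⟩ := (((hx_real.eventually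
    (lt_mem_nhds (by linarith : 1 - κ < 1))).and (mem_nhdsWithin_of_mem_nhds
    (Iic_mem_nhds hR))).and self_mem_nhdsWithin).exists
  refine ⟨x, r, hr₀, hrR, ?_⟩
  have split := measureReal_inter_add_sdiff (s := Metric.closedBall x r) hs
    (measure_closedBall_lt_top (μ := μ)).ne
  rw [inter_comm] at split
  linarith [mul_le_of_le_div₀ measureReal_nonneg measureReal_nonneg hr_dense.le]

lemma exists_volume_setOf_le_le_ne_zero {g₀ g : R3 → ℝ} (hg : g =ᵐ[volume] g₀)
    (hg_occ : IsOccupation g) (hS : 0 < entropy g₀) :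
    ∃ ε > 0, volume {v | ε ≤ g v ∧ ε ≤ 1 - g v} ≠ 0 := by
  by_contra! null
  have null_iUnion : volume (⋃ n : ℕ, {v | 1 / ((n : ℝ) + 1) ≤ g v ∧ 1 / ((n : ℝ) + 1) ≤ 1 - g v})
      = 0 := measure_iUnion_null fun n => null _ (by positivity)
  have zero_or_one : ∀ᵐ v, g v = 0 ∨ 1 - g v = 0 := by
    refine measure_mono_null (fun v hv => ?_) null_iUnion
    obtain ⟨h₀, h₁⟩ := not_or.mp hv
    have hpos : 0 < min (g v) (1 - g v) := lt_min ((hg_occ.nonneg v).lt_of_ne' h₀)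
      ((sub_nonneg.mpr (hg_occ.le_one v)).lt_of_ne' h₁)
    obtain ⟨n, hn⟩ := exists_nat_one_div_lt hpos
    exact mem_iUnion.mpr ⟨n, hn.le.trans (min_le_left _ _), hn.le.trans (min_le_right _ _)⟩
  refine hS.ne' ?_
  rw [entropy, neg_eq_zero]
  refine integral_eq_zero_of_ae ?_
  filter_upwards [zero_or_one, hg] with v hv hgv
  rw [← hgv]
  rcases hv with h | h
  · simp [h]
  · simp [(sub_eq_zero.mp h).symm]

/-! ### Radii and constants of the iteration -/

/-- The radii of the balls in which the lower bounds are iterated: they grow like `√2 ^ n`, with a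
factor decreasing from `2` to `1` that leaves room for collisions that are only nearly
orthogonal. -/
def expandingRadius (ρ : ℝ) (n : ℕ) : ℝ := √2 ^ n * ρ * (1 + (3 / 4) ^ n)

section ExpandingRadius

variable {ρ : ℝ}

lemma four_thirds_le_sqrt_two : 4 / 3 ≤ √2 := Real.le_sqrt_of_sq_le (by norm_num)

lemma expandingRadius_zero (ρ : ℝ) : expandingRadius ρ 0 = 2 * ρ := by
  norm_num [expandingRadius, mul_comm]

lemma sqrt_two_pow_mul_lt_expandingRadius (hρ : 0 < ρ) (n : ℕ) :
    √2 ^ n * ρ < expandingRadius ρ n :=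
  lt_mul_of_one_lt_right (by positivity) (lt_add_of_pos_right 1 (by positivity))

lemma le_expandingRadius (hρ : 0 < ρ) (n : ℕ) : ρ ≤ expandingRadius ρ n :=
  (le_mul_of_one_le_left hρ.le (one_le_pow₀ (by linarith [four_thirds_le_sqrt_two]))).trans
    (sqrt_two_pow_mul_lt_expandingRadius hρ n).le

lemma expandingRadius_sq_le (ρ : ℝ) (n : ℕ) : expandingRadius ρ n ^ 2 ≤ 4 * ρ ^ 2 * 2 ^ n := by
  have factor_le : 1 + (3 / 4 : ℝ) ^ n ≤ 2 := by
    linarith [pow_le_one₀ (n := n) (by norm_num : (0 : ℝ) ≤ 3 / 4) (by norm_num)]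
  calc expandingRadius ρ n ^ 2 = (√2 ^ 2) ^ n * ρ ^ 2 * (1 + (3 / 4) ^ n) ^ 2 := by
        rw [expandingRadius]
        ring
    _ ≤ (√2 ^ 2) ^ n * ρ ^ 2 * 2 ^ 2 := by gcongr
    _ = 4 * ρ ^ 2 * 2 ^ n := by
        rw [Real.sq_sqrt (by norm_num)]
        ring

lemma expandingRadius_succ_le (hρ : 0 ≤ ρ) (n : ℕ) :
    expandingRadius ρ (n + 1) ≤ √2 * (1 - (3 / 4) ^ n / 8) * expandingRadius ρ n := by
  have hq₀ : 0 < (3 / 4 : ℝ) ^ n := by positivity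
  have hq₁ : (3 / 4 : ℝ) ^ n ≤ 1 := pow_le_one₀ (by norm_num) (by norm_num)
  calc expandingRadius ρ (n + 1) = √2 ^ n * ρ * √2 * (1 + (3 / 4) ^ n * (3 / 4)) := by
        rw [expandingRadius]
        ring
    _ ≤ √2 ^ n * ρ * √2 * ((1 - (3 / 4) ^ n / 8) * (1 + (3 / 4) ^ n)) := by
        gcongr
        nlinarith
    _ = √2 * (1 - (3 / 4) ^ n / 8) * expandingRadius ρ n := by
        rw [expandingRadius]
        ring

lemma div_le_mul_expandingRadius (hρ : 0 < ρ) (n : ℕ) :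
    ρ / 64 ≤ (3 / 4) ^ n / 8 / 8 * expandingRadius ρ n := by
  have one_le : 1 ≤ ((3 / 4) * √2) ^ n := one_le_pow₀ (by linarith [four_thirds_le_sqrt_two])
  calc ρ / 64 ≤ ((3 / 4) * √2) ^ n * (ρ / 64) := le_mul_of_one_le_left (by positivity) one_le
    _ = (3 / 4) ^ n / 8 / 8 * (√2 ^ n * ρ) := by ring
    _ ≤ (3 / 4) ^ n / 8 / 8 * expandingRadius ρ n := by
        gcongr
        exact (sqrt_two_pow_mul_lt_expandingRadius hρ n).le

end ExpandingRadius

-- The geometric losses are absorbed by iterating `κ⁻¹ * θ⁻¹ ^ (n + 1) * x ^ e ^ n` instead.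
lemma exists_forall_pow_pow {P : ℕ → ℝ → Prop} {e : ℕ} {c₀ κ θ : ℝ} (he : 2 ≤ e) (hc₀ : 0 < c₀)
    (hκ₀ : 0 < κ) (hκ₁ : κ ≤ 1) (hθ₀ : 0 < θ) (hθ₁ : θ ≤ 1)
    (mono : ∀ n c d, 0 < d → d ≤ c → P n c → P n d) (zero : P 0 c₀)
    (succ : ∀ n c, 0 < c → P n c → P (n + 1) (κ * θ ^ n * c ^ e)) :
    ∃ x, 0 < x ∧ x ≤ 1 ∧ ∀ n, P n (x ^ e ^ n) := by
  set g : ℕ → ℝ := fun n => κ⁻¹ * θ⁻¹ ^ (n + 1) with hg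
  have one_le_g (n : ℕ) : 1 ≤ g n :=
    one_le_mul_of_one_le_of_one_le ((one_le_inv₀ hκ₀).mpr hκ₁)
      (one_le_pow₀ ((one_le_inv₀ hθ₀).mpr hθ₁))
  have g_pos (n : ℕ) : 0 < g n := one_pos.trans_le (one_le_g n)
  have g_succ (n : ℕ) : g (n + 1) = κ * θ ^ n * g n ^ 2 := by
    simp only [hg, inv_pow]
    field_simp
    ring
  obtain ⟨x, hx₀, hx₁, hx_c₀⟩ : ∃ x, 0 < x ∧ x ≤ 1 ∧ g 0 * x ≤ c₀ := by
    refine ⟨min 1 (c₀ / g 0), lt_min one_pos (div_pos hc₀ (g_pos 0)), min_le_left _ _, ?_⟩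
    rw [mul_comm, ← le_div_iff₀ (g_pos 0)]
    exact min_le_right _ _
  refine ⟨x, hx₀, hx₁, fun n => mono n (g n * x ^ e ^ n) _ (by positivity)
    (le_mul_of_one_le_left (by positivity) (one_le_g n)) ?_⟩
  induction n with
  | zero =>
    have := g_pos 0
    exact mono 0 c₀ _ (by positivity) (by simpa using hx_c₀) zero
  | succ n ih =>
    have := g_pos n
    have := g_pos (n + 1)
    refine mono (n + 1) _ _ (by positivity) ?_ (succ n _ (by positivity) ih)
    calc g (n + 1) * x ^ e ^ (n + 1) = κ * θ ^ n * (g n ^ 2 * x ^ e ^ (n + 1)) := by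
          rw [g_succ, mul_assoc]
      _ ≤ κ * θ ^ n * (g n ^ e * x ^ e ^ (n + 1)) := by
          gcongr
          exact one_le_g n
      _ = κ * θ ^ n * (g n * x ^ e ^ n) ^ e := by rw [mul_pow (g n), ← pow_mul, ← pow_succ]

lemma sqrt_two_pow_rpow {e : ℝ} (he : 0 < e) (n : ℕ) :
    (√2 ^ n) ^ (2 * Real.log e / Real.log 2) = e ^ n := by
  rw [Real.rpow_def_of_pos (by positivity), Real.log_pow, Real.log_sqrt (by norm_num)]
  have := Real.log_pos one_lt_two
  rw [show n * (Real.log 2 / 2) * (2 * Real.log e / Real.log 2) = n * Real.log e by field_simp,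
    Real.exp_nat_mul, Real.exp_log he]

lemma exists_lt_sqrt_two_pow_mul {e : ℝ} (he : 1 ≤ e) {d ρ : ℝ} (hd : 0 ≤ d) (hρ : 0 < ρ) :
    ∃ n : ℕ, d < √2 ^ n * ρ ∧ e ^ n ≤ 1 + e * (d / ρ) ^ (2 * Real.log e / Real.log 2) := by
  have exponent_nonneg : 0 ≤ 2 * Real.log e / Real.log 2 := by
    have := Real.log_nonneg he
    positivity
  have hex : ∃ n : ℕ, d / ρ < √2 ^ n :=
    pow_unbounded_of_one_lt _ (by linarith [four_thirds_le_sqrt_two])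
  classical
  refine ⟨Nat.find hex, (div_lt_iff₀ hρ).mp (Nat.find_spec hex), ?_⟩
  rcases hn : Nat.find hex with _ | n
  · rw [pow_zero]
    exact le_add_of_nonneg_right (by positivity)
  · have not_lt : √2 ^ n ≤ d / ρ := not_lt.mp (Nat.find_min hex (by omega))
    calc e ^ (n + 1) = e * (√2 ^ n) ^ (2 * Real.log e / Real.log 2) := by
          rw [sqrt_two_pow_rpow (by linarith), pow_succ']
      _ ≤ e * (d / ρ) ^ (2 * Real.log e / Real.log 2) := by gcongr
      _ ≤ 1 + e * (d / ρ) ^ (2 * Real.log e / Real.log 2) := le_add_of_nonneg_left zero_le_one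

lemma add_rpow_le_two_rpow_mul {a b p : ℝ} (ha : 0 ≤ a) (hb : 0 ≤ b) (hp : 0 ≤ p) :
    (a + b) ^ p ≤ 2 ^ p * (a ^ p + b ^ p) := by
  wlog hab : a ≤ b
  · rw [add_comm a, add_comm (a ^ p)]
    exact this hb ha hp (not_le.mp hab).le
  calc (a + b) ^ p ≤ (2 * b) ^ p := by
        gcongr
        linarith
    _ = 2 ^ p * b ^ p := Real.mul_rpow zero_le_two hb
    _ ≤ 2 ^ p * (a ^ p + b ^ p) := by
        gcongr
        exact le_add_of_nonneg_left (by positivity)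

lemma exists_mul_exp_neg_rpow_le_pow_pow {E : Type*} [NormedAddCommGroup E] {e : ℕ} (he : 1 ≤ e)
    {ρ x : ℝ} (hρ : 0 < ρ) (hx₀ : 0 < x) (hx₁ : x ≤ 1) (v₀ : E) :
    ∃ m M : ℝ, 0 < m ∧ 0 ≤ M ∧ ∀ v : E, ∃ n : ℕ, ‖v - v₀‖ < √2 ^ n * ρ ∧
      m * exp (-M * ‖v‖ ^ (2 * Real.log e / Real.log 2)) ≤ x ^ e ^ n := by
  set p : ℝ := 2 * Real.log e / Real.log 2
  have he' : (1 : ℝ) ≤ e := mod_cast he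
  have hp₀ : 0 ≤ p := by
    have := Real.log_nonneg he'
    positivity
  obtain ⟨Λ, hΛ, rfl⟩ : ∃ Λ, 0 ≤ Λ ∧ exp (-Λ) = x :=
    ⟨-Real.log x, neg_nonneg.mpr (Real.log_nonpos hx₀.le hx₁), by rw [neg_neg, Real.exp_log hx₀]⟩
  set K : ℝ := e * (2 ^ p / ρ ^ p) with hK
  refine ⟨exp (-(Λ * (1 + K * ‖v₀‖ ^ p))), Λ * K, exp_pos _, by positivity, fun v => ?_⟩
  obtain ⟨n, hn, hen⟩ := exists_lt_sqrt_two_pow_mul he' (norm_nonneg (v - v₀)) hρ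
  refine ⟨n, hn, ?_⟩
  have exponent_le : (e : ℝ) ^ n ≤ 1 + K * (‖v‖ ^ p + ‖v₀‖ ^ p) := by
    calc (e : ℝ) ^ n ≤ 1 + e * ((‖v‖ + ‖v₀‖) / ρ) ^ p := hen.trans (by
          gcongr
          exact norm_sub_le v v₀)
      _ ≤ 1 + e * (2 ^ p * (‖v‖ ^ p + ‖v₀‖ ^ p) / ρ ^ p) := by
          rw [Real.div_rpow (by positivity) hρ.le]
          gcongr
          exact add_rpow_le_two_rpow_mul (norm_nonneg v) (norm_nonneg v₀) hp₀
      _ = 1 + K * (‖v‖ ^ p + ‖v₀‖ ^ p) := by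
          rw [hK]
          ring
  rw [← Real.exp_nat_mul, ← Real.exp_add, exp_le_exp]
  push_cast
  linarith [mul_le_mul_of_nonneg_left exponent_le hΛ]

/-! ### Propagation of lower bounds -/

/-- The standing situation of the iteration: `f` solves the Boltzmann–Fermi–Dirac equation for a
kernel satisfying `0 ≤ γ ≤ 2`, Grad's cutoff and, near orthogonal scattering angles, `c_b ≤ b`. -/
structure IsCutoffSolution (γ : ℝ) (b : ℝ → ℝ) (c_b : ℝ) (f₀ : R3 → ℝ) (f : ℝ → R3 → ℝ) :
    Prop where
  exponent_nonneg : 0 ≤ γ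
  exponent_le_two : γ ≤ 2
  cutoff : GradCutoff b
  low_pos : 0 < c_b
  low_le : ∀ x, |x| ≤ 1 / 2 → c_b ≤ b x
  solution : IsFDSolution γ b f₀ f

/-- The population `i` is at least `c` on `U` at all times in `I`, except at velocities violating
Duhamel's bound. The exceptional set is thereby null and independent of time. -/
def HasLowerBound (γ : ℝ) (b : ℝ → ℝ) (f : ℝ → R3 → ℝ) (i : Bool) (U : Set R3) (I : Set ℝ)
    (c : ℝ) : Prop :=
  ∀ v ∈ U, HasDuhamelBound γ b f v → ∀ t ∈ I, c ≤ population f i t v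

section LowerBounds

variable {γ c_b c c' L A s T Δ α ε K : ℝ} {b : ℝ → ℝ} {f₀ : R3 → ℝ} {f : ℝ → R3 → ℝ} {i : Bool}
  {U U' : Set R3} {I I' : Set ℝ} {v v₀ : R3}

lemma HasLowerBound.mono (h : HasLowerBound γ b f i U I c) (hU : U' ⊆ U) (hI : I' ⊆ I)
    (hc : c' ≤ c) : HasLowerBound γ b f i U' I' c' :=
  fun v hv hduh t ht => hc.trans (h v (hU hv) hduh t (hI ht))

lemma HasLowerBound.union (h : HasLowerBound γ b f i U I c) (h' : HasLowerBound γ b f i U' I c) :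
    HasLowerBound γ b f i (U ∪ U') I c :=
  fun v hv => hv.elim (h v) (h' v)

lemma HasLowerBound.ae_le (h : HasLowerBound γ b f i U I c)
    (hf : IsCutoffSolution γ b c_b f₀ f) {t : ℝ} (ht : t ∈ I) :
    ∀ᵐ v, v ∈ U → c ≤ population f i t v := by
  filter_upwards [hf.solution.ae_hasDuhamelBound hf.exponent_nonneg hf.exponent_le_two hf.cutoff]
    with v hduh hv using h v hv hduh t ht

lemma IsCutoffSolution.integrable_collisionDensity_population
    (hf : IsCutoffSolution γ b c_b f₀ f) (i : Bool) {t : ℝ} (ht : 0 ≤ t) (v : R3) :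
    Integrable (collisionDensity γ b (population f i t) (population f (!i) t) v)
      (volume.prod sphMeasure) :=
  integrable_collisionDensity hf.exponent_nonneg hf.exponent_le_two hf.cutoff
    (hf.solution.isOccupation_population i ht) (hf.solution.isOccupation_population _ ht)
    ((hf.solution.min_massEnergy_population_le i ht).trans_lt ENNReal.ofReal_lt_top) v

lemma IsCutoffSolution.collisionIntegral_population_nonneg (hf : IsCutoffSolution γ b c_b f₀ f)
    (i : Bool) {t : ℝ} (ht : 0 ≤ t) (v : R3) :
    0 ≤ collisionIntegral γ b (population f i t) (population f (!i) t) v :=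
  collisionIntegral_nonneg hf.cutoff (hf.solution.isOccupation_population i ht).nonneg
    (hf.solution.isOccupation_population _ ht).nonneg v

lemma frequencyBound_nonneg (hb : GradCutoff b) (g : R3 → ℝ) (v : R3) :
    0 ≤ frequencyBound b g v := by
  have := hb.Cb_pos
  have := wnorm_nonneg 2 g
  rw [frequencyBound]
  positivity

lemma frequencyBound_le (hb : GradCutoff b) (g : R3 → ℝ) (hv : ‖v‖ ^ 2 ≤ K) :
    frequencyBound b g v ≤ 64 * Cb b * (1 + K) * wnorm 2 g := by
  have := hb.Cb_pos
  have := wnorm_nonneg 2 g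
  rw [frequencyBound]
  gcongr

lemma frequencyBound_mul_le (hb : GradCutoff b) (g : R3 → ℝ) {ρ : ℝ} {n : ℕ}
    (hv : ‖v - v₀‖ ≤ expandingRadius ρ n) :
    frequencyBound b g v * (1 / 2) ^ n
      ≤ 64 * Cb b * (1 + (2 * ‖v₀‖ ^ 2 + 8 * ρ ^ 2)) * wnorm 2 g := by
  have := hb.Cb_pos
  have := wnorm_nonneg 2 g
  have one_le : (1 : ℝ) ≤ 2 ^ n := one_le_pow₀ one_le_two
  have norm_sq_le : ‖v‖ ^ 2 ≤ 2 * ‖v₀‖ ^ 2 + 8 * ρ ^ 2 * 2 ^ n := by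
    have norm_le : ‖v‖ ≤ ‖v₀‖ + ‖v - v₀‖ := norm_le_norm_add_norm_sub' v v₀
    have := expandingRadius_sq_le ρ n
    calc ‖v‖ ^ 2 ≤ (‖v₀‖ + ‖v - v₀‖) ^ 2 := by gcongr
      _ ≤ 2 * (‖v₀‖ ^ 2 + ‖v - v₀‖ ^ 2) := add_sq_le
      _ ≤ 2 * (‖v₀‖ ^ 2 + expandingRadius ρ n ^ 2) := by gcongr
      _ ≤ 2 * ‖v₀‖ ^ 2 + 8 * ρ ^ 2 * 2 ^ n := by linarith
  calc frequencyBound b g v * (1 / 2) ^ n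
      ≤ 64 * Cb b * (1 + (2 * ‖v₀‖ ^ 2 + 8 * ρ ^ 2 * 2 ^ n)) * wnorm 2 g * (1 / 2) ^ n := by
        gcongr
        exact frequencyBound_le hb g norm_sq_le
    _ ≤ 64 * Cb b * ((1 + (2 * ‖v₀‖ ^ 2 + 8 * ρ ^ 2)) * 2 ^ n) * wnorm 2 g * (1 / 2) ^ n := by
        gcongr
        nlinarith [mul_le_mul_of_nonneg_left one_le
          (by positivity : 0 ≤ 1 + 2 * ‖v₀‖ ^ 2)]
    _ = 64 * Cb b * (1 + (2 * ‖v₀‖ ^ 2 + 8 * ρ ^ 2)) * wnorm 2 g := by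
        rw [div_pow, one_pow]
        field_simp

lemma IsCutoffSolution.hasLowerBound_of_initial (hf : IsCutoffSolution γ b c_b f₀ f)
    (hL : ∀ v ∈ U, frequencyBound b (f 0) v ≤ L) (hε : 0 ≤ ε)
    (hinit : ∀ v ∈ U, ε ≤ population f i 0 v) :
    HasLowerBound γ b f i U (Icc 0 T) (exp (-(2 * (L * T))) * ε) := by
  intro v hv hduh t ht
  have := frequencyBound_nonneg hf.cutoff (f 0) v
  have damping : frequencyBound b (f 0) v * t ≤ L * T :=
    mul_le_mul (hL v hv) ht.2 ht.1 (this.trans (hL v hv))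
  calc exp (-(2 * (L * T))) * ε
      ≤ exp (-(2 * frequencyBound b (f 0) v * (t - 0))) * (population f i 0 v + 0 * (t - 0)) := by
        rw [sub_zero, zero_mul, add_zero, mul_assoc]
        gcongr
        exact hinit v hv
    _ ≤ population f i t v := hduh i le_rfl ht.1 le_rfl fun τ hτ =>
        hf.collisionIntegral_population_nonneg i hτ.1 v

lemma IsCutoffSolution.hasLowerBound_of_gain (hf : IsCutoffSolution γ b c_b f₀ f)
    (hA : ∀ v ∈ U, frequencyBound b (f 0) v * Δ ≤ A) (hs : 0 ≤ s) (hΔ : 0 ≤ Δ) (hα : 0 ≤ α)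
    (hgain : ∀ v ∈ U, ∀ t ∈ Icc s T,
      α ≤ collisionIntegral γ b (population f i t) (population f (!i) t) v) :
    HasLowerBound γ b f i U (Icc (s + Δ) T) (exp (-(2 * A)) * (α * Δ)) := by
  intro v hv hduh t ht
  have hstart : s ≤ t - Δ := by linarith [ht.1]
  have := (hf.solution.isOccupation_population i (hs.trans hstart)).nonneg v
  calc exp (-(2 * A)) * (α * Δ)
      ≤ exp (-(2 * frequencyBound b (f 0) v * (t - (t - Δ))))
          * (population f i (t - Δ) v + α * (t - (t - Δ))) := by
        rw [sub_sub_cancel, mul_assoc 2]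
        gcongr
        exacts [hA v hv, le_add_of_nonneg_left this]
    _ ≤ population f i t v := hduh i (hs.trans hstart) (sub_le_self t hΔ) hα fun τ hτ =>
        hgain v hv τ ⟨hstart.trans hτ.1, hτ.2.trans ht.2⟩

end LowerBounds

section Spreading

variable {γ c_b c d c₀ A κ s ρ τ₀ τ T : ℝ} {b : ℝ → ℝ} {f₀ : R3 → ℝ} {f : ℝ → R3 → ℝ} {i : Bool}
  {v v₀ : R3}

lemma IsCutoffSolution.exists_dense_setOf_le (hf : IsCutoffSolution γ b c_b f₀ f)
    (hS : 0 < entropy f₀) :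
    ∃ ε > 0, ∃ v₀ r, 0 < r ∧ r ≤ 1 ∧ ∃ E : Set R3, MeasurableSet E ∧ E ⊆ Metric.closedBall v₀ r ∧
      volume.real (Metric.closedBall v₀ r \ E)
        ≤ 1 / 100000 * volume.real (Metric.closedBall v₀ r) ∧
      ∀ i, ∀ v ∈ E, ε ≤ population f i 0 v := by
  have hocc := hf.solution.isOccupation le_rfl
  obtain ⟨ε, hε, hE_vol⟩ := exists_volume_setOf_le_le_ne_zero hf.solution.ae_eq_initial hocc hS
  have hE_meas : MeasurableSet {v | ε ≤ f 0 v ∧ ε ≤ 1 - f 0 v} :=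
    (measurableSet_le measurable_const hocc.measurable).inter
      (measurableSet_le measurable_const hocc.one_sub.measurable)
  obtain ⟨v₀, r, hr, hr₁, hdense⟩ := exists_closedBall_measureReal_sdiff_le volume hE_meas hE_vol
    (κ := 1 / 100000) (by norm_num) one_pos
  refine ⟨ε, hε, v₀, r, hr, hr₁, {v | ε ≤ f 0 v ∧ ε ≤ 1 - f 0 v} ∩ Metric.closedBall v₀ r,
    hE_meas.inter measurableSet_closedBall, inter_subset_right,
    by rwa [sdiff_inter_self_eq_sdiff], fun i v hv => ?_⟩
  cases i
  exacts [hv.1.2, hv.1.1]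

lemma IsCutoffSolution.exists_hasLowerBound_ball (hf : IsCutoffSolution γ b c_b f₀ f)
    (hS : 0 < entropy f₀) :
    ∃ v₀ r, 0 < r ∧ ∀ τ T, 0 < τ → ∃ c, 0 < c ∧
      ∀ i, HasLowerBound γ b f i (Metric.ball v₀ r) (Icc τ T) c := by
  obtain ⟨ε, hε, v₀, r, hr, hr₁, E, hE_meas, hE_sub, hE_dense, hE_low⟩ :=
    hf.exists_dense_setOf_le hS
  refine ⟨v₀, r / 32, by positivity, fun τ T hτ => ?_⟩
  set L : ℝ := 64 * Cb b * (1 + (‖v₀‖ + 1) ^ 2) * wnorm 2 (f 0)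
  have freq_le {v : R3} (hv : ‖v - v₀‖ ≤ 1) : frequencyBound b (f 0) v ≤ L := by
    refine frequencyBound_le hf.cutoff (f 0) ?_
    gcongr
    linarith [norm_le_norm_add_norm_sub' v v₀]
  set c : ℝ := exp (-(2 * (L * T))) * ε
  have hc : 0 < c := by positivity
  have persists (i : Bool) : HasLowerBound γ b f i E (Icc 0 T) c :=
    hf.hasLowerBound_of_initial
      (fun v hv => freq_le ((mem_closedBall_iff_norm.mp (hE_sub hv)).trans hr₁)) hε.le (hE_low i)
  have hc_b := hf.low_pos
  have vol_pos : 0 < volume.real (Metric.closedBall v₀ r) :=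
    ENNReal.toReal_pos (Metric.measure_closedBall_pos _ v₀ hr).ne' measure_closedBall_lt_top.ne
  set α : ℝ := (r / 32) ^ γ * c_b * (c ^ 2 * c) * (π / 1000 * volume.real (Metric.closedBall v₀ r))
  have hα : 0 < α := by positivity
  refine ⟨exp (-(2 * (L * τ))) * (α * τ), by positivity, fun i => ?_⟩
  have freq_mul_le : ∀ v ∈ Metric.ball v₀ (r / 32), frequencyBound b (f 0) v * τ ≤ L * τ := by
    intro v hv
    gcongr
    exact freq_le (by linarith [mem_ball_iff_norm.mp hv])
  simpa only [zero_add] using hf.hasLowerBound_of_gain freq_mul_le le_rfl hτ.le hα.le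
    fun v hv t ht => le_collisionIntegral_of_dense hf.exponent_nonneg hf.cutoff hc_b.le hf.low_le
      (hf.solution.isOccupation_population i ht.1) (hf.solution.isOccupation_population _ ht.1)
      (hf.integrable_collisionDensity_population i ht.1 v) hr hc.le hE_meas hE_dense
      ((persists i).ae_le hf ht) ((persists !i).ae_le hf ht) (mem_ball_iff_norm.mp hv)

lemma IsCutoffSolution.le_collisionIntegral_of_hasLowerBound (hf : IsCutoffSolution γ b c_b f₀ f)
    (hρ : 0 < ρ) (hc : 0 ≤ c) (hd : 0 ≤ d) {n : ℕ} {I : Set ℝ}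
    (hlow : HasLowerBound γ b f i (Metric.ball v₀ (expandingRadius ρ n)) I c) {t : ℝ} (ht : t ∈ I)
    (ht₀ : 0 ≤ t) {W : Set R3} (hW : MeasurableSet W) (hW_sub : W ⊆ Metric.ball v₀ (ρ / 64))
    (hW_low : ∀ᵐ w, w ∈ W → d ≤ population f (!i) t w) (hv : expandingRadius ρ n ≤ ‖v - v₀‖)
    (hv' : ‖v - v₀‖ < expandingRadius ρ (n + 1)) :
    (ρ / 2) ^ γ * c_b * (π / 16 * volume.real W) * (3 / 4) ^ n * (c ^ 2 * d)
      ≤ collisionIntegral γ b (population f i t) (population f (!i) t) v := by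
  have hc_b := hf.low_pos
  have hγ := hf.exponent_nonneg
  have ρ_le := le_expandingRadius hρ n
  have loss_le_one : (3 / 4 : ℝ) ^ n / 8 ≤ 1 := by
    linarith [pow_le_one₀ (n := n) (by norm_num : (0 : ℝ) ≤ 3 / 4) (by norm_num)]
  calc (ρ / 2) ^ γ * c_b * (π / 16 * volume.real W) * (3 / 4) ^ n * (c ^ 2 * d)
      = (ρ / 2) ^ γ * c_b * (c ^ 2 * d) * (π / 2 * ((3 / 4) ^ n / 8) * volume.real W) := by ring
    _ ≤ (expandingRadius ρ n / 2) ^ γ * c_b * (c ^ 2 * d)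
          * (π / 2 * ((3 / 4) ^ n / 8) * volume.real W) := by gcongr
    _ ≤ collisionIntegral γ b (population f i t) (population f (!i) t) v :=
        le_collisionIntegral_outside_ball hγ hf.cutoff hc_b.le hf.low_le
          (hf.solution.isOccupation_population i ht₀) (hf.solution.isOccupation_population _ ht₀)
          (hf.integrable_collisionDensity_population i ht₀ v) (hρ.trans_le ρ_le) (by positivity)
          loss_le_one hc hd (hlow.ae_le hf ht) hW
          (hW_sub.trans (Metric.ball_subset_ball (div_le_mul_expandingRadius hρ n))) hW_low hv
          (hv'.trans_le (expandingRadius_succ_le hρ.le n))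

lemma IsCutoffSolution.hasLowerBound_expandingRadius_succ (hf : IsCutoffSolution γ b c_b f₀ f)
    {e n : ℕ} (he : 1 ≤ e) (hs : 0 ≤ s) (hτ : 0 ≤ τ) (hκ : 0 ≤ κ) (hc : 0 ≤ c) (hc₁ : c ≤ 1)
    (hA : ∀ v, ‖v - v₀‖ ≤ expandingRadius ρ (n + 1) →
      frequencyBound b (f 0) v * (1 / 2) ^ (n + 1) ≤ A)
    (hlow : HasLowerBound γ b f i (Metric.ball v₀ (expandingRadius ρ n)) (Icc s T) c)
    (hgain : ∀ v, expandingRadius ρ n ≤ ‖v - v₀‖ → ‖v - v₀‖ < expandingRadius ρ (n + 1) →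
      ∀ t ∈ Icc s T, κ * (3 / 4) ^ n * c ^ e
        ≤ collisionIntegral γ b (population f i t) (population f (!i) t) v) :
    HasLowerBound γ b f i (Metric.ball v₀ (expandingRadius ρ (n + 1)))
      (Icc (s + τ * (1 / 2) ^ (n + 1)) T)
      (min 1 (exp (-(2 * (A * τ))) * (κ * τ / 2)) * (3 / 8) ^ n * c ^ e) := by
  set κ' : ℝ := exp (-(2 * (A * τ))) * (κ * τ / 2)
  set U : Set R3 := {v | expandingRadius ρ n ≤ ‖v - v₀‖ ∧ ‖v - v₀‖ < expandingRadius ρ (n + 1)}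
  have freq_mul_le : ∀ v ∈ U, frequencyBound b (f 0) v * (τ * (1 / 2) ^ (n + 1)) ≤ A * τ := by
    intro v hv
    rw [mul_left_comm, mul_comm]
    exact mul_le_mul_of_nonneg_right (hA v hv.2.le) hτ
  have hΔ : 0 ≤ τ * (1 / 2) ^ (n + 1) := by positivity
  have outside := hf.hasLowerBound_of_gain freq_mul_le hs hΔ (by positivity)
    fun v hv => hgain v hv.1 hv.2
  have le_inside : min 1 κ' * (3 / 8) ^ n * c ^ e ≤ c :=
    (mul_le_of_le_one_left (by positivity) (mul_le_one₀ (min_le_left 1 κ') (by positivity)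
      (pow_le_one₀ (by norm_num) (by norm_num)))).trans (pow_le_of_le_one hc hc₁ (by omega))
  have le_outside : min 1 κ' * (3 / 8) ^ n * c ^ e
      ≤ exp (-(2 * (A * τ))) * (κ * (3 / 4) ^ n * c ^ e * (τ * (1 / 2) ^ (n + 1))) := by
    calc min 1 κ' * (3 / 8) ^ n * c ^ e ≤ κ' * (3 / 8) ^ n * c ^ e := by
          gcongr
          exact min_le_right 1 κ'
      _ = exp (-(2 * (A * τ))) * (κ * (3 / 4) ^ n * c ^ e * (τ * (1 / 2) ^ (n + 1))) := by
          rw [show (3 / 8 : ℝ) = 3 / 4 * (1 / 2) by norm_num, mul_pow]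
          ring
  refine ((hlow.mono subset_rfl (Icc_subset_Icc_left (le_add_of_nonneg_right hΔ)) le_inside).union
    (outside.mono subset_rfl subset_rfl le_outside)).mono (fun v hv => ?_) subset_rfl le_rfl
  exact (lt_or_ge ‖v - v₀‖ (expandingRadius ρ n)).imp mem_ball_iff_norm.mpr
    fun hv' => ⟨hv', mem_ball_iff_norm.mp hv⟩

lemma IsCutoffSolution.exists_hasLowerBound_pow_pow (hf : IsCutoffSolution γ b c_b f₀ f)
    {J : Set Bool} {e : ℕ} (he : 2 ≤ e) (hρ : 0 < ρ) (hτ₀ : 0 ≤ τ₀) (hτ : 0 < τ) (hκ : 0 < κ)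
    (hc₀ : 0 < c₀)
    (hinit : ∀ i ∈ J, HasLowerBound γ b f i (Metric.ball v₀ (2 * ρ)) (Icc τ₀ T) c₀)
    (hgain : ∀ n s c, 0 ≤ s → 0 < c →
      (∀ i ∈ J, HasLowerBound γ b f i (Metric.ball v₀ (expandingRadius ρ n)) (Icc s T) c) →
      ∀ i ∈ J, ∀ v, expandingRadius ρ n ≤ ‖v - v₀‖ → ‖v - v₀‖ < expandingRadius ρ (n + 1) →
        ∀ t ∈ Icc s T, κ * (3 / 4) ^ n * c ^ e
          ≤ collisionIntegral γ b (population f i t) (population f (!i) t) v) :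
    ∃ x, 0 < x ∧ x ≤ 1 ∧ ∀ i ∈ J, ∀ n,
      HasLowerBound γ b f i (Metric.ball v₀ (√2 ^ n * ρ)) (Icc (τ₀ + τ) T) (x ^ e ^ n) := by
  set A : ℝ := 64 * Cb b * (1 + (2 * ‖v₀‖ ^ 2 + 8 * ρ ^ 2)) * wnorm 2 (f 0)
  set κ' : ℝ := exp (-(2 * (A * τ))) * (κ * τ / 2)
  set S : ℕ → ℝ := fun n => τ₀ + τ * (1 - (1 / 2) ^ n)
  have half_pow_le (n : ℕ) : (1 / 2 : ℝ) ^ n ≤ 1 := pow_le_one₀ (by norm_num) (by norm_num)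
  have S_nonneg (n : ℕ) : 0 ≤ S n :=
    add_nonneg hτ₀ (mul_nonneg hτ.le (sub_nonneg.mpr (half_pow_le n)))
  have S_le (n : ℕ) : S n ≤ τ₀ + τ := by
    refine add_le_add_right (mul_le_of_le_one_right hτ.le (sub_le_self 1 ?_)) τ₀
    positivity
  have S_succ (n : ℕ) : S (n + 1) = S n + τ * (1 / 2) ^ (n + 1) := by ring
  have step (n : ℕ) (c : ℝ) (hc : 0 < c) (h : c ≤ 1 ∧ ∀ i ∈ J, HasLowerBound γ b f i
        (Metric.ball v₀ (expandingRadius ρ n)) (Icc (S n) T) c) (i : Bool) (hi : i ∈ J) :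
      HasLowerBound γ b f i (Metric.ball v₀ (expandingRadius ρ (n + 1))) (Icc (S (n + 1)) T)
        (min 1 κ' * (3 / 8) ^ n * c ^ e) := by
    rw [S_succ]
    exact hf.hasLowerBound_expandingRadius_succ (by omega) (S_nonneg n) hτ.le hκ.le hc.le h.1
      (fun v hv => frequencyBound_mul_le hf.cutoff (f 0) hv) (h.2 i hi)
      (hgain n _ c (S_nonneg n) hc h.2 i hi)
  obtain ⟨x, hx₀, hx₁, hx⟩ := exists_forall_pow_pow (P := fun n c => c ≤ 1 ∧ ∀ i ∈ J,
      HasLowerBound γ b f i (Metric.ball v₀ (expandingRadius ρ n)) (Icc (S n) T) c)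
    he (lt_min one_pos hc₀) (lt_min one_pos (by positivity : 0 < κ')) (min_le_left 1 κ')
    (by norm_num : (0 : ℝ) < 3 / 8) (by norm_num)
    (fun n c d _ hdc h => ⟨hdc.trans h.1, fun i hi => (h.2 i hi).mono subset_rfl subset_rfl hdc⟩)
    ⟨min_le_left 1 c₀, fun i hi => by
      simpa [S, expandingRadius_zero] using (hinit i hi).mono subset_rfl subset_rfl
        (min_le_right 1 c₀)⟩
    fun n c hc h => ⟨mul_le_one₀ (mul_le_one₀ (min_le_left 1 κ') (by positivity)
      (pow_le_one₀ (by norm_num) (by norm_num))) (by positivity) (pow_le_one₀ hc.le h.1),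
      step n c hc h⟩
  exact ⟨x, hx₀, hx₁, fun i hi n => ((hx n).2 i hi).mono
    (Metric.ball_subset_ball (sqrt_two_pow_mul_lt_expandingRadius hρ n).le)
    (Icc_subset_Icc_left (S_le n)) le_rfl⟩

end Spreading

section GaussianBounds

variable {γ c_b c ρ r τ₀ τ T : ℝ} {b : ℝ → ℝ} {f₀ : R3 → ℝ} {f : ℝ → R3 → ℝ} {v₀ : R3}

lemma IsCutoffSolution.exists_hasLowerBound_pow_three (hf : IsCutoffSolution γ b c_b f₀ f)
    (hρ : 0 < ρ) (hτ₀ : 0 ≤ τ₀) (hτ : 0 < τ) (hc : 0 < c)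
    (hinit : ∀ i, HasLowerBound γ b f i (Metric.ball v₀ (2 * ρ)) (Icc τ₀ T) c) :
    ∃ x, 0 < x ∧ x ≤ 1 ∧ ∀ i, ∀ n,
      HasLowerBound γ b f i (Metric.ball v₀ (√2 ^ n * ρ)) (Icc (τ₀ + τ) T) (x ^ 3 ^ n) := by
  have vol_pos : 0 < volume.real (Metric.ball v₀ (ρ / 64)) :=
    ENNReal.toReal_pos (Metric.measure_ball_pos _ v₀ (by positivity)).ne' measure_ball_lt_top.ne
  have hc_b := hf.low_pos
  obtain ⟨x, hx₀, hx₁, hx⟩ := hf.exists_hasLowerBound_pow_pow (J := univ) (e := 3)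
    (κ := (ρ / 2) ^ γ * c_b * (π / 16 * volume.real (Metric.ball v₀ (ρ / 64)))) (by norm_num) hρ
    hτ₀ hτ (by positivity) hc (fun i _ => hinit i) fun n s d hs hd hlow i _ v hv hv' t ht => by
      rw [pow_succ d 2]
      refine hf.le_collisionIntegral_of_hasLowerBound hρ hd.le hd.le (hlow i trivial) ht
        (hs.trans ht.1) measurableSet_ball subset_rfl ?_ hv hv'
      refine ((hlow (!i) trivial).mono (Metric.ball_subset_ball ?_) subset_rfl le_rfl).ae_le hf ht
      linarith [le_expandingRadius hρ n]
  exact ⟨x, hx₀, hx₁, fun i => hx i trivial⟩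

lemma IsCutoffSolution.integral_le_wnorm_initial (hf : IsCutoffSolution γ b c_b f₀ f) {t : ℝ}
    (ht : 0 ≤ t) : ∫ v, f t v ≤ wnorm 2 (f 0) := by
  rw [hf.solution.wnorm_eq le_rfl, hf.solution.mass t ht, ← hf.solution.energy t ht]
  exact le_add_of_nonneg_right (integral_nonneg fun v =>
    mul_nonneg (hf.solution.nonneg t ht v) (sq_nonneg _))

lemma IsCutoffSolution.half_measureReal_ball_le (hf : IsCutoffSolution γ b c_b f₀ f)
    (hr : 4 * wnorm 2 (f 0) ≤ volume.real (Metric.ball v₀ r)) {t : ℝ} (ht : 0 ≤ t) :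
    volume.real (Metric.ball v₀ r) / 2
      ≤ volume.real (Metric.ball v₀ r ∩ {w | f t w ≤ 1 / 2}) := by
  have hmeas : MeasurableSet {w | f t w ≤ 1 / 2} :=
    measurableSet_le (hf.solution.measurable t) measurable_const
  have markov : 1 / 2 * volume.real {w | 1 / 2 ≤ f t w} ≤ wnorm 2 (f 0) :=
    (mul_meas_ge_le_integral_of_nonneg (ae_of_all _ (hf.solution.nonneg t ht))
      (hf.solution.integrable ht) _).trans (hf.integral_le_wnorm_initial ht)
  have outside : volume.real (Metric.ball v₀ r \ {w | f t w ≤ 1 / 2})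
      ≤ volume.real {w | 1 / 2 ≤ f t w} :=
    measureReal_mono (fun w hw => show 1 / 2 ≤ f t w from le_of_not_ge hw.2)
      ((hf.solution.integrable ht).measure_ge_lt_top (by norm_num)).ne
  linarith [measureReal_inter_add_sdiff (μ := volume) (s := Metric.ball v₀ r) hmeas
    measure_ball_lt_top.ne]

-- Once the ball is so large that `1 - f ≥ 1 / 2` on half of it, one of the three populations in the
-- gain is bounded below for free.
lemma IsCutoffSolution.exists_hasLowerBound_pow_two (hf : IsCutoffSolution γ b c_b f₀ f)
    (hρ : 0 < ρ) (hτ₀ : 0 ≤ τ₀) (hτ : 0 < τ) (hc : 0 < c)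
    (hvol : 4 * wnorm 2 (f 0) ≤ volume.real (Metric.ball v₀ (ρ / 64)))
    (hinit : HasLowerBound γ b f true (Metric.ball v₀ (2 * ρ)) (Icc τ₀ T) c) :
    ∃ x, 0 < x ∧ x ≤ 1 ∧ ∀ n,
      HasLowerBound γ b f true (Metric.ball v₀ (√2 ^ n * ρ)) (Icc (τ₀ + τ) T) (x ^ 2 ^ n) := by
  set V : ℝ := volume.real (Metric.ball v₀ (ρ / 64))
  have hV : 0 < V :=
    ENNReal.toReal_pos (Metric.measure_ball_pos _ v₀ (by positivity)).ne' measure_ball_lt_top.ne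
  have hc_b := hf.low_pos
  obtain ⟨x, hx₀, hx₁, hx⟩ := hf.exists_hasLowerBound_pow_pow (J := {true}) (e := 2)
    (κ := (ρ / 2) ^ γ * c_b * (π / 16 * (V / 2)) * (1 / 2)) le_rfl hρ hτ₀ hτ (by positivity) hc
    (by rintro _ rfl; exact hinit) (by
      rintro n s d hs hd hlow _ rfl v hv hv' t ht
      have half_le := hf.half_measureReal_ball_le hvol (hs.trans ht.1)
      have hmeas : MeasurableSet {w | f t w ≤ 1 / 2} :=
        measurableSet_le (hf.solution.measurable t) measurable_const
      calc (ρ / 2) ^ γ * c_b * (π / 16 * (V / 2)) * (1 / 2) * (3 / 4) ^ n * d ^ 2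
          = (ρ / 2) ^ γ * c_b * (π / 16 * (V / 2)) * (3 / 4) ^ n * (d ^ 2 * (1 / 2)) := by ring
        _ ≤ (ρ / 2) ^ γ * c_b
              * (π / 16 * volume.real (Metric.ball v₀ (ρ / 64) ∩ {w | f t w ≤ 1 / 2}))
              * (3 / 4) ^ n * (d ^ 2 * (1 / 2)) := by gcongr
        _ ≤ collisionIntegral γ b (population f true t) (population f (!true) t) v := by
            refine hf.le_collisionIntegral_of_hasLowerBound hρ hd.le one_half_pos.le
              (hlow true rfl) ht (hs.trans ht.1) (measurableSet_ball.inter hmeas)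
              inter_subset_left (ae_of_all _ fun w hw => ?_) hv hv'
            change 1 / 2 ≤ 1 - f t w
            linarith [hw.2.out])
  exact ⟨x, hx₀, hx₁, hx true rfl⟩

lemma le_measureReal_ball_one_add (v₀ : R3) {M : ℝ} (hM : 0 ≤ M) :
    4 * M ≤ volume.real (Metric.ball v₀ (1 + M)) := by
  have hv : volume.real (Metric.ball v₀ (1 + M)) = (1 + M) ^ 3 * (π * 4 / 3) := by
    rw [measureReal_def, EuclideanSpace.volume_ball_fin_three, ENNReal.toReal_mul,
      ENNReal.toReal_pow, ENNReal.toReal_ofReal (by positivity),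
      ENNReal.toReal_ofReal (by positivity)]
  rw [hv]
  have pi_gt := pi_gt_three
  calc 4 * M ≤ (1 + M) ^ 3 * (3 * 4 / 3) := by nlinarith [pow_nonneg hM 3, pow_nonneg hM 2]
    _ ≤ (1 + M) ^ 3 * (π * 4 / 3) := by gcongr

lemma exp_bound_mono {m m' M M' y : ℝ} (hm : m ≤ m') (hm' : 0 ≤ m') (hM : M' ≤ M) (hy : 0 ≤ y) :
    m * exp (-M * y) ≤ m' * exp (-M' * y) := by
  gcongr

lemma IsCutoffSolution.exists_exp_bounds (hf : IsCutoffSolution γ b c_b f₀ f)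
    (hS : 0 < entropy f₀) (hτ : 0 < τ) (T : ℝ) :
    ∃ m > 0, ∃ M, ∀ v, HasDuhamelBound γ b f v → ∀ t ∈ Icc (3 * τ) T,
      m * exp (-M * ‖v‖ ^ 2) ≤ f t v ∧
        m * exp (-M * ‖v‖ ^ (2 * Real.log 3 / Real.log 2)) ≤ 1 - f t v := by
  obtain ⟨v₀, r, hr, hball⟩ := hf.exists_hasLowerBound_ball hS
  obtain ⟨c, hc, hinit⟩ := hball τ T hτ
  obtain ⟨x, hx₀, hx₁, hx⟩ := hf.exists_hasLowerBound_pow_three (ρ := r / 2) (by positivity) hτ.le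
    hτ hc (by simpa only [mul_div_cancel₀ r two_ne_zero] using hinit)
  have hM := wnorm_nonneg 2 (f 0)
  set ρ : ℝ := 64 * (1 + wnorm 2 (f 0)) with hρ
  have hvol : 4 * wnorm 2 (f 0) ≤ volume.real (Metric.ball v₀ (ρ / 64)) := by
    rw [hρ, mul_div_cancel_left₀ _ (by norm_num)]
    exact le_measureReal_ball_one_add v₀ hM
  obtain ⟨k, hk⟩ : ∃ k : ℕ, 2 * ρ < √2 ^ k * (r / 2) := by
    simpa only [div_lt_iff₀ (half_pos hr)] using
      pow_unbounded_of_one_lt (2 * ρ / (r / 2)) (by linarith [four_thirds_le_sqrt_two])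
  obtain ⟨y, hy₀, hy₁, hy⟩ := hf.exists_hasLowerBound_pow_two (by positivity)
    (by positivity) hτ (pow_pos hx₀ (3 ^ k)) hvol
    ((hx true k).mono (Metric.ball_subset_ball hk.le) subset_rfl le_rfl)
  obtain ⟨m₂, M₂, hm₂, -, hlow₂⟩ := exists_mul_exp_neg_rpow_le_pow_pow (e := 2) (by norm_num)
    (by positivity : 0 < ρ) hy₀ hy₁ v₀
  obtain ⟨m₃, M₃, hm₃, -, hlow₃⟩ := exists_mul_exp_neg_rpow_le_pow_pow (e := 3) (by norm_num)
    (half_pos hr) hx₀ hx₁ v₀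
  refine ⟨min m₂ m₃, lt_min hm₂ hm₃, max M₂ M₃, fun v hduh t ht => ⟨?_, ?_⟩⟩
  · obtain ⟨n, hn, hexp⟩ := hlow₂ v
    rw [Nat.cast_ofNat, mul_div_cancel_right₀ _ (Real.log_pos one_lt_two).ne', rpow_two] at hexp
    exact ((exp_bound_mono (min_le_left _ _) hm₂.le (le_max_left _ _) (by positivity)).trans
      hexp).trans (hy n v (mem_ball_iff_norm.mpr hn) hduh t ⟨by linarith [ht.1], ht.2⟩)
  · obtain ⟨n, hn, hexp⟩ := hlow₃ v
    rw [Nat.cast_ofNat] at hexp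
    exact ((exp_bound_mono (min_le_right _ _) hm₃.le (le_max_right _ _) (by positivity)).trans
      hexp).trans (hx false n v (mem_ball_iff_norm.mpr hn) hduh t ⟨by linarith [ht.1], ht.2⟩)

end GaussianBounds

lemma exists_locally_uniform_constants {P : ℝ → ℝ → ℝ → Prop}
    (h : ∀ T, 1 ≤ T → ∃ m > 0, ∃ M, ∀ t ∈ Icc T⁻¹ T, P t m M) :
    ∃ C₁ C₂ : ℝ → ℝ, (∀ t, 0 < t → 0 < C₁ t) ∧ (∀ t, 0 < t → P t (C₁ t) (C₂ t)) ∧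
      (∀ T, 1 ≤ T → ∃ m > 0, ∀ t ∈ Icc T⁻¹ T, m ≤ C₁ t) ∧
      (∀ T, 1 ≤ T → ∃ M, ∀ t ∈ Icc T⁻¹ T, C₂ t ≤ M) := by
  choose m hm M hP using fun n : ℕ => h (n + 1) (le_add_of_nonneg_left n.cast_nonneg)
  set N : ℝ → ℕ := fun t => ⌈max t t⁻¹⌉₊
  have mem_window {t : ℝ} (ht : 0 < t) : t ∈ Icc ((N t : ℝ) + 1)⁻¹ (N t + 1) := by
    have max_le : max t t⁻¹ ≤ N t + 1 := (Nat.le_ceil _).trans (le_add_of_nonneg_right zero_le_one)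
    exact ⟨inv_le_of_inv_le₀ ht ((le_max_right _ _).trans max_le), (le_max_left _ _).trans max_le⟩
  have N_le {t T : ℝ} (hT : 1 ≤ T) (ht : t ∈ Icc T⁻¹ T) : N t ∈ Finset.Iic ⌈T⌉₊ :=
    Finset.mem_Iic.mpr (Nat.ceil_mono (max_le ht.2 (inv_le_of_inv_le₀ (by positivity) ht.1)))
  refine ⟨fun t => m (N t), fun t => M (N t), fun t _ => hm _, fun t ht => hP _ t (mem_window ht),
    fun T hT => ?_, fun T hT => ?_⟩
  · obtain ⟨n, -, hn⟩ := Finset.exists_min_image (Finset.Iic ⌈T⌉₊) m Finset.nonempty_Iic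
    exact ⟨m n, hm n, fun t ht => hn _ (N_le hT ht)⟩
  · obtain ⟨n, -, hn⟩ := Finset.exists_max_image (Finset.Iic ⌈T⌉₊) M Finset.nonempty_Iic
    exact ⟨M n, fun t ht => hn _ (N_le hT ht)⟩

/-- Gaussian lower bound (and exponential upper bound) for solutions of the
Boltzmann–Fermi–Dirac equation with `S(f₀) > 0`. -/
theorem gaussian_lower_bound_BFD
    (γ : ℝ) (hγ₀ : 0 ≤ γ) (hγ₂ : γ ≤ 2) (b : ℝ → ℝ) (hb : GradCutoff b)
    (c_b : ℝ) (hc_b : 0 < c_b)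
    (hH2 : ∀ θ ∈ Icc (π/4) (3*π/4), c_b ≤ b (Real.cos θ))
    (f₀ : R3 → ℝ) (hf₀meas : Measurable f₀)
    (hf₀bd : ∀ᵐ v : R3 ∂volume, 0 ≤ f₀ v ∧ f₀ v ≤ 1) (hf₀L12 : MemL1s 2 f₀)
    (f : ℝ → R3 → ℝ) (hf : IsFDSolution γ b f₀ f)
    (hS : 0 < entropy f₀) :
    ∃ C₁ C₂ : ℝ → ℝ,
      (∀ t : ℝ, 0 < t → 0 < C₁ t) ∧
      (∀ t : ℝ, 0 < t → ∀ᵐ v : R3 ∂volume,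
        C₁ t * Real.exp (-(C₂ t) * ‖v‖ ^ 2) ≤ f t v ∧
        f t v ≤ 1 - C₁ t * Real.exp (-(C₂ t) * ‖v‖ ^ (2 * Real.log 3 / Real.log 2))) ∧
      (∀ T : ℝ, 1 ≤ T → ∃ m > (0:ℝ), ∀ t ∈ Icc T⁻¹ T, m ≤ C₁ t) ∧
      (∀ T : ℝ, 1 ≤ T → ∃ M : ℝ, ∀ t ∈ Icc T⁻¹ T, C₂ t ≤ M) := by
  have hcut : IsCutoffSolution γ b c_b f₀ f :=
    ⟨hγ₀, hγ₂, hb, hc_b, fun _ hx => le_kernel_of_abs_le_half hH2 hx, hf⟩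
  refine exists_locally_uniform_constants (P := fun t m M => ∀ᵐ v, m * exp (-M * ‖v‖ ^ 2) ≤ f t v ∧
    f t v ≤ 1 - m * exp (-M * ‖v‖ ^ (2 * Real.log 3 / Real.log 2))) fun T hT => ?_
  obtain ⟨m, hm, M, hbounds⟩ :=
    hcut.exists_exp_bounds hS (τ := T⁻¹ / 3) (by positivity) T
  refine ⟨m, hm, M, fun t ht => ?_⟩
  filter_upwards [hf.ae_hasDuhamelBound hγ₀ hγ₂ hb] with v hv
  obtain ⟨lower, upper⟩ := hbounds v hv t ⟨by linarith [ht.1], ht.2⟩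
  exact ⟨lower, le_sub_comm.mp upper⟩
end
end

section
/- Let the unit cube [0,1]³ ⊂ ℝ³ be partitioned into the 13³ axis-parallel closed subcubes of side length 1/13 whose centers are the points ((2i+1)/26, (2j+1)/26, (2k+1)/26) for 0 ≤ i,j,k ≤ 12. Then for every collection E of at least 12³ + 100 of these subcubes, there exist two subcubes in E whose centers are at Euclidean distance at least 10/13. -/
noncomputable section

open MeasureTheory Real Set
open scoped RealInnerProductSpace

/-- The center of the subcube of the unit cube indexed by `(i, j, k) ∈ {0,…,12}³`. -/
def cubeCenter (p : Fin 13 × Fin 13 × Fin 13) : R3 :=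
  (EuclideanSpace.equiv (Fin 3) ℝ).symm
    ![(2 * ((p.1 : ℕ) : ℝ) + 1) / 26, (2 * ((p.2.1 : ℕ) : ℝ) + 1) / 26,
      (2 * ((p.2.2 : ℕ) : ℝ) + 1) / 26]

/-! A slab `{p | p.1 = i}` holds `13²` subcubes, so more than `m * 13²` subcubes meet more than `m`
of the slabs. The two outermost slabs that are met are then at least `m` apart, and the first
coordinates of the centers already differ by `m / 13`. -/

lemma card_le_card_image_fst_mul_card {α β : Type*} [DecidableEq α] [Fintype β]
    (s : Finset (α × β)) : s.card ≤ (s.image Prod.fst).card * Fintype.card β := by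
  classical
  calc s.card ≤ (s.image Prod.fst ×ˢ s.image Prod.snd).card :=
        Finset.card_le_card Finset.subset_product
    _ = (s.image Prod.fst).card * (s.image Prod.snd).card := Finset.card_product _ _
    _ ≤ (s.image Prod.fst).card * Fintype.card β := by gcongr; exact Finset.card_le_univ _

lemma exists_card_le_card_Icc {α : Type*} [LinearOrder α] [LocallyFiniteOrder α]
    {s : Finset α} (hs : s.Nonempty) : ∃ a ∈ s, ∃ b ∈ s, s.card ≤ (Finset.Icc a b).card :=
  ⟨s.min' hs, s.min'_mem hs, s.max' hs, s.max'_mem hs, Finset.card_le_card fun x hx =>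
    Finset.mem_Icc.2 ⟨s.min'_le x hx, s.le_max' x hx⟩⟩

lemma fst_sub_fst_div_le_dist_cubeCenter (p q : Fin 13 × Fin 13 × Fin 13) :
    ((q.1 : ℝ) - p.1) / 13 ≤ dist (cubeCenter p) (cubeCenter q) :=
  calc ((q.1 : ℝ) - p.1) / 13 = cubeCenter q 0 - cubeCenter p 0 := by
        simp only [cubeCenter, EuclideanSpace.equiv, PiLp.coe_symm_continuousLinearEquiv,
          Matrix.cons_val_zero]
        ring
    _ ≤ ‖(cubeCenter q - cubeCenter p) 0‖ := Real.le_norm_self _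
    _ ≤ ‖cubeCenter q - cubeCenter p‖ := PiLp.norm_apply_le _ 0
    _ = dist (cubeCenter p) (cubeCenter q) := by rw [dist_comm, dist_eq_norm]

theorem subcube_separation_general {m : ℕ} (E : Finset (Fin 13 × Fin 13 × Fin 13))
    (hE : m * 13 ^ 2 < E.card) :
    ∃ p ∈ E, ∃ q ∈ E, (m : ℝ) / 13 ≤ dist (cubeCenter p) (cubeCenter q) := by
  have slabs : m < (E.image Prod.fst).card := by
    have := card_le_card_image_fst_mul_card E
    simp only [Fintype.card_prod, Fintype.card_fin] at this
    lia
  obtain ⟨a, ha, b, hb, hab⟩ := exists_card_le_card_Icc (Finset.card_pos.1 slabs.pos)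
  obtain ⟨p, hp, rfl⟩ := Finset.mem_image.1 ha
  obtain ⟨q, hq, rfl⟩ := Finset.mem_image.1 hb
  have apart : (p.1 : ℕ) + m ≤ q.1 := by
    rw [Fin.card_Icc] at hab
    lia
  have apart_real : (m : ℝ) ≤ q.1 - p.1 := by
    rw [le_sub_iff_add_le']
    exact_mod_cast apart
  refine ⟨p, hp, q, hq, ?_⟩
  calc (m : ℝ) / 13 ≤ ((q.1 : ℝ) - p.1) / 13 := by gcongr
    _ ≤ dist (cubeCenter p) (cubeCenter q) := fst_sub_fst_div_le_dist_cubeCenter p q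

/-- Among any `12³ + 100` of the `13³` subcubes of the unit cube, two have
centers at distance at least `10/13`. -/
theorem subcube_separation
    (E : Finset (Fin 13 × Fin 13 × Fin 13)) (hE : 12 ^ 3 + 100 ≤ E.card) :
    ∃ p ∈ E, ∃ q ∈ E, (10 : ℝ) / 13 ≤ dist (cubeCenter p) (cubeCenter q) := by
  exact_mod_cast subcube_separation_general (m := 10) E (by lia)
end
end

section
/- Let a ∈ ℝ³ with a ≠ 0, and let r ≥ 0 satisfy r ≤ |a|/4. Then there exists a Borel set C_{a,r} ⊂ ℝ³ such that: (i) every nonzero x ∈ ℝ³ for which the plane {y ∈ ℝ³ : y·x = 0} intersects the closed ball {y ∈ ℝ³ : |a+y| ≤ r} belongs to C_{a,r}; and (ii) for every nonnegative measurable radial function f on ℝ³ (i.e., f(x) depends only on |x|) and every R > 0, ∫_{{|x| ≤ R} ∩ C_{a,r}} f(x) dx ≤ (5π/2)·(r/|a|)·∫_{{|x| ≤ R}} f(x) dx. -/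
noncomputable section

open MeasureTheory Real Set
open scoped RealInnerProductSpace

/-!
If `y ⟂ x` and `‖a + y‖ ≤ r`, then `|⟪a, x⟫| = |⟪a + y, x⟫| ≤ r ‖x‖` by Cauchy–Schwarz, so all
such `x` lie in the cone `|⟪a, x⟫| ≤ r ‖x‖`. A cone occupies the same proportion of every centred
ball, hence of every radial distribution of mass, and for this cone the proportion is estimated in
the unit ball, where the cone is contained in a box of width `2 r / ‖a‖` along `a` and of width `2`
along the other axes of an orthonormal frame.
-/

section Cone

open scoped Pointwise

variable {E : Type*} [NormedAddCommGroup E] [NormedSpace ℝ E]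
  [MeasurableSpace E] [BorelSpace E]

lemma exists_measurable_eq_comp_norm [Nontrivial E] {β : Type*} [MeasurableSpace β] {f : E → β}
    (hf : Measurable f) (hrad : ∀ x y, ‖x‖ = ‖y‖ → f x = f y) :
    ∃ g : ℝ → β, Measurable g ∧ f = fun x => g ‖x‖ := by
  obtain ⟨e, he⟩ := exists_norm_eq E zero_le_one
  exact ⟨fun ρ => f (ρ • e), hf.comp (by fun_prop),
    funext fun x => hrad _ _ (by rw [norm_smul, norm_norm, he, mul_one])⟩

variable [FiniteDimensional ℝ E] {C : Set E}

-- Both sides are determined by the masses of the half-lines `(-∞, t)`, that is of the balls of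
-- radius `t`, and `C ∩ ball 0 t` is the dilation by `t` of `C ∩ ball 0 1`.
lemma map_norm_restrict_cone (μ : Measure E) [μ.IsAddHaarMeasure]
    (hC : ∀ t : ℝ, 0 < t → t • C = C) :
    (μ.restrict C).map norm =
      (μ (Metric.ball 0 1 ∩ C) / μ (Metric.ball 0 1)) • μ.map norm := by
  have norm_preimage_Iio (t : ℝ) : (norm : E → ℝ) ⁻¹' Iio t = Metric.ball 0 t := by
    ext x
    simp
  have map_Iio (ν : Measure E) (t : ℝ) : ν.map norm (Iio t) = ν (Metric.ball 0 t) := by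
    rw [Measure.map_apply measurable_norm measurableSet_Iio, norm_preimage_Iio]
  have unit_ball_ne_zero : μ (Metric.ball 0 1) ≠ 0 := (Metric.measure_ball_pos μ 0 one_pos).ne'
  refine Measure.ext_of_generateFrom_of_iUnion (range Iio) (fun n : ℕ => Iio (n : ℝ))
    (BorelSpace.measurable_eq.trans (borel_eq_generateFrom_Iio ℝ)) isPiSystem_Iio
    (iUnion_eq_univ_iff.2 exists_nat_gt) (fun n => mem_range_self _) (fun n => ?_) ?_
  · rw [map_Iio]
    exact measure_ball_lt_top.ne
  rintro _ ⟨t, rfl⟩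
  rw [Measure.smul_apply, map_Iio, map_Iio, Measure.restrict_apply measurableSet_ball, smul_eq_mul]
  obtain ht | ht := le_or_gt t 0
  · simp [Metric.ball_eq_empty.2 ht]
  have ball_inter : Metric.ball 0 t ∩ C = t • (Metric.ball 0 1 ∩ C) := by
    rw [smul_set_inter₀ ht.ne', smul_unitBall_of_pos ht, hC t ht]
  rw [ball_inter, Measure.addHaar_smul_of_nonneg μ ht.le, Measure.addHaar_ball_of_pos μ 0 ht,
    mul_left_comm, ENNReal.div_mul_cancel unit_ball_ne_zero measure_ball_lt_top.ne]

lemma setIntegral_closedBall_inter_cone [Nontrivial E] (μ : Measure E) [μ.IsAddHaarMeasure]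
    (hC : ∀ t : ℝ, 0 < t → t • C = C) {f : E → ℝ} (hf : Measurable f)
    (hrad : ∀ x y, ‖x‖ = ‖y‖ → f x = f y) (R : ℝ) :
    ∫ x in Metric.closedBall 0 R ∩ C, f x ∂μ =
      μ.real (Metric.ball 0 1 ∩ C) / μ.real (Metric.ball 0 1) *
        ∫ x in Metric.closedBall 0 R, f x ∂μ := by
  obtain ⟨g, hg, rfl⟩ := exists_measurable_eq_comp_norm hf hrad
  have integral_map_norm (ν : Measure E) :
      ∫ x in Metric.closedBall 0 R, g ‖x‖ ∂ν = ∫ ρ in Iic R, g ρ ∂ν.map norm := by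
    rw [setIntegral_map measurableSet_Iic hg.aestronglyMeasurable measurable_norm.aemeasurable]
    congr 2
    ext x
    simp
  rw [← Measure.restrict_restrict measurableSet_closedBall, integral_map_norm, integral_map_norm,
    map_norm_restrict_cone μ hC, Measure.restrict_smul, integral_smul_measure, ENNReal.toReal_div,
    smul_eq_mul, measureReal_def, measureReal_def]

end Cone

section EquatorialCone

open scoped Pointwise

variable {E : Type*} [NormedAddCommGroup E] [InnerProductSpace ℝ E]

/-- The set `C_{a,r}` of the vectors whose angle `θ` with `a` satisfies `‖a‖ |cos θ| ≤ r`: a cone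
around the hyperplane orthogonal to `a`. The condition is cleared of denominators, which puts the
vector `0`, whose angle with `a` is undefined, into the cone. -/
def equatorialCone (a : E) (r : ℝ) : Set E := {x | |⟪a, x⟫| ≤ r * ‖x‖}

lemma isClosed_equatorialCone (a : E) (r : ℝ) : IsClosed (equatorialCone a r) :=
  isClosed_le (by fun_prop) (by fun_prop)

lemma smul_equatorialCone (a : E) (r : ℝ) {t : ℝ} (ht : 0 < t) :
    t • equatorialCone a r = equatorialCone a r := by
  ext x
  rw [mem_smul_set_iff_inv_smul_mem₀ ht.ne']
  simp only [equatorialCone, mem_ofPred_eq, inner_smul_right, norm_smul, abs_mul, Real.norm_eq_abs,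
    mul_left_comm r]
  exact mul_le_mul_iff_right₀ (abs_pos.2 (inv_ne_zero ht.ne'))

lemma mem_equatorialCone_of_inner_eq_zero {a x y : E} {r : ℝ} (hyx : ⟪y, x⟫ = 0)
    (hay : ‖a + y‖ ≤ r) : x ∈ equatorialCone a r :=
  calc |⟪a, x⟫| = |⟪a + y, x⟫| := by rw [inner_add_left, hyx, add_zero]
    _ ≤ ‖a + y‖ * ‖x‖ := abs_real_inner_le_norm _ _
    _ ≤ r * ‖x‖ := by gcongr

variable [FiniteDimensional ℝ E]

lemma exists_orthonormalBasis_apply_eq {e : E} (he : ‖e‖ = 1) :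
    ∃ (u : Finset E) (b : OrthonormalBasis u ℝ E) (i : u), b i = e := by
  have orthonormal_singleton : Orthonormal ℝ ((↑) : ({e} : Set E) → E) :=
    orthonormal_subsingleton_iff.2 (by simpa using he)
  obtain ⟨u, b, hu, hb⟩ := orthonormal_singleton.exists_orthonormalBasis_extension
  exact ⟨u, b, ⟨e, by simpa using hu⟩, by rw [hb]⟩

variable [MeasurableSpace E] [BorelSpace E]

lemma volume_orthonormalBasis_box {ι : Type*} [Fintype ι] (b : OrthonormalBasis ι ℝ E)
    (w : ι → ℝ) :
    volume {x : E | ∀ i, |⟪b i, x⟫| ≤ w i} = ∏ i, ENNReal.ofReal (2 * w i) := by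
  have coordinates_preserve_volume : MeasurePreserving (fun x => WithLp.ofLp (b.repr x)) :=
    (PiLp.volume_preserving_ofLp ι).comp b.measurePreserving_repr
  have box_eq_preimage : {x : E | ∀ i, |⟪b i, x⟫| ≤ w i} =
      (fun x => WithLp.ofLp (b.repr x)) ⁻¹' Icc (-w) w := by
    ext x
    simp only [mem_ofPred_eq, abs_le, mem_preimage, mem_Icc, Pi.le_def, Pi.neg_apply,
      b.repr_apply_apply, forall_and]
  rw [box_eq_preimage, coordinates_preserve_volume.measure_preimage
    measurableSet_Icc.nullMeasurableSet, Real.volume_Icc_pi]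
  simp only [Pi.neg_apply, sub_neg_eq_add, two_mul]

lemma volume_ball_inter_slab_le {e : E} (he : ‖e‖ = 1) (s : ℝ) :
    volume (Metric.ball 0 1 ∩ {x : E | |⟪e, x⟫| ≤ s}) ≤
      2 ^ Module.finrank ℝ E * ENNReal.ofReal s := by
  classical
  obtain ⟨u, b, i, rfl⟩ := exists_orthonormalBasis_apply_eq he
  let w : u → ℝ := Function.update 1 i s
  have subset_box : Metric.ball 0 1 ∩ {x : E | |⟪b i, x⟫| ≤ s} ⊆ {x | ∀ j, |⟪b j, x⟫| ≤ w j} := by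
    rintro x ⟨hx, hxs⟩ j
    obtain rfl | hji := eq_or_ne j i
    · simpa [w] using hxs
    · calc |⟪b j, x⟫| ≤ ‖b j‖ * ‖x‖ := abs_real_inner_le_norm _ _
        _ ≤ 1 := by
            rw [b.norm_eq_one, one_mul]
            exact (mem_ball_zero_iff.1 hx).le
        _ = w j := by simp [w, hji]
  calc volume (Metric.ball 0 1 ∩ {x : E | |⟪b i, x⟫| ≤ s})
      ≤ ∏ j, ENNReal.ofReal (2 * w j) :=
        (measure_mono subset_box).trans_eq (volume_orthonormalBasis_box b w)
    _ = 2 ^ Module.finrank ℝ E * ∏ j, ENNReal.ofReal (w j) := by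
        simp only [ENNReal.ofReal_mul zero_le_two, ENNReal.ofReal_ofNat, Finset.prod_mul_distrib,
          Finset.prod_const, Finset.card_univ, Module.finrank_eq_card_basis b.toBasis]
    _ = 2 ^ Module.finrank ℝ E * ENNReal.ofReal s := by
        rw [Fintype.prod_eq_single i fun j hj => by simp [w, hj]]
        simp only [w, Function.update_self]

lemma volume_real_ball_inter_equatorialCone_le {a : E} (ha : a ≠ 0) {r : ℝ} (hr : 0 ≤ r) :
    volume.real (Metric.ball 0 1 ∩ equatorialCone a r) ≤
      2 ^ Module.finrank ℝ E * (r / ‖a‖) := by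
  have subset_slab : Metric.ball 0 1 ∩ equatorialCone a r ⊆
      Metric.ball 0 1 ∩ {x | |⟪‖a‖⁻¹ • a, x⟫| ≤ r / ‖a‖} := by
    rintro x ⟨hx, hxa⟩
    refine ⟨hx, ?_⟩
    calc |⟪‖a‖⁻¹ • a, x⟫| = |⟪a, x⟫| / ‖a‖ := by
          rw [real_inner_smul_left, abs_mul, abs_inv, abs_norm, inv_mul_eq_div]
      _ ≤ r / ‖a‖ := by
          gcongr
          exact hxa.trans (mul_le_of_le_one_right hr (mem_ball_zero_iff.1 hx).le)
  refine ENNReal.toReal_le_of_le_ofReal (by positivity) ?_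
  rw [ENNReal.ofReal_mul (by positivity), ENNReal.ofReal_pow zero_le_two, ENNReal.ofReal_ofNat]
  exact (measure_mono subset_slab).trans
    (volume_ball_inter_slab_le (norm_smul_inv_norm ha) _)

theorem plane_ball_intersection_cone_general {a : E} (ha : a ≠ 0) {r : ℝ} (hr : 0 ≤ r) :
    ∃ C : Set E, MeasurableSet C ∧
      (∀ x y : E, ⟪y, x⟫ = (0 : ℝ) → ‖a + y‖ ≤ r → x ∈ C) ∧
      (∀ f : E → ℝ, Measurable f → (∀ x : E, 0 ≤ f x) →
        (∀ x y : E, ‖x‖ = ‖y‖ → f x = f y) →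
        ∀ R : ℝ,
          (∫ x in Metric.closedBall (0 : E) R ∩ C, f x) ≤
            2 ^ Module.finrank ℝ E / volume.real (Metric.ball (0 : E) 1) * (r / ‖a‖) *
              ∫ x in Metric.closedBall (0 : E) R, f x) := by
  have : Nontrivial E := ⟨a, 0, ha⟩
  refine ⟨equatorialCone a r, (isClosed_equatorialCone a r).measurableSet,
    fun _ _ => mem_equatorialCone_of_inner_eq_zero,
    fun f hf hf₀ hrad R => ?_⟩
  rw [setIntegral_closedBall_inter_cone volume (fun t => smul_equatorialCone a r) hf hrad R,
    div_mul_eq_mul_div (2 ^ _)]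
  gcongr
  · exact integral_nonneg hf₀
  · exact volume_real_ball_inter_equatorialCone_le ha hr

end EquatorialCone

-- The left-hand side is `8 / (4π / 3) = 6 / π`.
lemma two_pow_finrank_div_volume_ball_le :
    2 ^ Module.finrank ℝ R3 / volume.real (Metric.ball (0 : R3) 1) ≤ 5 * π / 2 := by
  have volume_ball : volume.real (Metric.ball (0 : R3) 1) = π * 4 / 3 := by
    rw [measureReal_def, EuclideanSpace.volume_ball_fin_three, ENNReal.ofReal_one, one_pow, one_mul,
      ENNReal.toReal_ofReal (by positivity)]
  rw [finrank_euclideanSpace_fin, volume_ball, div_le_iff₀ (by positivity)]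
  nlinarith [pi_gt_three]

/-- A conical set capturing the directions `x` whose orthogonal plane
meets the ball of radius `r` around `-a`, with a quantitative measure bound for radial
functions. -/
theorem plane_ball_intersection_cone
    (a : R3) (ha : a ≠ 0) (r : ℝ) (hr₀ : 0 ≤ r) (hr : r ≤ ‖a‖ / 4) :
    ∃ C : Set R3, MeasurableSet C ∧
      (∀ x : R3, x ≠ 0 → (∃ y : R3, ⟪y, x⟫ = (0:ℝ) ∧ ‖a + y‖ ≤ r) → x ∈ C) ∧
      (∀ f : R3 → ℝ, Measurable f → (∀ x : R3, 0 ≤ f x) →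
        (∀ x y : R3, ‖x‖ = ‖y‖ → f x = f y) →
        ∀ R : ℝ, 0 < R →
          (∫ x in Metric.closedBall (0:R3) R ∩ C, f x) ≤
            5 * π / 2 * (r / ‖a‖) * ∫ x in Metric.closedBall (0:R3) R, f x) := by
  obtain ⟨C, hC, hmem, hint⟩ := plane_ball_intersection_cone_general ha hr₀
  exact ⟨C, hC, fun x _ ⟨y, hyx, hay⟩ => hmem x y hyx hay,
    fun f hf hf₀ hrad R _ => (hint f hf hf₀ hrad R).trans <| by
      gcongr ?_ * _ * _
      exacts [integral_nonneg hf₀, two_pow_finrank_div_volume_ball_le]⟩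
end
end
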